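/- For every integer d ≥ 1 there exists a constant C_d > 0, depending only on d, such that for every integer n ≥ 256, every degree-d polynomial threshold function f : {-1,1}^n → {-1,1}, and every integer m with 16 ≤ m ≤ n, one has P_x[s_f(x) ≥ m] ≤ C_d · (log(e·n))^{C_d} / √m, where x is uniform on {-1,1}^n. -/

import Mathlib

open Finset
open scoped Classical

/-- The embedding of `Bool` into `{-1, 1} ⊆ ℝ`. -/
noncomputable def chi (b : Bool) : ℝ := if b then 1 else -1

/-- Flip the `i`-th coordinate of a point of the Boolean cube. -/
def flipAt {n : ℕ} (x : Fin n → Bool) (i : Fin n) : Fin n → Bool :=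
  Function.update x i (!x i)

/-- The sensitivity of `f` at `x`: the number of coordinates whose flip changes `f`. -/
noncomputable def sens {n : ℕ} (f : (Fin n → Bool) → ℝ) (x : Fin n → Bool) : ℕ :=
  (Finset.univ.filter (fun i => f (flipAt x i) ≠ f x)).card

/-- The Boolean surface area `BSA[f] = E_x √(s_f(x))`, `x` uniform on the cube. -/
noncomputable def BSA {n : ℕ} (f : (Fin n → Bool) → ℝ) : ℝ :=
  (∑ x : Fin n → Bool, Real.sqrt (sens f x)) / 2 ^ n

/-- Evaluation of a polynomial at a point of the cube `{-1,1}^n`. -/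
noncomputable def pev {n : ℕ} (p : MvPolynomial (Fin n) ℝ) (x : Fin n → Bool) : ℝ :=
  MvPolynomial.eval (fun i => chi (x i)) p

/-- `f` is a degree-`d` polynomial threshold function: `f = sgn p` for some multilinear
polynomial `p` of total degree at most `d` that is nonvanishing on the cube. -/
def IsPTF (d : ℕ) {n : ℕ} (f : (Fin n → Bool) → ℝ) : Prop :=
  ∃ p : MvPolynomial (Fin n) ℝ,
    (∀ m ∈ p.support, ∀ i, m i ≤ 1) ∧ p.totalDegree ≤ d ∧
    ∀ x, pev p x ≠ 0 ∧ f x = Real.sign (pev p x)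


/-!
If `f = sgn p`, the sensitivity of `f` at `x` is the number of coordinates whose flip changes the
sign of the multilinear polynomial `p`. The tail bound `Φ(m) / √m`, with `Φ` a power of `1 + log m`,
is proved by induction on `m` for all multilinear polynomials of degree `d` in any number of
variables.

Fixing all but a random set of coordinates of density `η` at random values turns the threshold `m`
into `η m / 2`. If the mean of `p` dominates its standard deviation then, by hypercontractivity, the
ratio of the two is typically much larger still for the restricted polynomial; iterating, the tail
bound improves by a factor comparable to the relative variance `Var p / 𝔼[p²]`.

Fixing suitable coordinates, few compared with `m`, makes `p`, with probability bounded below,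
either regular (no influence dominates the variance) or strongly dominated by its mean. In the
regular case take `η ≈ 1 / N²` with `N` a small power of `m`: resampling a uniform sign at rate `η`
has the covariance of rotating a point of the circle by `2π / N`. By a replacement argument the
expected relative variance of the restriction is therefore controlled by the relative increments of
a trigonometric polynomial of degree `d` along the `N`-th roots of unity. These are large only near
its at most `2 d` complex roots, so the average is `O(1 / N)`. This gain compensates for the loss
`1 / √η ≈ N` in the threshold, and the passage from `log m` to `log (m / N²)` absorbs the constants.
-/

namespace BooleanCube
section Expectation

/-- `w` is the weight function of a probability measure on the finite type `κ`. -/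
structure IsProbWeight {κ : Type*} [Fintype κ] (w : κ → ℝ) : Prop where
  nonneg : ∀ k, 0 ≤ w k
  sum_eq_one : ∑ k, w k = 1

lemma IsProbWeight.prod_nonneg {ι κ : Type*} [Fintype ι] [Fintype κ] {w : κ → ℝ}
    (hw : IsProbWeight w) (ω : ι → κ) : 0 ≤ ∏ i, w (ω i) :=
  Finset.prod_nonneg fun _ _ => hw.nonneg _

/-- The expectation of `F` under the product measure `w^ι` on `ι → κ`, written as a finite sum. -/
noncomputable def expect {ι κ : Type*} [Fintype ι] [Fintype κ] [DecidableEq ι]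
    (w : κ → ℝ) (F : (ι → κ) → ℝ) : ℝ :=
  ∑ ω, (∏ i, w (ω i)) * F ω

/-- The indicator of a proposition, as a real number. -/
noncomputable def ind (P : Prop) : ℝ := if P then 1 else 0

lemma ind_of_true {P : Prop} (h : P) : ind P = 1 := if_pos h

lemma ind_of_false {P : Prop} (h : ¬P) : ind P = 0 := if_neg h

lemma ind_nonneg (P : Prop) : 0 ≤ ind P := by
  unfold ind; split_ifs <;> norm_num

lemma ind_le_one (P : Prop) : ind P ≤ 1 := by
  unfold ind; split_ifs <;> norm_num

lemma ind_sq (P : Prop) : ind P ^ 2 = ind P := by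
  unfold ind; split_ifs <;> norm_num

lemma ind_mono {P Q : Prop} (h : P → Q) : ind P ≤ ind Q := by
  by_cases hP : P
  · rw [ind_of_true hP, ind_of_true (h hP)]
  · rw [ind_of_false hP]; exact ind_nonneg Q

lemma ind_sub_ind_not_le (P Q : Prop) : ind P - ind (¬Q) ≤ ind (P ∧ Q) := by
  by_cases hP : P <;> by_cases hQ : Q <;> simp [ind, hP, hQ]

variable {ι κ : Type*} [Fintype ι] [Fintype κ] [DecidableEq ι] {w : κ → ℝ}

lemma expect_add (F G : (ι → κ) → ℝ) :
    expect w (fun ω => F ω + G ω) = expect w F + expect w G := by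
  simp only [expect, mul_add, sum_add_distrib]

lemma expect_sub (F G : (ι → κ) → ℝ) :
    expect w (fun ω => F ω - G ω) = expect w F - expect w G := by
  simp only [expect, mul_sub, sum_sub_distrib]

lemma expect_mul_left (a : ℝ) (F : (ι → κ) → ℝ) :
    expect w (fun ω => a * F ω) = a * expect w F := by
  simp only [expect, mul_sum, mul_left_comm]

lemma expect_sum {β : Type*} (s : Finset β) (F : β → (ι → κ) → ℝ) :
    expect w (fun ω => ∑ b ∈ s, F b ω) = ∑ b ∈ s, expect w (F b) := by
  simp only [expect, mul_sum]
  exact sum_comm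

lemma expect_expect_comm {ι' κ' : Type*} [Fintype ι'] [Fintype κ'] [DecidableEq ι'] {w' : κ' → ℝ}
    (F : (ι → κ) → (ι' → κ') → ℝ) :
    expect w (fun a => expect w' (F a)) = expect w' (fun b => expect w (fun a => F a b)) := by
  simp only [expect, mul_sum, mul_left_comm]
  exact sum_comm

lemma expect_prod {κ' : Type*} [Fintype κ'] {w' : κ' → ℝ} (F : (ι → κ × κ') → ℝ) :
    expect (fun k => w k.1 * w' k.2) F =
      expect w (fun a => expect w' (fun b => F (fun i => (a i, b i)))) := by
  simp only [expect, mul_sum, ← Fintype.sum_prod_type']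
  refine Fintype.sum_equiv (Equiv.arrowProdEquivProdArrow ι (fun _ => κ) fun _ => κ') _ _
    fun ω => ?_
  simp [Equiv.arrowProdEquivProdArrow, prod_mul_distrib, mul_assoc]

lemma prod_weight_map {κ' : Type*} {w' : κ' → ℝ} (g : κ → κ')
    (hg : ∀ k', w' k' = ∑ k, if g k = k' then w k else 0) (ω' : ι → κ') :
    ∏ i, w' (ω' i) = ∑ ω : ι → κ, if g ∘ ω = ω' then ∏ i, w (ω i) else 0 := by
  simp only [hg, prod_univ_sum, Fintype.piFinset_univ]
  refine sum_congr rfl fun ω _ => ?_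
  split_ifs with h
  · exact prod_congr rfl fun i _ => if_pos (congrFun h i)
  · obtain ⟨i, hi⟩ := Function.ne_iff.1 h
    exact prod_eq_zero (mem_univ i) (if_neg hi)

lemma expect_map {κ' : Type*} [Fintype κ'] {w' : κ' → ℝ} (g : κ → κ')
    (hg : ∀ k', w' k' = ∑ k, if g k = k' then w k else 0) (F : (ι → κ') → ℝ) :
    expect w (fun ω => F (g ∘ ω)) = expect w' F := by
  simp only [expect, prod_weight_map g hg, sum_mul]
  rw [sum_comm]
  exact sum_congr rfl fun ω _ => by simp

namespace IsProbWeight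

lemma prod {κ' : Type*} [Fintype κ'] {w' : κ' → ℝ} (hw : IsProbWeight w) (hw' : IsProbWeight w') :
    IsProbWeight fun k : κ × κ' => w k.1 * w' k.2 where
  nonneg k := mul_nonneg (hw.nonneg _) (hw'.nonneg _)
  sum_eq_one := by
    simp only [Fintype.sum_prod_type, ← mul_sum, hw.sum_eq_one, hw'.sum_eq_one, mul_one]

lemma expect_const (hw : IsProbWeight w) (a : ℝ) : expect w (fun _ : ι → κ => a) = a := by
  have h := prod_univ_sum (fun _ : ι => (univ : Finset κ)) (fun _ k => w k)
  simp only [hw.sum_eq_one, prod_const_one, Fintype.piFinset_univ] at h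
  simp only [expect, ← sum_mul, ← h, one_mul]

lemma expect_mono (hw : IsProbWeight w) {F G : (ι → κ) → ℝ} (h : ∀ ω, F ω ≤ G ω) :
    expect w F ≤ expect w G :=
  sum_le_sum fun ω _ => mul_le_mul_of_nonneg_left (h ω) (hw.prod_nonneg ω)

lemma expect_nonneg (hw : IsProbWeight w) {F : (ι → κ) → ℝ} (h : ∀ ω, 0 ≤ F ω) :
    0 ≤ expect w F :=
  sum_nonneg fun ω _ => mul_nonneg (hw.prod_nonneg ω) (h ω)

lemma abs_expect_le (hw : IsProbWeight w) (F : (ι → κ) → ℝ) :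
    |expect w F| ≤ expect w (fun ω => |F ω|) := by
  refine (abs_sum_le_sum_abs _ _).trans (sum_le_sum fun ω _ => ?_)
  rw [abs_mul, abs_of_nonneg (hw.prod_nonneg ω)]

lemma sq_expect_mul_le (hw : IsProbWeight w) (F G : (ι → κ) → ℝ) :
    expect w (fun ω => F ω * G ω) ^ 2 ≤
      expect w (fun ω => F ω ^ 2) * expect w (fun ω => G ω ^ 2) :=
  sum_sq_le_sum_mul_sum_of_sq_le_mul _
    (fun ω _ => mul_nonneg (hw.prod_nonneg ω) (sq_nonneg _))
    (fun ω _ => mul_nonneg (hw.prod_nonneg ω) (sq_nonneg _)) (fun ω _ => le_of_eq (by ring))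

lemma expect_sq_mul_sq_le (hw : IsProbWeight w) {F G : (ι → κ) → ℝ} {A B : ℝ}
    (hA : 0 ≤ A) (hB : 0 ≤ B) (hF : expect w (fun ω => F ω ^ 4) ≤ A ^ 2)
    (hG : expect w (fun ω => G ω ^ 4) ≤ B ^ 2) :
    expect w (fun ω => F ω ^ 2 * G ω ^ 2) ≤ A * B := by
  have h := hw.sq_expect_mul_le (fun ω => F ω ^ 2) (fun ω => G ω ^ 2)
  simp only [← pow_mul, Nat.reduceMul] at h
  refine le_of_sq_le_sq (h.trans ?_) (mul_nonneg hA hB)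
  rw [mul_pow]
  exact mul_le_mul hF hG (hw.expect_nonneg fun _ => by positivity) (by positivity)

lemma expect_update (hw : IsProbWeight w) (i : ι) (F : (ι → κ) → ℝ) :
    expect w F = expect w (fun ω => ∑ k, w k * F (Function.update ω i k)) := by
  have resample_weight (ω : ι → κ) (k : κ) :
      (∏ j, w (Function.update ω i k j)) * w (ω i) = (∏ j, w (ω j)) * w k := by
    simp only [Function.apply_update (fun _ => w), prod_update_of_mem (mem_univ i),
      ← mul_prod_erase univ (fun j => w (ω j)) (mem_univ i), sdiff_singleton_eq_erase]
    ring
  let swap : (ι → κ) × κ → (ι → κ) × κ := fun p => (Function.update p.1 i p.2, p.1 i)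
  have swap_involutive : Function.Involutive swap := fun p => by ext <;> simp [swap]
  calc expect w F
      = ∑ p : (ι → κ) × κ, (∏ j, w (p.1 j)) * w p.2 * F p.1 := by
        simp only [Fintype.sum_prod_type, ← sum_mul, ← mul_sum, hw.sum_eq_one, mul_one, expect]
    _ = ∑ p : (ι → κ) × κ, (∏ j, w ((swap p).1 j)) * w (swap p).2 * F (swap p).1 :=
        (Equiv.sum_comp (swap_involutive.toPerm swap)
          (fun p : (ι → κ) × κ => (∏ j, w (p.1 j)) * w p.2 * F p.1)).symm
    _ = expect w (fun ω => ∑ k, w k * F (Function.update ω i k)) := by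
        simp only [swap, resample_weight, Fintype.sum_prod_type, mul_assoc, mul_sum, expect]

lemma expect_fst {κ' : Type*} [Fintype κ'] {w' : κ' → ℝ} (hw' : IsProbWeight w')
    (F : (ι → κ) → ℝ) :
    expect (fun k : κ × κ' => w k.1 * w' k.2) (fun ω => F (fun i => (ω i).1)) = expect w F := by
  rw [expect_prod]
  simp only [hw'.expect_const]

lemma expect_snd {κ' : Type*} [Fintype κ'] {w' : κ' → ℝ} (hw : IsProbWeight w)
    (F : (ι → κ') → ℝ) :
    expect (fun k : κ × κ' => w k.1 * w' k.2) (fun ω => F (fun i => (ω i).2)) = expect w' F := by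
  rw [expect_prod]
  exact hw.expect_const (ι := ι) (expect w' F)

lemma markov (hw : IsProbWeight w) {Z : (ι → κ) → ℝ} (hZ : ∀ ω, 0 ≤ Z ω) {B a : ℝ}
    (hB : expect w Z ≤ B) (ha : 0 < a) : expect w (fun ω => ind (a * B < Z ω)) ≤ 1 / a := by
  rcases ((hw.expect_nonneg hZ).trans hB).eq_or_lt with rfl | hB0
  · have hterm := (sum_eq_zero_iff_of_nonneg fun ω _ => mul_nonneg (hw.prod_nonneg ω) (hZ ω)).1
      (le_antisymm hB (hw.expect_nonneg hZ))
    have hzero : expect w (fun ω => ind (a * 0 < Z ω)) = 0 := by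
      refine sum_eq_zero fun ω hω => ?_
      rcases mul_eq_zero.1 (hterm ω hω) with h | h <;> simp [h, ind]
    rw [hzero]
    positivity
  · have hscaled : a * B * expect w (fun ω => ind (a * B < Z ω)) ≤ B := by
      rw [← expect_mul_left]
      refine (hw.expect_mono fun ω => ?_).trans hB
      by_cases h : a * B < Z ω
      · rw [ind_of_true h, mul_one]; exact h.le
      · rw [ind_of_false h, mul_zero]; exact hZ ω
    rw [le_div_iff₀ ha]
    exact le_of_mul_le_mul_left (by linarith) hB0

lemma paley_zygmund (hw : IsProbWeight w) {V : (ι → κ) → ℝ} (hV : ∀ ω, 0 ≤ V ω)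
    {Q : ℝ} (hQ : 1 ≤ Q) (hV2 : expect w (fun ω => V ω ^ 2) ≤ Q * expect w V ^ 2) :
    1 / (4 * Q) ≤ expect w (fun ω => ind (expect w V / 2 ≤ V ω)) := by
  set T := expect w V with hT
  set I := expect w (fun ω => ind (T / 2 ≤ V ω)) with hI
  rcases (hw.expect_nonneg hV).eq_or_lt with hT0 | hT0 <;> rw [← hT] at hT0
  · have hI1 : I = 1 := by
      simp only [hI, ← hT0, zero_div, ind_of_true (hV _), hw.expect_const]
    rw [hI1, div_le_one (by positivity)]
    linarith
  · have hhalf : T / 2 ≤ expect w (fun ω => V ω * ind (T / 2 ≤ V ω)) := by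
      have : T ≤ expect w (fun ω => T / 2 + V ω * ind (T / 2 ≤ V ω)) := by
        refine hw.expect_mono fun ω => ?_
        by_cases h : T / 2 ≤ V ω
        · rw [ind_of_true h]; linarith
        · rw [ind_of_false h]; linarith
      rw [expect_add, hw.expect_const] at this
      linarith
    have hcs := hw.sq_expect_mul_le V (fun ω => ind (T / 2 ≤ V ω))
    simp only [ind_sq, ← hI] at hcs
    have hsq : (T / 2) ^ 2 ≤ Q * T ^ 2 * I :=
      (pow_le_pow_left₀ (by linarith) hhalf 2).trans
        (hcs.trans (mul_le_mul_of_nonneg_right hV2 (hw.expect_nonneg fun _ => ind_nonneg _)))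
    rw [div_le_iff₀ (by positivity)]
    exact le_of_mul_le_mul_left (by linarith) (pow_pos hT0 2)

lemma paley_zygmund_and_markov (hw : IsProbWeight w) {V Z : (ι → κ) → ℝ}
    (hV : ∀ ω, 0 ≤ V ω) (hZ : ∀ ω, 0 ≤ Z ω) {Q B : ℝ} (hQ : 1 ≤ Q)
    (hV2 : expect w (fun ω => V ω ^ 2) ≤ Q * expect w V ^ 2) (hB : expect w Z ≤ B) :
    1 / (8 * Q) ≤ expect w (fun ω => ind (expect w V / 2 ≤ V ω ∧ Z ω ≤ 8 * Q * B)) := by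
  have hlarge := hw.paley_zygmund hV hQ hV2
  have hsmall := hw.markov hZ hB (a := 8 * Q) (by positivity)
  have hboth := hw.expect_mono fun ω =>
    ind_sub_ind_not_le (expect w V / 2 ≤ V ω) (Z ω ≤ 8 * Q * B)
  simp only [expect_sub, not_le] at hboth
  have : 1 / (4 * Q) = 1 / (8 * Q) + 1 / (8 * Q) := by field_simp; norm_num
  linarith

end IsProbWeight

end Expectation

section MultilinearPolynomial

variable {ι : Type*}

/-- The value at `x` of the multilinear polynomial `∑ S, c S * ∏ i ∈ S, X i`. A multilinear
polynomial is encoded throughout by its coefficient function `c`. -/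
noncomputable def mlEval [Fintype ι] (c : Finset ι → ℝ) (x : ι → ℝ) : ℝ :=
  ∑ S, c S * ∏ i ∈ S, x i

/-- The part of the polynomial `c` that does not involve the variable `i`. -/
def eraseVar [DecidableEq ι] (i : ι) (c : Finset ι → ℝ) : Finset ι → ℝ :=
  fun S => if i ∈ S then 0 else c S

/-- The partial derivative of the polynomial `c` in the variable `i`. -/
def derivVar [DecidableEq ι] (i : ι) (c : Finset ι → ℝ) : Finset ι → ℝ :=
  fun S => if i ∈ S then 0 else c (insert i S)

/-- The polynomial `c` has degree at most `d`. -/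
def DegreeLE (d : ℕ) (c : Finset ι → ℝ) : Prop := ∀ S, c S ≠ 0 → S.card ≤ d

/-- The sum of the squared coefficients of the polynomial `c`. -/
noncomputable def sqNorm [Fintype ι] (c : Finset ι → ℝ) : ℝ := ∑ S, c S ^ 2

lemma sqNorm_nonneg [Fintype ι] (c : Finset ι → ℝ) : 0 ≤ sqNorm c :=
  sum_nonneg fun _ _ => sq_nonneg _

lemma eraseVar_of_mem [DecidableEq ι] {i : ι} {S : Finset ι} (h : i ∈ S) (c : Finset ι → ℝ) :
    eraseVar i c S = 0 := if_pos h

lemma derivVar_of_mem [DecidableEq ι] {i : ι} {S : Finset ι} (h : i ∈ S) (c : Finset ι → ℝ) :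
    derivVar i c S = 0 := if_pos h

lemma eraseVar_of_notMem [DecidableEq ι] {i : ι} {S : Finset ι} (h : i ∉ S) (c : Finset ι → ℝ) :
    eraseVar i c S = c S := if_neg h

lemma derivVar_of_notMem [DecidableEq ι] {i : ι} {S : Finset ι} (h : i ∉ S) (c : Finset ι → ℝ) :
    derivVar i c S = c (insert i S) := if_neg h

namespace DegreeLE

variable {d : ℕ} {c : Finset ι → ℝ}

lemma mono {e : ℕ} (hc : DegreeLE d c) (h : d ≤ e) : DegreeLE e c := fun S hS => (hc S hS).trans h

variable [DecidableEq ι]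

lemma eraseVar (hc : DegreeLE d c) (i : ι) : DegreeLE d (eraseVar i c) := fun S hS =>
  hc S fun h => hS (by simp only [BooleanCube.eraseVar, h, ite_self])

lemma card_lt_of_derivVar_ne_zero (hc : DegreeLE d c) {i : ι} {S : Finset ι}
    (hS : derivVar i c S ≠ 0) : S.card < d := by
  have hi : i ∉ S := fun h => hS (derivVar_of_mem h c)
  rw [derivVar_of_notMem hi] at hS
  have hcard := hc _ hS
  rwa [card_insert_of_notMem hi] at hcard

lemma derivVar (hc : DegreeLE d c) (i : ι) : DegreeLE (d - 1) (derivVar i c) := fun _ hS =>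
  Nat.le_sub_one_of_lt (hc.card_lt_of_derivVar_ne_zero hS)

lemma derivVar_eq_zero (hc : DegreeLE 0 c) (i : ι) : BooleanCube.derivVar i c = 0 :=
  funext fun _ => not_not.1 fun hS => Nat.not_lt_zero _ (hc.card_lt_of_derivVar_ne_zero hS)

end DegreeLE

lemma mlEval_congr [Fintype ι] {c : Finset ι → ℝ} {x y : ι → ℝ}
    (h : ∀ S, c S ≠ 0 → ∀ i ∈ S, x i = y i) :
    mlEval c x = mlEval c y := by
  refine sum_congr rfl fun S _ => ?_
  by_cases hS : c S = 0
  · simp only [hS, zero_mul]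
  · rw [prod_congr rfl (h S hS)]

lemma mlEval_of_const [Fintype ι] {c : Finset ι → ℝ} (hc : ∀ S, c S ≠ 0 → S = ∅) (x : ι → ℝ) :
    mlEval c x = c ∅ := by
  rw [mlEval, sum_eq_single ∅ (fun S _ hS => ?_) (by simp), prod_empty, mul_one]
  rw [not_not.1 (mt (hc S) hS), zero_mul]

lemma sqNorm_of_const [Fintype ι] {c : Finset ι → ℝ} (hc : ∀ S, c S ≠ 0 → S = ∅) :
    sqNorm c = c ∅ ^ 2 := by
  rw [sqNorm, sum_eq_single ∅ (fun S _ hS => ?_) (by simp)]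
  rw [not_not.1 (mt (hc S) hS), zero_pow two_ne_zero]

variable [DecidableEq ι]

lemma multilinear_induction [Finite ι] {P : (Finset ι → ℝ) → Prop}
    (const : ∀ c, (∀ S, c S ≠ 0 → S = ∅) → P c)
    (split : ∀ c i, P (eraseVar i c) → P (derivVar i c) → P c) (c : Finset ι → ℝ) : P c := by
  have := Fintype.ofFinite ι
  suffices h : ∀ V : Finset ι, ∀ c : Finset ι → ℝ, (∀ S, c S ≠ 0 → S ⊆ V) → P c from
    h univ c fun S _ => subset_univ S
  intro V
  induction V using Finset.induction with
  | empty => exact fun c hc => const c fun S hS => subset_empty.1 (hc S hS)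
  | insert i V _ ih =>
    refine fun c hc => split c i (ih _ fun S hS => ?_) (ih _ fun S hS => ?_)
    · have hi : i ∉ S := fun h => hS (eraseVar_of_mem h c)
      rw [eraseVar_of_notMem hi] at hS
      exact (subset_insert_iff_of_notMem hi).1 (hc S hS)
    · have hi : i ∉ S := fun h => hS (derivVar_of_mem h c)
      rw [derivVar_of_notMem hi] at hS
      exact (subset_insert_iff_of_notMem hi).1 ((subset_insert i S).trans (hc _ hS))

variable [Fintype ι]

lemma sum_eq_sum_eraseVar_add_sum_derivVar (i : ι) (f : Finset ι → ℝ) :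
    ∑ S, f S = ∑ S, eraseVar i f S + ∑ S, derivVar i f S := by
  have huniv : (univ : Finset (Finset ι)) = (insert i (univ.erase i)).powerset := by
    rw [insert_erase (mem_univ i), powerset_univ]
  have hfilter : (univ.erase i).powerset = univ.filter fun S : Finset ι => i ∉ S := by
    ext S
    simp [subset_erase]
  conv_lhs => rw [huniv]
  simp only [sum_powerset_insert (notMem_erase i _), hfilter, sum_filter, ite_not, eraseVar,
    derivVar]

lemma mlEval_eq_add_mul (i : ι) (c : Finset ι → ℝ) (x : ι → ℝ) :
    mlEval c x = mlEval (eraseVar i c) x + x i * mlEval (derivVar i c) x := by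
  unfold mlEval
  rw [sum_eq_sum_eraseVar_add_sum_derivVar i, mul_sum]
  congr 1 <;> refine sum_congr rfl fun S _ => ?_ <;> by_cases h : i ∈ S
  · simp [eraseVar, h]
  · simp [eraseVar, h]
  · simp [derivVar, h]
  · simp only [derivVar_of_notMem h, prod_insert h]
    ring

lemma mlEval_eraseVar_congr {i : ι} {x y : ι → ℝ} (h : ∀ j, j ≠ i → x j = y j)
    (c : Finset ι → ℝ) : mlEval (eraseVar i c) x = mlEval (eraseVar i c) y :=
  mlEval_congr fun _ hS j hj => h j fun hji => hS (eraseVar_of_mem (hji ▸ hj) c)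

lemma mlEval_derivVar_congr {i : ι} {x y : ι → ℝ} (h : ∀ j, j ≠ i → x j = y j)
    (c : Finset ι → ℝ) : mlEval (derivVar i c) x = mlEval (derivVar i c) y :=
  mlEval_congr fun _ hS j hj => h j fun hji => hS (derivVar_of_mem (hji ▸ hj) c)

lemma sqNorm_eq_add (i : ι) (c : Finset ι → ℝ) :
    sqNorm c = sqNorm (eraseVar i c) + sqNorm (derivVar i c) := by
  simp only [sqNorm]
  rw [sum_eq_sum_eraseVar_add_sum_derivVar i]
  congr 1 <;> exact sum_congr rfl fun S _ => by by_cases h : i ∈ S <;> simp [eraseVar, derivVar, h]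

end MultilinearPolynomial

section Hypercontractivity

variable {ι κ : Type*}

/-- The random variable `X` on the weighted space `(κ, w)` has mean `0`, variance `1`, vanishing
third moment, and is bounded by `2`. Independent families of such variables satisfy both the
hypercontractive inequality and the replacement principle proved below. -/
structure IsStandardized [Fintype κ] (w X : κ → ℝ) : Prop where
  mean : ∑ k, w k * X k = 0
  sq : ∑ k, w k * X k ^ 2 = 1
  cube : ∑ k, w k * X k ^ 3 = 0
  abs_le_two : ∀ k, |X k| ≤ 2

/-- The random variable obtained by substituting the independent variables `ξ i (ω i)` into the
polynomial `c`. -/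
noncomputable def polyRV [Fintype ι] (ξ : ι → κ → ℝ) (c : Finset ι → ℝ) (ω : ι → κ) : ℝ :=
  mlEval c fun i => ξ i (ω i)

lemma polyRV_of_const [Fintype ι] {c : Finset ι → ℝ} (hc : ∀ S, c S ≠ 0 → S = ∅)
    (ξ : ι → κ → ℝ) (ω : ι → κ) : polyRV ξ c ω = c ∅ := mlEval_of_const hc _

lemma polyRV_update [Fintype ι] [DecidableEq ι] {ξ : ι → κ → ℝ} (i : ι)
    (c : Finset ι → ℝ) (ω : ι → κ) (k : κ) :
    polyRV ξ c (Function.update ω i k) =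
      polyRV ξ (eraseVar i c) ω + ξ i k * polyRV ξ (derivVar i c) ω := by
  have hoff (j : ι) (hj : j ≠ i) : ξ j (Function.update ω i k j) = ξ j (ω j) := by
    rw [Function.update_of_ne hj]
  rw [polyRV, mlEval_eq_add_mul i, mlEval_eraseVar_congr hoff, mlEval_derivVar_congr hoff,
    Function.update_self]
  rfl

lemma polyRV_update_update [Fintype ι] [DecidableEq ι] (ξ : ι → κ → ℝ) (i : ι) (X : κ → ℝ)
    (c : Finset ι → ℝ) (ω : ι → κ) (k : κ) :
    polyRV (Function.update ξ i X) c (Function.update ω i k) =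
      polyRV ξ (eraseVar i c) ω + X k * polyRV ξ (derivVar i c) ω := by
  have hoff (j : ι) (hj : j ≠ i) : Function.update ξ i X j (ω j) = ξ j (ω j) := by
    rw [Function.update_of_ne hj]
  rw [polyRV_update, Function.update_self, polyRV, polyRV, mlEval_eraseVar_congr hoff,
    mlEval_derivVar_congr hoff]
  rfl

namespace IsStandardized

variable [Fintype κ] {w X : κ → ℝ}

lemma sum_pow_four_le (hX : IsStandardized w X) (hw : IsProbWeight w) :
    ∑ k, w k * X k ^ 4 ≤ 9 :=
  calc ∑ k, w k * X k ^ 4 ≤ ∑ k, 4 * (w k * X k ^ 2) := by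
        refine sum_le_sum fun k _ => ?_
        have hsq : X k ^ 2 ≤ 2 ^ 2 := sq_le_sq' (abs_le.1 (hX.abs_le_two k)).1
          (abs_le.1 (hX.abs_le_two k)).2
        have h4 : X k ^ 4 ≤ 4 * X k ^ 2 := by nlinarith [sq_nonneg (X k)]
        nlinarith [mul_le_mul_of_nonneg_left h4 (hw.nonneg k)]
    _ ≤ 9 := by rw [← mul_sum, hX.sq]; norm_num

lemma sum_affine_sq (hX : IsStandardized w X) (hw : IsProbWeight w) (a b : ℝ) :
    ∑ k, w k * (a + X k * b) ^ 2 = a ^ 2 + b ^ 2 := by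
  have hexpand (k : κ) : w k * (a + X k * b) ^ 2 =
      a ^ 2 * w k + 2 * a * b * (w k * X k) + b ^ 2 * (w k * X k ^ 2) := by ring
  simp only [hexpand, sum_add_distrib, ← mul_sum, hX.mean, hX.sq, hw.sum_eq_one]
  ring

lemma sum_affine_pow_four_le (hX : IsStandardized w X) (hw : IsProbWeight w) (a b : ℝ) :
    ∑ k, w k * (a + X k * b) ^ 4 ≤ a ^ 4 + 6 * (a ^ 2 * b ^ 2) + 9 * b ^ 4 := by
  have hexpand (k : κ) : w k * (a + X k * b) ^ 4 =
      a ^ 4 * w k + 4 * a ^ 3 * b * (w k * X k) + 6 * a ^ 2 * b ^ 2 * (w k * X k ^ 2)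
        + 4 * a * b ^ 3 * (w k * X k ^ 3) + b ^ 4 * (w k * X k ^ 4) := by ring
  simp only [hexpand, sum_add_distrib, ← mul_sum, hX.mean, hX.sq, hX.cube, hw.sum_eq_one]
  linarith [mul_le_mul_of_nonneg_left (hX.sum_pow_four_le hw) (by positivity : 0 ≤ b ^ 4)]

end IsStandardized

variable [Fintype ι] [DecidableEq ι] [Fintype κ] {w : κ → ℝ} {ξ : ι → κ → ℝ}

lemma expect_polyRV_sq (hw : IsProbWeight w) (hξ : ∀ i, IsStandardized w (ξ i))
    (c : Finset ι → ℝ) : expect w (fun ω => polyRV ξ c ω ^ 2) = sqNorm c := by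
  induction c using multilinear_induction with
  | const c hc => simp only [polyRV_of_const hc, sqNorm_of_const hc, hw.expect_const]
  | split c i herase hderiv =>
    rw [hw.expect_update i]
    simp only [polyRV_update, (hξ i).sum_affine_sq hw]
    rw [expect_add, herase, hderiv, ← sqNorm_eq_add]

lemma expect_polyRV_pow_four_le (hw : IsProbWeight w) (hξ : ∀ i, IsStandardized w (ξ i))
    {d : ℕ} {c : Finset ι → ℝ} (hc : DegreeLE d c) :
    expect w (fun ω => polyRV ξ c ω ^ 4) ≤ (3 ^ d * sqNorm c) ^ 2 := by
  induction c using multilinear_induction generalizing d with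
  | const c hconst =>
    simp only [polyRV_of_const hconst, sqNorm_of_const hconst, hw.expect_const]
    calc c ∅ ^ 4 = (1 * c ∅ ^ 2) ^ 2 := by ring
      _ ≤ (3 ^ d * c ∅ ^ 2) ^ 2 := by gcongr; exact one_le_pow₀ (by norm_num)
  | split c i herase hderiv =>
    have hA := sqNorm_nonneg (eraseVar i c)
    have hB := sqNorm_nonneg (derivVar i c)
    have hEa := herase (hc.eraseVar i)
    have hEb : expect w (fun ω => polyRV ξ (derivVar i c) ω ^ 4) ≤
        (3 ^ d * sqNorm (derivVar i c) / 3) ^ 2 := by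
      cases d with
      | zero =>
        simp [hc.derivVar_eq_zero, polyRV, mlEval, expect, sqNorm]
      | succ d =>
        refine (hderiv (hc.derivVar i)).trans_eq ?_
        rw [Nat.add_sub_cancel, pow_succ]
        ring
    have hEab := hw.expect_sq_mul_sq_le (by positivity) (by positivity) hEa hEb
    calc expect w (fun ω => polyRV ξ c ω ^ 4)
        = expect w (fun ω => ∑ k, w k *
            (polyRV ξ (eraseVar i c) ω + ξ i k * polyRV ξ (derivVar i c) ω) ^ 4) := by
          rw [hw.expect_update i]
          simp only [polyRV_update]
      _ ≤ expect w (fun ω => polyRV ξ (eraseVar i c) ω ^ 4) + 6 * expect w (fun ω =>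
            polyRV ξ (eraseVar i c) ω ^ 2 * polyRV ξ (derivVar i c) ω ^ 2) +
            9 * expect w (fun ω => polyRV ξ (derivVar i c) ω ^ 4) := by
          simp only [← expect_mul_left, ← expect_add]
          exact hw.expect_mono fun ω => (hξ i).sum_affine_pow_four_le hw _ _
      _ ≤ (3 ^ d * (sqNorm (eraseVar i c) + sqNorm (derivVar i c))) ^ 2 := by
          linear_combination hEa + 6 * hEab + 9 * hEb
      _ = (3 ^ d * sqNorm c) ^ 2 := by rw [← sqNorm_eq_add]

lemma expect_sum_polyRV_sq_sq_le (hw : IsProbWeight w) (hξ : ∀ i, IsStandardized w (ξ i))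
    {β : Type*} (s : Finset β) {h : β → ℝ} (hh : ∀ b, 0 ≤ h b) {c : β → Finset ι → ℝ} {d : ℕ}
    (hc : ∀ b, DegreeLE d (c b)) :
    expect w (fun ω => (∑ b ∈ s, h b * polyRV ξ (c b) ω ^ 2) ^ 2) ≤
      9 ^ d * (∑ b ∈ s, h b * sqNorm (c b)) ^ 2 := by
  have hpair (b b' : β) : expect w (fun ω => polyRV ξ (c b) ω ^ 2 * polyRV ξ (c b') ω ^ 2) ≤
      (3 ^ d * sqNorm (c b)) * (3 ^ d * sqNorm (c b')) :=
    hw.expect_sq_mul_sq_le (mul_nonneg (by positivity) (sqNorm_nonneg _))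
      (mul_nonneg (by positivity) (sqNorm_nonneg _))
      (expect_polyRV_pow_four_le hw hξ (hc b)) (expect_polyRV_pow_four_le hw hξ (hc b'))
  have h9 : (9 : ℝ) ^ d = 3 ^ d * 3 ^ d := by rw [← mul_pow]; norm_num
  simp only [pow_two (∑ _ ∈ s, _), sum_mul_sum]
  simp only [expect_sum, mul_sum]
  refine sum_le_sum fun b _ => sum_le_sum fun b' _ => ?_
  calc expect w (fun ω => h b * polyRV ξ (c b) ω ^ 2 * (h b' * polyRV ξ (c b') ω ^ 2))
      = h b * h b' * expect w (fun ω => polyRV ξ (c b) ω ^ 2 * polyRV ξ (c b') ω ^ 2) := by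
        rw [← expect_mul_left]
        exact congrArg _ (funext fun ω => by ring)
    _ ≤ h b * h b' * ((3 ^ d * sqNorm (c b)) * (3 ^ d * sqNorm (c b'))) :=
        mul_le_mul_of_nonneg_left (hpair b b') (mul_nonneg (hh b) (hh b'))
    _ = 9 ^ d * (h b * sqNorm (c b) * (h b' * sqNorm (c b'))) := by rw [h9]; ring

end Hypercontractivity

section Cube

/-- The uniform weight on a finite type. -/
noncomputable def unif (κ : Type*) [Fintype κ] : κ → ℝ := fun _ => 1 / Fintype.card κ

lemma isProbWeight_unif (κ : Type*) [Fintype κ] [Nonempty κ] : IsProbWeight (unif κ) where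
  nonneg _ := by unfold unif; positivity
  sum_eq_one := by simp [unif]

lemma chi_mul_self (b : Bool) : chi b * chi b = 1 := by cases b <;> norm_num [chi]

lemma chi_not (b : Bool) : chi (!b) = -chi b := by cases b <;> norm_num [chi]

lemma isStandardized_chi : IsStandardized (unif Bool) chi where
  mean := by simp [unif, chi]
  sq := by norm_num [unif, chi]
  cube := by norm_num [unif, chi]
  abs_le_two b := by cases b <;> norm_num [chi]

variable {ι : Type*}

section WeightedSums

variable [Fintype ι]

/-- The sum of the squared coefficients of `c`, the coefficient of `S` being weighted by `h S`. -/
noncomputable def weightedSq (h c : Finset ι → ℝ) : ℝ := ∑ S, h S * c S ^ 2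

lemma weightedSq_mono {h h' : Finset ι → ℝ} (c : Finset ι → ℝ)
    (hh : ∀ S, c S ≠ 0 → h S ≤ h' S) : weightedSq h c ≤ weightedSq h' c := by
  refine sum_le_sum fun S _ => ?_
  by_cases hc : c S = 0
  · simp only [hc, zero_pow two_ne_zero, mul_zero, le_refl]
  · exact mul_le_mul_of_nonneg_right (hh S hc) (sq_nonneg _)

lemma weightedSq_smul (a : ℝ) (h c : Finset ι → ℝ) :
    weightedSq (fun S => a * h S) c = a * weightedSq h c := by
  simp only [weightedSq, mul_sum, mul_assoc]

/-- The value of the polynomial `c` at a point of the cube. -/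
noncomputable def cubeEval (c : Finset ι → ℝ) (x : ι → Bool) : ℝ := polyRV (fun _ => chi) c x

end WeightedSums

variable [DecidableEq ι]

/-- The polynomial `c` with its constant term removed. -/
def centered (c : Finset ι → ℝ) : Finset ι → ℝ := fun S => if S = ∅ then 0 else c S

lemma DegreeLE.centered {d : ℕ} {c : Finset ι → ℝ} (hc : DegreeLE d c) :
    DegreeLE d (centered c) := fun S hS =>
  hc S fun h => hS (by simp only [BooleanCube.centered, h, ite_self])

variable [Fintype ι]

/-- The set of coordinates whose flip at `x` strictly changes the sign of `F`. -/
noncomputable def flipSet (F : (ι → Bool) → ℝ) (x : ι → Bool) : Finset ι :=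
  {i | F x * F (Function.update x i (!x i)) < 0}

/-- The number of coordinates whose flip at `x` strictly changes the sign of `F`. -/
noncomputable def signFlips (F : (ι → Bool) → ℝ) (x : ι → Bool) : ℕ := #(flipSet F x)

/-- The probability that a uniform point of the cube has at least `m` sign-changing coordinates
for the polynomial `c`. -/
noncomputable def flipTail (c : Finset ι → ℝ) (m : ℝ) : ℝ :=
  expect (unif Bool) fun x => ind (m ≤ signFlips (cubeEval c) x)

/-- The variance of the polynomial `c` at a uniform point of the cube. -/
noncomputable def variance (c : Finset ι → ℝ) : ℝ := sqNorm (centered c)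

/-- The influence of the variable `i` on the polynomial `c`. -/
noncomputable def influence (i : ι) (c : Finset ι → ℝ) : ℝ := sqNorm (derivVar i c)

/-- The total influence of the polynomial `c`. -/
noncomputable def totalInfluence (c : Finset ι → ℝ) : ℝ := ∑ i, influence i c

/-- The squared length of the gradient of the polynomial `c` at a point of the cube. -/
noncomputable def gradSq (c : Finset ι → ℝ) (x : ι → Bool) : ℝ :=
  ∑ i, cubeEval (derivVar i c) x ^ 2

lemma flipTail_nonneg (c : Finset ι → ℝ) (m : ℝ) : 0 ≤ flipTail c m :=
  (isProbWeight_unif Bool).expect_nonneg fun _ => ind_nonneg _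

lemma flipTail_le_one (c : Finset ι → ℝ) (m : ℝ) : flipTail c m ≤ 1 :=
  ((isProbWeight_unif Bool).expect_mono fun _ => ind_le_one _).trans_eq
    ((isProbWeight_unif Bool).expect_const 1)

lemma variance_nonneg (c : Finset ι → ℝ) : 0 ≤ variance c := sqNorm_nonneg _

lemma influence_nonneg (i : ι) (c : Finset ι → ℝ) : 0 ≤ influence i c := sqNorm_nonneg _

lemma gradSq_nonneg (c : Finset ι → ℝ) (x : ι → Bool) : 0 ≤ gradSq c x :=
  sum_nonneg fun _ _ => sq_nonneg _

lemma variance_eq_weightedSq (c : Finset ι → ℝ) :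
    variance c = weightedSq (fun S => if S = ∅ then 0 else 1) c :=
  sum_congr rfl fun S _ => by by_cases h : S = ∅ <;> simp [centered, h]

lemma influence_eq_weightedSq (i : ι) (c : Finset ι → ℝ) :
    influence i c = weightedSq (fun S => if i ∈ S then 1 else 0) c := by
  rw [weightedSq, sum_eq_sum_eraseVar_add_sum_derivVar i]
  simp only [influence, sqNorm, ← sum_add_distrib]
  exact sum_congr rfl fun S _ => by by_cases h : i ∈ S <;> simp [eraseVar, derivVar, h]

lemma totalInfluence_eq_weightedSq (c : Finset ι → ℝ) :
    totalInfluence c = weightedSq (fun S => S.card) c := by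
  simp only [totalInfluence, influence_eq_weightedSq, weightedSq]
  rw [sum_comm]
  simp only [← sum_mul, sum_boole, filter_mem_eq_inter, univ_inter]

lemma totalInfluence_le {d : ℕ} {c : Finset ι → ℝ} (hc : DegreeLE d c) :
    totalInfluence c ≤ d * variance c := by
  rw [totalInfluence_eq_weightedSq, variance_eq_weightedSq, ← weightedSq_smul]
  refine weightedSq_mono c fun S hS => ?_
  split_ifs with h
  · simp only [h, card_empty, Nat.cast_zero, mul_zero, le_refl]
  · rw [mul_one]
    exact_mod_cast hc S hS

lemma variance_le_totalInfluence (c : Finset ι → ℝ) : variance c ≤ totalInfluence c := by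
  rw [totalInfluence_eq_weightedSq, variance_eq_weightedSq]
  refine weightedSq_mono c fun S _ => ?_
  split_ifs with h
  · positivity
  · exact_mod_cast card_pos.2 (nonempty_iff_ne_empty.2 h)

lemma sqNorm_eq_sq_add_variance (c : Finset ι → ℝ) : sqNorm c = c ∅ ^ 2 + variance c := by
  rw [variance, sqNorm, sqNorm, ← add_sum_erase _ _ (mem_univ ∅),
    ← add_sum_erase (a := ∅) univ (fun S => centered c S ^ 2) (mem_univ ∅)]
  simp only [centered, if_true, zero_pow two_ne_zero, zero_add]
  exact congrArg _ (sum_congr rfl fun S hS => by rw [if_neg (ne_of_mem_erase hS)])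

lemma cubeEval_eq_add_centered (c : Finset ι → ℝ) (x : ι → Bool) :
    cubeEval c x = c ∅ + cubeEval (centered c) x := by
  simp only [cubeEval, polyRV, mlEval]
  rw [← add_sum_erase _ _ (mem_univ ∅), ← add_sum_erase (a := ∅) univ
    (fun S => centered c S * ∏ i ∈ S, chi (x i)) (mem_univ ∅)]
  simp only [centered, if_true, prod_empty, mul_one, zero_add]
  exact congrArg _ (sum_congr rfl fun S hS => by rw [if_neg (ne_of_mem_erase hS)])

lemma cubeEval_flip (c : Finset ι → ℝ) (x : ι → Bool) (i : ι) :
    cubeEval c (Function.update x i (!x i)) =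
      cubeEval c x - 2 * chi (x i) * cubeEval (derivVar i c) x := by
  have hself := polyRV_update (ξ := fun _ => chi) i c x (x i)
  have hflip := polyRV_update (ξ := fun _ => chi) i c x (!x i)
  rw [Function.update_eq_self] at hself
  simp only [cubeEval, hself, hflip, chi_not]
  ring

lemma sq_cubeEval_le_of_signFlips_pos {c : Finset ι → ℝ} {x : ι → Bool}
    (h : 0 < signFlips (cubeEval c) x) : cubeEval c x ^ 2 ≤ 4 * gradSq c x := by
  obtain ⟨i, hi⟩ := card_pos.1 h
  simp only [flipSet, mem_filter, mem_univ, true_and, cubeEval_flip] at hi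
  have hle : cubeEval (derivVar i c) x ^ 2 ≤ gradSq c x :=
    single_le_sum (f := fun i => cubeEval (derivVar i c) x ^ 2) (fun _ _ => sq_nonneg _)
      (mem_univ i)
  have hderiv : (chi (x i) * cubeEval (derivVar i c) x) ^ 2 = cubeEval (derivVar i c) x ^ 2 := by
    rw [mul_pow, pow_two (chi _), chi_mul_self, one_mul]
  nlinarith [sq_nonneg (cubeEval c x - 2 * chi (x i) * cubeEval (derivVar i c) x)]

lemma signFlips_eq_zero_of_variance_eq_zero {c : Finset ι → ℝ} (h : variance c = 0)
    (x : ι → Bool) : signFlips (cubeEval c) x = 0 := by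
  have hconst (S : Finset ι) (hS : c S ≠ 0) : S = ∅ := by
    have hsq := (sum_eq_zero_iff_of_nonneg fun S _ => sq_nonneg (centered c S)).1 h S (mem_univ S)
    by_contra hne
    exact hS (by simpa [centered, hne] using hsq)
  simp only [signFlips, flipSet, cubeEval, polyRV_of_const hconst, card_eq_zero,
    filter_eq_empty_iff, not_lt]
  exact fun _ _ => mul_self_nonneg _

lemma flipTail_eq_zero_of_variance_eq_zero {c : Finset ι → ℝ}
    (h : variance c = 0) {m : ℝ} (hm : 0 < m) : flipTail c m = 0 := by
  simp only [flipTail, signFlips_eq_zero_of_variance_eq_zero h, Nat.cast_zero,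
    ind_of_false hm.not_ge, (isProbWeight_unif Bool).expect_const]

end Cube

section PolynomialFunctions

variable {ι : Type*}

lemma prod_chi_mul_prod_chi [DecidableEq ι] (S T : Finset ι) (x : ι → Bool) :
    (∏ i ∈ S, chi (x i)) * (∏ i ∈ T, chi (x i)) = ∏ i ∈ symmDiff S T, chi (x i) := by
  have hext {U : Finset ι} (hU : U ⊆ S ∪ T) :
      ∏ i ∈ U, chi (x i) = ∏ i ∈ S ∪ T, if i ∈ U then chi (x i) else 1 := by
    rw [prod_ite_mem, inter_eq_right.2 hU]
  rw [hext subset_union_left, hext subset_union_right, hext (U := symmDiff S T) symmDiff_le_sup,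
    ← prod_mul_distrib]
  refine prod_congr rfl fun i _ => ?_
  by_cases h1 : i ∈ S <;> by_cases h2 : i ∈ T <;> simp [mem_symmDiff, h1, h2, chi_mul_self]

variable [Fintype ι]

/-- The function `F` on the cube is a polynomial of degree at most `D`. -/
def IsPoly (D : ℕ) (F : (ι → Bool) → ℝ) : Prop :=
  ∃ c : Finset ι → ℝ, DegreeLE D c ∧ ∀ x, F x = cubeEval c x

lemma DegreeLE.isPoly {d : ℕ} {c : Finset ι → ℝ} (h : DegreeLE d c) : IsPoly d (cubeEval c) :=
  ⟨c, h, fun _ => rfl⟩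

lemma isPoly_monomial {D : ℕ} {a : ℝ} {S : Finset ι} (h : a ≠ 0 → S.card ≤ D) :
    IsPoly D (fun x => a * ∏ i ∈ S, chi (x i)) := by
  refine ⟨Pi.single S a, fun T hT => ?_, fun x => ?_⟩
  · obtain rfl : T = S := by_contra fun hne => hT (Pi.single_eq_of_ne hne _)
    exact h (by rwa [Pi.single_eq_same] at hT)
  · simp [cubeEval, polyRV, mlEval, Pi.single_apply]

namespace IsPoly

variable {D D' : ℕ} {F G : (ι → Bool) → ℝ}

lemma add (hF : IsPoly D F) (hG : IsPoly D G) : IsPoly D (fun x => F x + G x) := by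
  obtain ⟨a, ha, hF⟩ := hF
  obtain ⟨b, hb, hG⟩ := hG
  refine ⟨fun S => a S + b S, fun S hS => ?_, fun x => ?_⟩
  · by_cases h : a S = 0
    · exact hb S (by simpa only [h, zero_add] using hS)
    · exact ha S h
  · simp only [hF, hG, cubeEval, polyRV, mlEval, add_mul, sum_add_distrib]

lemma const_mul (a : ℝ) (hF : IsPoly D F) : IsPoly D (fun x => a * F x) := by
  obtain ⟨c, hc, hF⟩ := hF
  refine ⟨fun S => a * c S, fun S hS => hc S (right_ne_zero_of_mul hS), fun x => ?_⟩
  simp only [hF, cubeEval, polyRV, mlEval, mul_sum, mul_assoc]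

lemma sum {β : Type*} (s : Finset β) {F : β → (ι → Bool) → ℝ} (hF : ∀ b, IsPoly D (F b)) :
    IsPoly D (fun x => ∑ b ∈ s, F b x) := by
  induction s using Finset.induction with
  | empty => exact ⟨0, fun _ hS => absurd rfl hS, fun x => by simp [cubeEval, polyRV, mlEval]⟩
  | insert b s hb ih =>
    simp only [sum_insert hb]
    exact (hF b).add ih

lemma mul (hF : IsPoly D F) (hG : IsPoly D' G) : IsPoly (D + D') (fun x => F x * G x) := by
  obtain ⟨a, ha, hF⟩ := hF
  obtain ⟨b, hb, hG⟩ := hG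
  have hexpand : (fun x => F x * G x) =
      fun x => ∑ S, ∑ T, (a S * b T) * ∏ i ∈ symmDiff S T, chi (x i) := by
    funext x
    simp only [hF, hG, cubeEval, polyRV, mlEval, sum_mul_sum, ← prod_chi_mul_prod_chi]
    exact sum_congr rfl fun _ _ => sum_congr rfl fun _ _ => by ring
  rw [hexpand]
  refine IsPoly.sum _ fun S => IsPoly.sum _ fun T => isPoly_monomial fun h => ?_
  calc (symmDiff S T).card ≤ (S ∪ T).card := card_le_card symmDiff_le_sup
    _ ≤ S.card + T.card := card_union_le S T
    _ ≤ D + D' := add_le_add (ha S (left_ne_zero_of_mul h)) (hb T (right_ne_zero_of_mul h))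

lemma sq (hF : IsPoly D F) : IsPoly (D + D) (fun x => F x ^ 2) := by
  simpa only [pow_two] using hF.mul hF

lemma expect_pow_four_le [DecidableEq ι] (hF : IsPoly D F) :
    expect (unif Bool) (fun x => F x ^ 4) ≤
      9 ^ D * expect (unif Bool) (fun x => F x ^ 2) ^ 2 := by
  obtain ⟨c, hc, hF⟩ := hF
  have hpow4 := expect_polyRV_pow_four_le (isProbWeight_unif Bool) (fun _ => isStandardized_chi) hc
  rw [← expect_polyRV_sq (isProbWeight_unif Bool) (fun _ => isStandardized_chi) c, mul_pow,
    ← pow_mul, mul_comm D, pow_mul] at hpow4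
  norm_num at hpow4
  simpa only [hF, cubeEval] using hpow4

end IsPoly

/-- The constant in the comparison of the `2 ^ (k + 1)`-th moment of a polynomial of degree `D` on
the cube with its second moment. -/
noncomputable def momentConst : ℕ → ℕ → ℝ
  | 0, _ => 1
  | k + 1, D => momentConst k (D + D) * (9 ^ D) ^ 2 ^ k

lemma one_le_momentConst (k D : ℕ) : 1 ≤ momentConst k D := by
  induction k generalizing D with
  | zero => exact le_refl _
  | succ k ih =>
    exact one_le_mul_of_one_le_of_one_le (ih _) (one_le_pow₀ (one_le_pow₀ (by norm_num)))

lemma IsPoly.expect_pow_two_pow_le [DecidableEq ι] (k : ℕ) {D : ℕ} {F : (ι → Bool) → ℝ}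
    (hF : IsPoly D F) :
    expect (unif Bool) (fun x => F x ^ 2 ^ (k + 1)) ≤
      momentConst k D * expect (unif Bool) (fun x => F x ^ 2) ^ 2 ^ k := by
  induction k generalizing D F with
  | zero => simp [momentConst]
  | succ k ih =>
    have hsq := ih hF.sq
    simp only [← pow_mul, ← pow_succ', Nat.reduceMul] at hsq
    refine hsq.trans ?_
    rw [momentConst, mul_assoc]
    refine mul_le_mul_of_nonneg_left ?_ (zero_le_one.trans (one_le_momentConst _ _))
    calc expect (unif Bool) (fun x => F x ^ 4) ^ 2 ^ k
        ≤ (9 ^ D * expect (unif Bool) (fun x => F x ^ 2) ^ 2) ^ 2 ^ k :=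
          pow_le_pow_left₀ ((isProbWeight_unif Bool).expect_nonneg fun x => by positivity)
            hF.expect_pow_four_le _
      _ = (9 ^ D) ^ 2 ^ k * expect (unif Bool) (fun x => F x ^ 2) ^ 2 ^ (k + 1) := by
          rw [mul_pow, ← pow_mul (expect (unif Bool) fun x => F x ^ 2), ← pow_succ']

end PolynomialFunctions

section LargeMean

variable {ι : Type*} [Fintype ι] [DecidableEq ι]

/-- A polynomial that dominates the squared mean of `c` at every point where `c` has a
sign-changing coordinate. -/
noncomputable def flipMajorant (c : Finset ι → ℝ) (x : ι → Bool) : ℝ :=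
  8 * gradSq c x + 2 * cubeEval (centered c) x ^ 2

lemma flipMajorant_nonneg (c : Finset ι → ℝ) (x : ι → Bool) : 0 ≤ flipMajorant c x := by
  have := gradSq_nonneg c x
  unfold flipMajorant
  positivity

lemma sq_mean_le_flipMajorant {c : Finset ι → ℝ} {x : ι → Bool}
    (h : 0 < signFlips (cubeEval c) x) : c ∅ ^ 2 ≤ flipMajorant c x := by
  have hmean : c ∅ = cubeEval c x - cubeEval (centered c) x := by
    rw [cubeEval_eq_add_centered]
    ring
  rw [hmean, flipMajorant]
  nlinarith [sq_cubeEval_le_of_signFlips_pos h,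
    sq_nonneg (cubeEval c x + cubeEval (centered c) x)]

lemma isPoly_flipMajorant {d : ℕ} {c : Finset ι → ℝ} (hc : DegreeLE d c) :
    IsPoly (d + d) (flipMajorant c) :=
  ((IsPoly.sum univ fun i => ((hc.derivVar i).mono (Nat.sub_le d 1)).isPoly.sq).const_mul 8).add
    (hc.centered.isPoly.sq.const_mul 2)

lemma expect_gradSq_sq_le {d : ℕ} {c : Finset ι → ℝ} (hc : DegreeLE d c) :
    expect (unif Bool) (fun x => gradSq c x ^ 2) ≤ 9 ^ d * (d * variance c) ^ 2 := by
  have h := expect_sum_polyRV_sq_sq_le (isProbWeight_unif Bool) (fun _ : ι => isStandardized_chi)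
    univ (fun _ => zero_le_one) fun i => (hc.derivVar i).mono (Nat.sub_le d 1)
  simp only [one_mul] at h
  refine h.trans (mul_le_mul_of_nonneg_left (pow_le_pow_left₀ ?_ (totalInfluence_le hc) 2)
    (by positivity))
  exact sum_nonneg fun i _ => influence_nonneg i c

lemma expect_flipMajorant_sq_le {d : ℕ} {c : Finset ι → ℝ} (hc : DegreeLE d c) :
    expect (unif Bool) (fun x => flipMajorant c x ^ 2) ≤
      9 ^ d * (128 * d ^ 2 + 8) * variance c ^ 2 := by
  have hpow4 : expect (unif Bool) (fun x => cubeEval (centered c) x ^ 4) ≤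
      9 ^ d * variance c ^ 2 := by
    refine hc.centered.isPoly.expect_pow_four_le.trans_eq ?_
    rw [variance,
      ← expect_polyRV_sq (isProbWeight_unif Bool) (fun _ => isStandardized_chi) (centered c)]
    rfl
  calc expect (unif Bool) (fun x => flipMajorant c x ^ 2)
      ≤ expect (unif Bool) fun x => 128 * gradSq c x ^ 2 + 8 * cubeEval (centered c) x ^ 4 := by
        refine (isProbWeight_unif Bool).expect_mono fun x => ?_
        unfold flipMajorant
        nlinarith [sq_nonneg (8 * gradSq c x - 2 * cubeEval (centered c) x ^ 2)]
    _ ≤ 9 ^ d * (128 * d ^ 2 + 8) * variance c ^ 2 := by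
        rw [expect_add, expect_mul_left, expect_mul_left]
        linear_combination 128 * expect_gradSq_sq_le hc + 8 * hpow4

lemma flipTail_mul_le {d : ℕ} {c : Finset ι → ℝ} (hc : DegreeLE d c) {m : ℝ} (hm : 0 < m) :
    flipTail c m * (c ∅ ^ 2) ^ 32 ≤
      momentConst 4 (d + d) * (9 ^ d * (128 * d ^ 2 + 8) * variance c ^ 2) ^ 16 := by
  calc flipTail c m * (c ∅ ^ 2) ^ 32
      ≤ expect (unif Bool) (fun x => flipMajorant c x ^ 32) := by
        rw [mul_comm, flipTail, ← expect_mul_left]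
        refine (isProbWeight_unif Bool).expect_mono fun x => ?_
        by_cases hx : m ≤ signFlips (cubeEval c) x
        · rw [ind_of_true hx, mul_one]
          exact pow_le_pow_left₀ (sq_nonneg _)
            (sq_mean_le_flipMajorant (by exact_mod_cast hm.trans_le hx)) 32
        · rw [ind_of_false hx, mul_zero]
          exact pow_nonneg (flipMajorant_nonneg c x) 32
    _ ≤ momentConst 4 (d + d) * expect (unif Bool) (fun x => flipMajorant c x ^ 2) ^ 16 :=
        (isPoly_flipMajorant hc).expect_pow_two_pow_le 4
    _ ≤ momentConst 4 (d + d) * (9 ^ d * (128 * d ^ 2 + 8) * variance c ^ 2) ^ 16 := by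
        have := one_le_momentConst 4 (d + d)
        gcongr
        · exact (isProbWeight_unif Bool).expect_nonneg fun _ => sq_nonneg _
        · exact expect_flipMajorant_sq_le hc

/-- The constant in the tail bound for polynomials whose mean exceeds their standard deviation. -/
noncomputable def terminalConst (d : ℕ) : ℝ :=
  momentConst 4 (d + d) * (9 ^ d * (128 * d ^ 2 + 8)) ^ 16

lemma one_le_terminalConst (d : ℕ) : 1 ≤ terminalConst d := by
  refine one_le_mul_of_one_le_of_one_le (one_le_momentConst _ _) (one_le_pow₀ ?_)
  refine one_le_mul_of_one_le_of_one_le (one_le_pow₀ (by norm_num)) ?_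
  linarith [show (0 : ℝ) ≤ 128 * d ^ 2 by positivity]

lemma flipTail_le_of_large_mean {d : ℕ} {c : Finset ι → ℝ} (hc : DegreeLE d c) {R m : ℝ}
    (hR : 0 < R) (hmean : R ^ 2 * variance c ≤ c ∅ ^ 2) (hm : 0 < m) :
    flipTail c m ≤ terminalConst d / R ^ 64 := by
  have hconst := one_le_terminalConst d
  rcases (variance_nonneg c).eq_or_lt with hvar | hvar
  · rw [flipTail_eq_zero_of_variance_eq_zero hvar.symm hm]
    positivity
  · rw [le_div_iff₀ (by positivity)]
    refine le_of_mul_le_mul_left ?_ (pow_pos hvar 32)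
    calc variance c ^ 32 * (flipTail c m * R ^ 64)
        = flipTail c m * (R ^ 2 * variance c) ^ 32 := by ring
      _ ≤ flipTail c m * (c ∅ ^ 2) ^ 32 := by
          have := flipTail_nonneg c m
          gcongr
      _ ≤ momentConst 4 (d + d) * (9 ^ d * (128 * d ^ 2 + 8) * variance c ^ 2) ^ 16 :=
          flipTail_mul_le hc hm
      _ = variance c ^ 32 * terminalConst d := by rw [terminalConst]; ring

end LargeMean

section Restriction

variable {ι : Type*}

/-- The point that agrees with `Y` on the live coordinates `L i = true` and with `A` on the
others. -/
def mix {κ : Type*} (L : ι → Bool) (A Y : ι → κ) : ι → κ := fun i => if L i then Y i else A i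

lemma mix_mix {κ : Type*} (L : ι → Bool) (A Y : ι → κ) : mix L (mix L Y A) (mix L A Y) = Y :=
  funext fun i => by cases h : L i <;> simp only [mix, h, Bool.false_eq_true, if_true, if_false]

lemma mix_update_flip [DecidableEq ι] (L A Y : ι → Bool) (i : ι) :
    mix L A (Function.update Y i (!Y i)) =
      if L i then Function.update (mix L A Y) i (!mix L A Y i) else mix L A Y := by
  funext j
  by_cases hj : j = i
  · subst hj
    cases h : L j <;> simp [mix, h]
  · cases h : L i <;> simp [mix, Function.update_of_ne hj]

lemma IsProbWeight.expect_mix {κ : Type*} [Fintype ι] [DecidableEq ι] [Fintype κ] {w : κ → ℝ}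
    (hw : IsProbWeight w) (L : ι → Bool) (F : (ι → κ) → ℝ) :
    expect w (fun A => expect w fun Y => F (mix L A Y)) = expect w F := by
  let swap : (ι → κ) × (ι → κ) → (ι → κ) × (ι → κ) := fun p => (mix L p.2 p.1, mix L p.1 p.2)
  have swap_involutive : Function.Involutive swap := fun p =>
    Prod.ext (mix_mix L p.2 p.1) (mix_mix L p.1 p.2)
  have weight_swap (p : (ι → κ) × (ι → κ)) :
      (∏ i, w ((swap p).1 i)) * ∏ i, w ((swap p).2 i) = (∏ i, w (p.1 i)) * ∏ i, w (p.2 i) := by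
    simp only [← prod_mul_distrib]
    refine prod_congr rfl fun i _ => ?_
    cases h : L i <;> simp [swap, mix, h, mul_comm]
  calc expect w (fun A => expect w fun Y => F (mix L A Y))
      = ∑ p, (∏ i, w ((swap p).1 i)) * (∏ i, w ((swap p).2 i)) * F (swap p).2 := by
        simp only [weight_swap, expect, mul_sum, ← mul_assoc, ← Fintype.sum_prod_type', swap]
    _ = ∑ p : (ι → κ) × (ι → κ), (∏ i, w (p.1 i)) * (∏ i, w (p.2 i)) * F p.2 :=
        Equiv.sum_comp (swap_involutive.toPerm swap)
          (fun p : (ι → κ) × (ι → κ) => (∏ i, w (p.1 i)) * (∏ i, w (p.2 i)) * F p.2)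
    _ = expect w (fun _ : ι → κ => expect w F) := by
        simp only [expect, mul_sum, ← mul_assoc, ← Fintype.sum_prod_type']
    _ = expect w F := hw.expect_const _

lemma filter_live_union_filter_dead [DecidableEq ι] (L : ι → Bool) (S : Finset ι) :
    {i ∈ S | L i = true} ∪ {i ∈ S | L i = false} = S := by
  simpa only [Bool.not_eq_true] using filter_union_filter_not_eq (fun i => L i = true) S

lemma disjoint_filter_live_filter_dead (L : ι → Bool) (S : Finset ι) :
    Disjoint {i ∈ S | L i = true} {i ∈ S | L i = false} := by
  simpa only [Bool.not_eq_true] using disjoint_filter_filter_not S S (fun i => L i = true)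

lemma card_filter_live_insert_update [DecidableEq ι] {S : Finset ι} {i : ι} (hi : i ∉ S)
    (L : ι → Bool) (b : Bool) :
    #{j ∈ insert i S | Function.update L i b j = true} = #{j ∈ S | L j = true} + b.toNat := by
  have hS : {j ∈ S | Function.update L i b j = true} = {j ∈ S | L j = true} :=
    filter_congr fun j hj => by rw [Function.update_of_ne (ne_of_mem_of_not_mem hj hi)]
  cases b <;> simp [filter_insert, hS, hi]

/-- All coordinates in `T` are live and all coordinates in `U` are not. -/
def IsSplit (L : ι → Bool) (T U : Finset ι) : Prop :=
  (∀ i ∈ T, L i = true) ∧ ∀ i ∈ U, L i = false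

lemma sum_filter_live_filter_dead [Fintype ι] (L : ι → Bool) (f : Finset ι → Finset ι → ℝ) :
    ∑ S : Finset ι, f {i ∈ S | L i = true} {i ∈ S | L i = false} =
      ∑ T, ∑ U, if IsSplit L T U then f T U else 0 := by
  rw [← Fintype.sum_prod_type' (f := fun T U : Finset ι => if IsSplit L T U then f T U else 0),
    ← sum_filter]
  refine sum_nbij' (fun S => ({i ∈ S | L i = true}, {i ∈ S | L i = false})) (fun p => p.1 ∪ p.2)
    (fun S _ => mem_filter.2 ⟨mem_univ _, by simp, by simp⟩) (fun p _ => mem_univ _)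
    (fun S _ => filter_live_union_filter_dead L S) ?_ (fun S _ => rfl)
  rintro ⟨T, U⟩ h
  obtain ⟨hT, hU⟩ : IsSplit L T U := (mem_filter.1 h).2
  ext i <;> have hTi := hT i <;> have hUi := hU i <;> simp only [mem_filter, mem_union] <;> grind

variable [DecidableEq ι]

/-- The coefficient of the monomial `T` in the live variables, as a polynomial in the remaining
variables. -/
noncomputable def restrictCoeff (c : Finset ι → ℝ) (L : ι → Bool) (T : Finset ι) :
    Finset ι → ℝ :=
  fun U => if IsSplit L T U then c (T ∪ U) else 0

lemma DegreeLE.restrictCoeff {d : ℕ} {c : Finset ι → ℝ} (hc : DegreeLE d c) (L : ι → Bool)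
    (T : Finset ι) : DegreeLE d (restrictCoeff c L T) := fun U hU =>
  (card_le_card subset_union_right).trans (hc (T ∪ U) (ite_ne_right_iff.1 hU).2)

variable [Fintype ι]

/-- The polynomial in the live variables obtained from `c` by fixing the other variables to `A`. -/
noncomputable def restrict (c : Finset ι → ℝ) (L A : ι → Bool) : Finset ι → ℝ :=
  fun T => cubeEval (restrictCoeff c L T) A

lemma DegreeLE.restrict {d : ℕ} {c : Finset ι → ℝ} (hc : DegreeLE d c) (L A : ι → Bool) :
    DegreeLE d (restrict c L A) := fun T hT => by
  obtain ⟨U, _, hU⟩ := exists_ne_zero_of_sum_ne_zero hT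
  exact (card_le_card subset_union_left).trans
    (hc (T ∪ U) (ite_ne_right_iff.1 (left_ne_zero_of_mul hU)).2)

lemma cubeEval_mix (c : Finset ι → ℝ) (L A Y : ι → Bool) :
    cubeEval c (mix L A Y) = cubeEval (restrict c L A) Y := by
  have hprod (S : Finset ι) : ∏ i ∈ S, chi (mix L A Y i) =
      (∏ i ∈ S with L i = true, chi (Y i)) * ∏ i ∈ S with L i = false, chi (A i) := by
    conv_lhs => rw [← filter_live_union_filter_dead L S,
      prod_union (disjoint_filter_live_filter_dead L S)]
    congr 1 <;> refine prod_congr rfl fun i hi => ?_ <;> simp [mix, (mem_filter.1 hi).2]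
  calc cubeEval c (mix L A Y)
      = ∑ S, (fun T U => c (T ∪ U) * ((∏ i ∈ T, chi (Y i)) * ∏ i ∈ U, chi (A i)))
          {i ∈ S | L i = true} {i ∈ S | L i = false} := by
        simp only [filter_live_union_filter_dead, cubeEval, polyRV, mlEval, hprod]
    _ = cubeEval (restrict c L A) Y := by
        refine (sum_filter_live_filter_dead L fun T U =>
          c (T ∪ U) * ((∏ i ∈ T, chi (Y i)) * ∏ i ∈ U, chi (A i))).trans ?_
        simp only [restrict, cubeEval, polyRV, mlEval, sum_mul]
        refine sum_congr rfl fun T _ => sum_congr rfl fun U _ => ?_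
        unfold restrictCoeff
        split_ifs <;> ring

lemma sum_mul_sqNorm_restrictCoeff (c : Finset ι → ℝ) (L : ι → Bool) (h : Finset ι → ℝ) :
    ∑ T, h T * sqNorm (restrictCoeff c L T) =
      weightedSq (fun S => h {i ∈ S | L i = true}) c := by
  have hsplit := sum_filter_live_filter_dead L fun T U => h T * c (T ∪ U) ^ 2
  simp only [filter_live_union_filter_dead] at hsplit
  rw [weightedSq, hsplit]
  simp only [sqNorm, mul_sum]
  refine sum_congr rfl fun T _ => sum_congr rfl fun U _ => ?_
  unfold restrictCoeff
  split_ifs <;> simp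

lemma expect_weightedSq_restrict (c : Finset ι → ℝ) (L : ι → Bool) (h : Finset ι → ℝ) :
    expect (unif Bool) (fun A => weightedSq h (restrict c L A)) =
      weightedSq (fun S => h {i ∈ S | L i = true}) c := by
  rw [← sum_mul_sqNorm_restrictCoeff]
  simp only [weightedSq, expect_sum, expect_mul_left]
  exact sum_congr rfl fun T _ => congrArg _
    (expect_polyRV_sq (isProbWeight_unif Bool) (fun _ => isStandardized_chi) _)

lemma expect_weightedSq_restrict_sq_le {d : ℕ} {c : Finset ι → ℝ} (hc : DegreeLE d c)
    (L : ι → Bool) {h : Finset ι → ℝ} (hh : ∀ S, 0 ≤ h S) :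
    expect (unif Bool) (fun A => weightedSq h (restrict c L A) ^ 2) ≤
      9 ^ d * weightedSq (fun S => h {i ∈ S | L i = true}) c ^ 2 := by
  rw [← sum_mul_sqNorm_restrictCoeff]
  exact expect_sum_polyRV_sq_sq_le (isProbWeight_unif Bool) (fun _ => isStandardized_chi) univ hh
    fun T => hc.restrictCoeff L T

lemma flipSet_restrict (c : Finset ι → ℝ) (L A Y : ι → Bool) :
    flipSet (cubeEval (restrict c L A)) Y =
      {i ∈ flipSet (cubeEval c) (mix L A Y) | L i = true} := by
  ext i
  simp only [flipSet, mem_filter, mem_univ, true_and, ← cubeEval_mix, mix_update_flip]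
  cases L i
  · simpa using mul_self_nonneg (cubeEval c (mix L A Y))
  · simp

lemma expect_flipTail_restrict (c : Finset ι → ℝ) (L : ι → Bool) (m : ℝ) :
    expect (unif Bool) (fun A => flipTail (restrict c L A) m) =
      expect (unif Bool) (fun x => ind (m ≤ #{i ∈ flipSet (cubeEval c) x | L i = true})) := by
  conv_rhs => rw [← (isProbWeight_unif Bool).expect_mix L]
  simp only [flipTail, signFlips, flipSet_restrict]

lemma flipTail_le_expect_flipTail_restrict (c : Finset ι → ℝ) (L : ι → Bool) (m : ℝ) {k : ℝ}
    (hk : #{i | L i = false} ≤ k) :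
    flipTail c m ≤ expect (unif Bool) (fun A => flipTail (restrict c L A) (m - k)) := by
  rw [expect_flipTail_restrict]
  refine (isProbWeight_unif Bool).expect_mono fun x => ind_mono fun h => ?_
  have hcard : signFlips (cubeEval c) x ≤
      #{i ∈ flipSet (cubeEval c) x | L i = true} + #{i | L i = false} := by
    rw [signFlips]
    conv_lhs => rw [← filter_live_union_filter_dead L (flipSet (cubeEval c) x)]
    exact (card_union_le _ _).trans (Nat.add_le_add_left (card_le_card
      (filter_subset_filter _ (subset_univ _))) _)
  have hcard' : (signFlips (cubeEval c) x : ℝ) ≤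
      #{i ∈ flipSet (cubeEval c) x | L i = true} + #{i | L i = false} := by exact_mod_cast hcard
  linarith

end Restriction

section RandomRestriction

variable {ι : Type*} [Fintype ι] [DecidableEq ι]

/-- The weight on `Bool` that gives probability `η` to `true`. -/
noncomputable def bernoulli (η : ℝ) : Bool → ℝ := fun b => if b then η else 1 - η

variable {η : ℝ}

lemma isProbWeight_bernoulli (h0 : 0 ≤ η) (h1 : η ≤ 1) : IsProbWeight (bernoulli η) where
  nonneg b := by cases b <;> simp [bernoulli, h0, h1]
  sum_eq_one := by simp [bernoulli]

lemma expect_sq_card_live_sub_le (h0 : 0 ≤ η) (h1 : η ≤ 1) (S : Finset ι) :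
    expect (bernoulli η) (fun L => (#{i ∈ S | L i = true} - η * #S) ^ 2) ≤ η * #S := by
  have hw := isProbWeight_bernoulli h0 h1
  induction S using Finset.induction with
  | empty => simp [hw.expect_const]
  | insert i S hi ih =>
    have hstep (L : ι → Bool) : ∑ b, bernoulli η b *
          (#{j ∈ insert i S | Function.update L i b j = true} - η * #(insert i S)) ^ 2 =
        (#{j ∈ S | L j = true} - η * #S) ^ 2 + η * (1 - η) := by
      simp only [card_filter_live_insert_update hi, card_insert_of_notMem hi, Fintype.sum_bool,
        bernoulli, Bool.toNat_true, Bool.toNat_false, Bool.false_eq_true, if_true, if_false]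
      push_cast
      ring
    rw [hw.expect_update i]
    simp only [hstep]
    rw [expect_add, hw.expect_const, card_insert_of_notMem hi]
    push_cast
    nlinarith

lemma half_le_expect_ind_card_live (h0 : 0 ≤ η) (h1 : η ≤ 1) {S : Finset ι} {m : ℝ}
    (hm : 8 ≤ η * m) (hS : m ≤ #S) :
    1 / 2 ≤ expect (bernoulli η) (fun L => ind (η * m / 2 ≤ #{i ∈ S | L i = true})) := by
  have hw := isProbWeight_bernoulli h0 h1
  have hvar := expect_sq_card_live_sub_le h0 h1 S
  set s : ℝ := η * #S
  have hms : η * m ≤ s := mul_le_mul_of_nonneg_left hS h0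
  have hs : 0 < s := by linarith
  have chebyshev (L : ι → Bool) : 1 - ind (η * m / 2 ≤ #{i ∈ S | L i = true}) ≤
      4 / s ^ 2 * (#{i ∈ S | L i = true} - s) ^ 2 := by
    by_cases h : η * m / 2 ≤ #{i ∈ S | L i = true}
    · rw [ind_of_true h, sub_self]
      positivity
    · rw [ind_of_false h, div_mul_eq_mul_div, le_div_iff₀ (by positivity)]
      nlinarith
  have hexpect := hw.expect_mono chebyshev
  rw [expect_sub, hw.expect_const, expect_mul_left] at hexpect
  have hsmall : 4 / s ^ 2 * expect (bernoulli η) (fun L => (#{i ∈ S | L i = true} - s) ^ 2) ≤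
      1 / 2 := by
    refine (mul_le_mul_of_nonneg_left hvar (by positivity)).trans ?_
    rw [pow_two, div_mul_eq_mul_div, mul_div_mul_right _ _ hs.ne', div_le_iff₀ hs]
    linarith
  linarith

lemma flipTail_le_two_mul_expect (h0 : 0 ≤ η) (h1 : η ≤ 1) (c : Finset ι → ℝ) {m : ℝ}
    (hm : 8 ≤ η * m) :
    flipTail c m ≤ 2 * expect (bernoulli η) (fun L =>
      expect (unif Bool) fun A => flipTail (restrict c L A) (η * m / 2)) := by
  simp only [expect_flipTail_restrict]
  rw [expect_expect_comm, ← expect_mul_left]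
  refine (isProbWeight_unif Bool).expect_mono fun x => ?_
  by_cases h : m ≤ signFlips (cubeEval c) x
  · rw [ind_of_true h]
    linarith [half_le_expect_ind_card_live h0 h1 hm h]
  · rw [ind_of_false h]
    exact mul_nonneg two_pos.le
      ((isProbWeight_bernoulli h0 h1).expect_nonneg fun _ => ind_nonneg _)

end RandomRestriction

section TailProfile

/-- A numerator `Φ` for tail bounds of the form `flipTail c m ≤ Φ m / √m`. -/
structure IsTailProfile (Φ : ℝ → ℝ) : Prop where
  one_le : ∀ m, 1 ≤ m → 1 ≤ Φ m
  monotoneOn : MonotoneOn Φ (Set.Ici 1)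

/-- The bound `flipTail c m ≤ Φ m / √m` for all polynomials of degree at most `d` in the variables
`ι` and all `m ≤ M`. This is the induction hypothesis in the proof of the theorem. -/
def TailBoundUpTo (ι : Type*) [Fintype ι] [DecidableEq ι] (d : ℕ) (Φ : ℝ → ℝ) (M : ℝ) : Prop :=
  ∀ m, 1 ≤ m → m ≤ M → ∀ c : Finset ι → ℝ, DegreeLE d c → flipTail c m ≤ Φ m / √m

namespace IsTailProfile

variable {Φ : ℝ → ℝ} {m m' a : ℝ}

lemma div_sqrt_nonneg (hΦ : IsTailProfile Φ) (hm : 1 ≤ m) : 0 ≤ Φ m / √m :=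
  div_nonneg (zero_le_one.trans (hΦ.one_le m hm)) (Real.sqrt_nonneg m)

lemma div_sqrt_le (hΦ : IsTailProfile Φ) (hm' : 1 ≤ m') (hle : m' ≤ m) (ha : 0 ≤ a)
    (hsq : m ≤ a ^ 2 * m') : Φ m' / √m' ≤ a * (Φ m / √m) := by
  have hsqrt : √m ≤ a * √m' := by
    rw [Real.sqrt_le_left (by positivity), mul_pow, Real.sq_sqrt (by linarith)]
    exact hsq
  have hmono := hΦ.monotoneOn hm' (hm'.trans hle) hle
  rw [← mul_div_assoc, div_le_div_iff₀ (Real.sqrt_pos.2 (by linarith))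
    (Real.sqrt_pos.2 (by linarith))]
  calc Φ m' * √m ≤ Φ m * (a * √m') :=
        mul_le_mul hmono hsqrt (Real.sqrt_nonneg m)
          (zero_le_one.trans (hΦ.one_le m (hm'.trans hle)))
    _ = a * Φ m * √m' := by ring

end IsTailProfile

end TailProfile

section DecayInMean

variable {ι : Type*} [Fintype ι] [DecidableEq ι]

lemma expect_card_live {η : ℝ} (h0 : 0 ≤ η) (h1 : η ≤ 1) (S : Finset ι) :
    expect (bernoulli η) (fun L => (#{i ∈ S | L i = true} : ℝ)) = η * #S := by
  have hw := isProbWeight_bernoulli h0 h1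
  have hlive (i : ι) : expect (bernoulli η) (fun L => if L i = true then (1 : ℝ) else 0) = η := by
    rw [hw.expect_update i]
    simp [bernoulli, hw.expect_const]
  simp only [← sum_boole, expect_sum, hlive, sum_const, nsmul_eq_mul, mul_comm η]

lemma expect_totalInfluence_restrict {η : ℝ} (h0 : 0 ≤ η) (h1 : η ≤ 1) (c : Finset ι → ℝ) :
    expect (bernoulli η) (fun L => expect (unif Bool) fun A => totalInfluence (restrict c L A)) =
      η * totalInfluence c := by
  simp only [totalInfluence_eq_weightedSq, expect_weightedSq_restrict]
  simp only [weightedSq, expect_sum, mul_sum, mul_comm _ (c _ ^ 2), expect_mul_left,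
    expect_card_live h0 h1]
  exact sum_congr rfl fun S _ => by ring

/-- The fluctuation of the mean of `c` under the restriction to the coordinates in `L`. -/
noncomputable def meanShift (c : Finset ι → ℝ) (L A : ι → Bool) : ℝ :=
  cubeEval (centered (restrictCoeff c L ∅)) A

lemma restrict_empty (c : Finset ι → ℝ) (L A : ι → Bool) :
    restrict c L A ∅ = c ∅ + meanShift c L A := by
  rw [restrict, cubeEval_eq_add_centered, meanShift]
  simp [restrictCoeff, IsSplit]

lemma variance_restrictCoeff_le (c : Finset ι → ℝ) (L : ι → Bool) :
    variance (restrictCoeff c L ∅) ≤ variance c := by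
  simp only [variance_eq_weightedSq, weightedSq]
  refine sum_le_sum fun S _ => mul_le_mul_of_nonneg_left ?_ (by split_ifs <;> norm_num)
  unfold restrictCoeff
  split_ifs
  · rw [empty_union]
  · simpa using sq_nonneg (c S)

lemma expect_meanShift_pow_le {d : ℕ} {c : Finset ι → ℝ} (hc : DegreeLE d c) (L : ι → Bool) :
    expect (unif Bool) (fun A => meanShift c L A ^ 16) ≤ momentConst 3 d * variance c ^ 8 := by
  have hmoment := (hc.restrictCoeff L ∅).centered.isPoly.expect_pow_two_pow_le 3
  have hsq : expect (unif Bool) (fun A => cubeEval (centered (restrictCoeff c L ∅)) A ^ 2) =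
      variance (restrictCoeff c L ∅) :=
    expect_polyRV_sq (isProbWeight_unif Bool) (fun _ => isStandardized_chi) _
  rw [hsq] at hmoment
  refine hmoment.trans (mul_le_mul_of_nonneg_left ?_ (zero_le_one.trans (one_le_momentConst 3 d)))
  exact pow_le_pow_left₀ (variance_nonneg _) (variance_restrictCoeff_le c L) 8

lemma sq_mean_div_four_le_of_meanShift_sq_lt {c : Finset ι → ℝ} {L A : ι → Bool}
    (h : meanShift c L A ^ 2 < c ∅ ^ 2 / 4) : c ∅ ^ 2 / 4 ≤ restrict c L A ∅ ^ 2 := by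
  have hhalf : |meanShift c L A| < |c ∅ / 2| := sq_lt_sq.1 (by linarith [div_pow (c ∅) 2 2])
  have hle : |c ∅ / 2| ≤ |restrict c L A ∅| := by
    rw [restrict_empty]
    have := abs_sub_abs_le_abs_add (c ∅) (meanShift c L A)
    rw [abs_div, abs_two] at hhalf ⊢
    linarith
  linarith [sq_le_sq.2 hle, div_pow (c ∅) 2 2]

/-- A quantity that is at least `1` whenever restricting `c` fails to improve the ratio of mean to
standard deviation from `R` to `R ^ 4`. -/
noncomputable def restrictionPenalty (c : Finset ι → ℝ) (R : ℝ) (L A : ι → Bool) : ℝ :=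
  (4 / (R ^ 2 * variance c)) ^ 8 * meanShift c L A ^ 16 +
    4 * R ^ 6 / variance c * totalInfluence (restrict c L A)

variable {c : Finset ι → ℝ} {R : ℝ}

lemma restrictionPenalty_nonneg (c : Finset ι → ℝ) (R : ℝ) (L A : ι → Bool) :
    0 ≤ restrictionPenalty c R L A := by
  have hvar := variance_nonneg c
  have hinf := (variance_nonneg _).trans (variance_le_totalInfluence (restrict c L A))
  unfold restrictionPenalty
  positivity

lemma one_le_restrictionPenalty_or (hR : 0 < R) (hvar : 0 < variance c)
    (hmean : R ^ 2 * variance c ≤ c ∅ ^ 2) (L A : ι → Bool) :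
    1 ≤ restrictionPenalty c R L A ∨
      (R ^ 4) ^ 2 * variance (restrict c L A) ≤ restrict c L A ∅ ^ 2 := by
  have hinf := variance_le_totalInfluence (restrict c L A)
  have hinf_nonneg := (variance_nonneg _).trans hinf
  by_cases hshift : R ^ 2 * variance c / 4 ≤ meanShift c L A ^ 2
  · refine Or.inl (le_add_of_le_of_nonneg ?_ (by positivity))
    have : (4 / (R ^ 2 * variance c)) ^ 8 * meanShift c L A ^ 16 =
        (4 / (R ^ 2 * variance c) * meanShift c L A ^ 2) ^ 8 := by ring
    rw [this]
    refine one_le_pow₀ ?_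
    rw [div_mul_eq_mul_div, le_div_iff₀ (by positivity)]
    linarith
  by_cases hsmall : variance c ≤ 4 * R ^ 6 * totalInfluence (restrict c L A)
  · refine Or.inl (le_add_of_nonneg_of_le ?_ ?_)
    · exact mul_nonneg (by positivity) (Even.pow_nonneg (by decide) _)
    · rw [div_mul_eq_mul_div, le_div_iff₀ hvar]
      linarith
  push Not at hshift hsmall
  refine Or.inr ?_
  calc (R ^ 4) ^ 2 * variance (restrict c L A)
      ≤ (R ^ 4) ^ 2 * totalInfluence (restrict c L A) := by gcongr
    _ = R ^ 2 * (4 * R ^ 6 * totalInfluence (restrict c L A)) / 4 := by ring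
    _ ≤ R ^ 2 * variance c / 4 := by gcongr
    _ ≤ c ∅ ^ 2 / 4 := by gcongr
    _ ≤ restrict c L A ∅ ^ 2 := sq_mean_div_four_le_of_meanShift_sq_lt (by linarith)

lemma expect_restrictionPenalty_le {d : ℕ} (hc : DegreeLE d c) (hR : 1 ≤ R)
    (hvar : 0 < variance c) :
    expect (bernoulli (1 / R ^ 22)) (fun L => expect (unif Bool) (restrictionPenalty c R L)) ≤
      (momentConst 3 d * 4 ^ 8 + 4 * d) / R ^ 16 := by
  have hη0 : 0 ≤ 1 / R ^ 22 := by positivity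
  have hη1 : 1 / R ^ 22 ≤ 1 := (div_le_one (by positivity)).2 (one_le_pow₀ hR)
  have hshift := (isProbWeight_bernoulli hη0 hη1).expect_mono fun L =>
    expect_meanShift_pow_le hc L
  rw [(isProbWeight_bernoulli hη0 hη1).expect_const] at hshift
  unfold restrictionPenalty
  simp only [expect_add, expect_mul_left,
    expect_totalInfluence_restrict hη0 hη1]
  calc _ ≤ (4 / (R ^ 2 * variance c)) ^ 8 * (momentConst 3 d * variance c ^ 8) +
        4 * R ^ 6 / variance c * (1 / R ^ 22 * (d * variance c)) := by
        gcongr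
        exact totalInfluence_le hc
    _ = (momentConst 3 d * 4 ^ 8 + 4 * d) / R ^ 16 := by
        field_simp

/-- The constant in the tail bound that decays with the ratio of mean to standard deviation. -/
noncomputable def decayConst (d : ℕ) : ℝ := terminalConst d + momentConst 3 d * 4 ^ 8 + 4 * d

lemma one_le_decayConst (d : ℕ) : 1 ≤ decayConst d := by
  have := one_le_terminalConst d
  have := one_le_momentConst 3 d
  unfold decayConst
  linarith [show (0 : ℝ) ≤ 4 * d by positivity]

lemma flipTail_le_of_le_pow {d : ℕ} {m : ℝ} {Φ : ℝ → ℝ} (hΦ : IsTailProfile Φ)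
    (hc : DegreeLE d c) (hR : 1 ≤ R) (hmean : R ^ 2 * variance c ≤ c ∅ ^ 2) (hm : 1 ≤ m)
    (hmR : m ≤ R ^ 100) : flipTail c m ≤ decayConst d / R ^ 4 * (Φ m / √m) := by
  have hmoment := one_le_momentConst 3 d
  have hdecay := one_le_decayConst d
  have hsqrt : √m ≤ R ^ 50 := by
    rw [Real.sqrt_le_left (by positivity), ← pow_mul]
    exact hmR
  calc flipTail c m ≤ terminalConst d / R ^ 64 :=
        flipTail_le_of_large_mean hc (by linarith) hmean (by linarith)
    _ ≤ decayConst d / (R ^ 4 * √m) := by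
        refine div_le_div₀ (by linarith) ?_ (by positivity) ?_
        · unfold decayConst
          linarith [show (0 : ℝ) ≤ 4 * d by positivity]
        · calc R ^ 4 * √m ≤ R ^ 4 * R ^ 50 := by gcongr
            _ = R ^ 54 := by ring
            _ ≤ R ^ 64 := pow_le_pow_right₀ hR (by norm_num)
    _ = decayConst d / R ^ 4 * (1 / √m) := by rw [div_mul_div_comm, mul_one]
    _ ≤ decayConst d / R ^ 4 * (Φ m / √m) := by
        gcongr
        exact hΦ.one_le m hm

lemma four_mul_pow_mul_decay_le (d : ℕ) (hR : 8 ≤ R) :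
    4 * R ^ 11 * (decayConst d / R ^ 16 + (momentConst 3 d * 4 ^ 8 + 4 * d) / R ^ 16) ≤
      decayConst d / R ^ 4 := by
  have hdecay := one_le_decayConst d
  have hterm := one_le_terminalConst d
  have hcollect :
      4 * R ^ 11 * (decayConst d / R ^ 16 + (momentConst 3 d * 4 ^ 8 + 4 * d) / R ^ 16) =
        4 * (2 * decayConst d - terminalConst d) / R ^ 5 := by
    unfold decayConst
    field_simp
    ring
  rw [hcollect, div_le_div_iff₀ (by positivity) (by positivity)]
  calc 4 * (2 * decayConst d - terminalConst d) * R ^ 4 ≤ decayConst d * R * R ^ 4 :=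
        mul_le_mul_of_nonneg_right (by nlinarith) (by positivity)
    _ = decayConst d * R ^ 5 := by ring

lemma flipTail_le_of_restrict {d : ℕ} {m X : ℝ} (hc : DegreeLE d c) (hR : 8 ≤ R)
    (hmean : R ^ 2 * variance c ≤ c ∅ ^ 2) (hm : R ^ 100 ≤ m)
    (hX : ∀ b : Finset ι → ℝ, DegreeLE d b → flipTail b (1 / R ^ 22 * m / 2) ≤ X)
    (hlarge : ∀ b : Finset ι → ℝ, DegreeLE d b → (R ^ 4) ^ 2 * variance b ≤ b ∅ ^ 2 →
      flipTail b (1 / R ^ 22 * m / 2) ≤ decayConst d / R ^ 16 * X) :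
    flipTail c m ≤
      2 * (X * (decayConst d / R ^ 16 + (momentConst 3 d * 4 ^ 8 + 4 * d) / R ^ 16)) := by
  have hX0 : 0 ≤ X := (flipTail_nonneg c _).trans (hX c hc)
  have hdecay := one_le_decayConst d
  have hmoment := one_le_momentConst 3 d
  rcases (variance_nonneg c).eq_or_lt with hvar | hvar
  · rw [flipTail_eq_zero_of_variance_eq_zero hvar.symm (lt_of_lt_of_le (by positivity) hm)]
    positivity
  have hη0 : 0 ≤ 1 / R ^ 22 := by positivity
  have hη1 : 1 / R ^ 22 ≤ 1 := (div_le_one (by positivity)).2 (one_le_pow₀ (by linarith))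
  have hηm : 8 ≤ 1 / R ^ 22 * m := by
    rw [one_div, inv_mul_eq_div, le_div_iff₀ (by positivity)]
    calc 8 * R ^ 22 ≤ R * R ^ 22 := by gcongr
      _ = R ^ 23 := by ring
      _ ≤ R ^ 100 := pow_le_pow_right₀ (by linarith) (by norm_num)
      _ ≤ m := hm
  have hw := isProbWeight_bernoulli hη0 hη1
  have hpointwise (L A : ι → Bool) : flipTail (restrict c L A) (1 / R ^ 22 * m / 2) ≤
      X * (decayConst d / R ^ 16 + restrictionPenalty c R L A) := by
    have hpenalty := restrictionPenalty_nonneg c R L A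
    rcases one_le_restrictionPenalty_or (by linarith) hvar hmean L A with hbad | hgood
    · refine (hX _ (hc.restrict L A)).trans (le_mul_of_one_le_right hX0 ?_)
      exact le_add_of_nonneg_of_le (by positivity) hbad
    · refine (hlarge _ (hc.restrict L A) hgood).trans ?_
      rw [mul_comm]
      exact mul_le_mul_of_nonneg_left (le_add_of_nonneg_right hpenalty) hX0
  refine (flipTail_le_two_mul_expect hη0 hη1 c hηm).trans (mul_le_mul_of_nonneg_left ?_ two_pos.le)
  refine (hw.expect_mono fun L => (isProbWeight_unif Bool).expect_mono (hpointwise L)).trans ?_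
  simp only [expect_mul_left, expect_add, hw.expect_const, (isProbWeight_unif Bool).expect_const]
  have hexpect := expect_restrictionPenalty_le hc (show 1 ≤ R by linarith) hvar
  gcongr

lemma TailBoundUpTo.flipTail_le_of_mean {d : ℕ} {Φ : ℝ → ℝ} {M : ℝ} (hΦ : IsTailProfile Φ)
    (hM : TailBoundUpTo ι d Φ M) {m : ℝ} (hm : 1 ≤ m) (hmM : m ≤ M) (hc : DegreeLE d c)
    (hR : 8 ≤ R) (hmean : R ^ 2 * variance c ≤ c ∅ ^ 2) :
    flipTail c m ≤ decayConst d / R ^ 4 * (Φ m / √m) := by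
  obtain ⟨k, hk⟩ := pow_unbounded_of_one_lt m one_lt_two
  replace hk := hk.le
  induction k generalizing m R c with
  | zero =>
    refine flipTail_le_of_le_pow hΦ hc (by linarith) hmean hm (hk.trans ?_)
    rw [pow_zero]
    exact one_le_pow₀ (by linarith)
  | succ k ih =>
    rcases le_total m (R ^ 100) with hmR | hmR
    · exact flipTail_le_of_le_pow hΦ hc (by linarith) hmean hm hmR
    set m' := 1 / R ^ 22 * m / 2 with hm'
    have hm'm : m' ≤ m / 2 := by
      rw [hm', one_div, inv_mul_eq_div]
      gcongr
      exact div_le_self (by linarith) (one_le_pow₀ (by linarith))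
    have hm'1 : 1 ≤ m' := by
      rw [hm', le_div_iff₀ two_pos, one_div, inv_mul_eq_div, le_div_iff₀ (by positivity)]
      calc 1 * 2 * R ^ 22 ≤ R * R ^ 22 := by gcongr; linarith
        _ = R ^ 23 := by ring
        _ ≤ R ^ 100 := pow_le_pow_right₀ (by linarith) (by norm_num)
        _ ≤ m := hmR
    have hstep := flipTail_le_of_restrict (X := Φ m' / √m') hc hR hmean hmR
      (fun b hb => hM m' hm'1 (by linarith) b hb) fun b hb hmean' => by
        have := ih hm'1 (by linarith) hb (hR.trans (le_self_pow₀ (by linarith) (by norm_num)))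
          hmean' (by rw [pow_succ] at hk; linarith)
        rwa [← pow_mul] at this
    have hprofile : Φ m' / √m' ≤ 2 * R ^ 11 * (Φ m / √m) := by
      refine hΦ.div_sqrt_le hm'1 (by linarith) (by positivity) ?_
      have : (2 * R ^ 11) ^ 2 * m' = 2 * m := by rw [hm']; field_simp
      linarith
    have hdecay := one_le_decayConst d
    have hmoment := one_le_momentConst 3 d
    calc flipTail c m ≤ _ := hstep
      _ ≤ 2 * (2 * R ^ 11 * (Φ m / √m) *
            (decayConst d / R ^ 16 + (momentConst 3 d * 4 ^ 8 + 4 * d) / R ^ 16)) := by gcongr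
      _ = 4 * R ^ 11 * (decayConst d / R ^ 16 + (momentConst 3 d * 4 ^ 8 + 4 * d) / R ^ 16) *
            (Φ m / √m) := by ring
      _ ≤ decayConst d / R ^ 4 * (Φ m / √m) :=
          mul_le_mul_of_nonneg_right (four_mul_pow_mul_decay_le d hR) (hΦ.div_sqrt_nonneg hm)

/-- The fraction of the second moment of the polynomial `c` that is due to its variance. -/
noncomputable def relVariance (c : Finset ι → ℝ) : ℝ := variance c / sqNorm c

lemma TailBoundUpTo.flipTail_le {d : ℕ} {Φ : ℝ → ℝ} {M : ℝ} (hΦ : IsTailProfile Φ)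
    (hM : TailBoundUpTo ι d Φ M) {m : ℝ} (hm : 1 ≤ m) (hmM : m ≤ M) (hc : DegreeLE d c) :
    flipTail c m ≤ 65 * decayConst d * relVariance c * (Φ m / √m) := by
  have hdecay := one_le_decayConst d
  have hprofile := hΦ.div_sqrt_nonneg hm
  rw [relVariance, sqNorm_eq_sq_add_variance]
  rcases (variance_nonneg c).eq_or_lt with hvar | hvar
  · rw [flipTail_eq_zero_of_variance_eq_zero hvar.symm (by linarith), ← hvar]
    simp
  have hs : 0 < c ∅ ^ 2 + variance c := by positivity
  rcases le_or_gt (8 ^ 2 * variance c) (c ∅ ^ 2) with hmean | hmean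
  · set R := √(c ∅ ^ 2 / variance c)
    have hR2 : R ^ 2 = c ∅ ^ 2 / variance c := Real.sq_sqrt (by positivity)
    have hR8 : 8 ≤ R := Real.le_sqrt_of_sq_le ((le_div_iff₀ hvar).2 hmean)
    have hR_mean : R ^ 2 * variance c ≤ c ∅ ^ 2 := by rw [hR2, div_mul_cancel₀ _ hvar.ne']
    refine (hM.flipTail_le_of_mean hΦ hm hmM hc hR8 hR_mean).trans
      (mul_le_mul_of_nonneg_right ?_ hprofile)
    calc decayConst d / R ^ 4 ≤ decayConst d / R ^ 2 :=
          div_le_div_of_nonneg_left (by linarith) (by positivity)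
            (pow_le_pow_right₀ (by linarith) (by norm_num))
      _ ≤ 65 * decayConst d * (variance c / (c ∅ ^ 2 + variance c)) := by
          have : 0 < decayConst d * variance c := by positivity
          rw [hR2, div_div_eq_mul_div, ← mul_div_assoc, div_le_div_iff₀ (by nlinarith) hs]
          nlinarith
  · refine (hM m hm hmM c hc).trans (le_mul_of_one_le_left hprofile ?_)
    rw [← mul_div_assoc, le_div_iff₀ hs]
    nlinarith

end DecayInMean

section RegularityDichotomy

variable {ι : Type*} [Fintype ι] [DecidableEq ι]

/-- No variable dominates the variance of the polynomial `c`: its influences are `τ`-small in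
`ℓ²`. -/
def IsRegular (τ : ℝ) (c : Finset ι → ℝ) : Prop :=
  ∑ i, influence i c ^ 2 ≤ τ * variance c ^ 2

/-- The mean of the polynomial `c` dominates its standard deviation. -/
def IsSkewed (κ : ℝ) (c : Finset ι → ℝ) : Prop := variance c ≤ κ * c ∅ ^ 2

/-- The total influence of the live coordinates on the polynomial `c`. -/
noncomputable def liveInfluence (c : Finset ι → ℝ) (L : ι → Bool) : ℝ :=
  ∑ i with L i = true, influence i c

lemma liveInfluence_nonneg (c : Finset ι → ℝ) (L : ι → Bool) : 0 ≤ liveInfluence c L :=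
  sum_nonneg fun i _ => influence_nonneg i c

lemma liveInfluence_eq_weightedSq (c : Finset ι → ℝ) (L : ι → Bool) :
    liveInfluence c L = weightedSq (fun S => #{i ∈ S | L i = true}) c := by
  simp only [liveInfluence, influence_eq_weightedSq, weightedSq]
  rw [sum_comm]
  refine sum_congr rfl fun S _ => ?_
  rw [← sum_mul, sum_boole, filter_filter]
  congr 3
  ext i
  simp [and_comm]

lemma liveInfluence_update_false (c : Finset ι → ℝ) {L : ι → Bool} {i : ι} (hi : L i = true) :
    liveInfluence c (Function.update L i false) = liveInfluence c L - influence i c := by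
  have hfilter : ({j | Function.update L i false j = true} : Finset ι) =
      ({j | L j = true} : Finset ι).erase i := by
    ext j
    by_cases hj : j = i <;> simp [Function.update_apply, hj]
  rw [liveInfluence, hfilter, sum_erase_eq_sub (by simpa using hi), liveInfluence]

lemma card_dead_update_false_le (L : ι → Bool) (i : ι) :
    #{j | Function.update L i false j = false} ≤ #{j | L j = false} + 1 := by
  refine (card_le_card fun j hj => ?_).trans (card_insert_le i {j | L j = false})
  by_cases hji : j = i
  · simp [hji]
  · simpa [Function.update_of_ne hji, hji] using hj

lemma exists_restriction_small_influences_or_small_liveInfluence (c : Finset ι → ℝ) {τ : ℝ}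
    (h1 : τ ≤ 1) (k : ℕ) :
    ∃ L : ι → Bool, #{i | L i = false} ≤ k ∧
      ((∀ i, L i = true → influence i c ≤ τ * liveInfluence c L) ∨
        liveInfluence c L ≤ (1 - τ) ^ k * totalInfluence c) := by
  induction k with
  | zero => exact ⟨fun _ => true, by simp, Or.inr (by simp [liveInfluence, totalInfluence])⟩
  | succ k ih =>
    obtain ⟨L, hL, h⟩ := ih
    by_cases hsmall : ∀ i, L i = true → influence i c ≤ τ * liveInfluence c L
    · exact ⟨L, hL.trans (Nat.le_succ k), Or.inl hsmall⟩
    · have hle := h.resolve_left hsmall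
      push Not at hsmall
      obtain ⟨i, hi, hic⟩ := hsmall
      refine ⟨Function.update L i false, (card_dead_update_false_le L i).trans (by lia),
        Or.inr ?_⟩
      rw [liveInfluence_update_false c hi, pow_succ']
      nlinarith [mul_le_mul_of_nonneg_left hle (sub_nonneg.2 h1)]

variable {d : ℕ} {c : Finset ι → ℝ} {L : ι → Bool} {τ : ℝ}

lemma expect_totalInfluence_restrict_unif (c : Finset ι → ℝ) (L : ι → Bool) :
    expect (unif Bool) (fun A => totalInfluence (restrict c L A)) = liveInfluence c L := by
  simp only [totalInfluence_eq_weightedSq, expect_weightedSq_restrict, liveInfluence_eq_weightedSq]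

lemma expect_totalInfluence_restrict_sq_le (hc : DegreeLE d c) (L : ι → Bool) :
    expect (unif Bool) (fun A => totalInfluence (restrict c L A) ^ 2) ≤
      9 ^ d * liveInfluence c L ^ 2 := by
  simp only [totalInfluence_eq_weightedSq, liveInfluence_eq_weightedSq]
  exact expect_weightedSq_restrict_sq_le hc L fun S => Nat.cast_nonneg #S

lemma expect_influence_restrict_sq_le (hc : DegreeLE d c) (i : ι) :
    expect (unif Bool) (fun A => influence i (restrict c L A) ^ 2) ≤
      if L i = true then 9 ^ d * influence i c ^ 2 else 0 := by
  simp only [influence_eq_weightedSq]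
  refine (expect_weightedSq_restrict_sq_le hc L (h := fun S => if i ∈ S then 1 else 0)
    fun S => by split_ifs <;> norm_num).trans_eq ?_
  split_ifs with hi <;> simp [weightedSq, hi]

lemma expect_sum_sq_influence_restrict_le (hc : DegreeLE d c)
    (hsmall : ∀ i, L i = true → influence i c ≤ τ * liveInfluence c L) :
    expect (unif Bool) (fun A => ∑ i, influence i (restrict c L A) ^ 2) ≤
      9 ^ d * τ * liveInfluence c L ^ 2 := by
  calc expect (unif Bool) (fun A => ∑ i, influence i (restrict c L A) ^ 2)
      ≤ ∑ i with L i = true, 9 ^ d * influence i c ^ 2 := by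
        rw [expect_sum, sum_filter]
        exact sum_le_sum fun i _ => expect_influence_restrict_sq_le hc i
    _ ≤ ∑ i with L i = true, 9 ^ d * (τ * liveInfluence c L * influence i c) := by
        refine sum_le_sum fun i hi => mul_le_mul_of_nonneg_left ?_ (by positivity)
        rw [pow_two]
        exact mul_le_mul_of_nonneg_right (hsmall i (mem_filter.1 hi).2) (influence_nonneg i c)
    _ = 9 ^ d * τ * liveInfluence c L ^ 2 := by
        rw [← mul_sum, ← mul_sum, ← liveInfluence]
        ring

lemma le_expect_ind_isRegular_restrict (hc : DegreeLE d c) (h0 : 0 ≤ τ)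
    (hsmall : ∀ i, L i = true → influence i c ≤ τ * liveInfluence c L) :
    1 / (8 * 9 ^ d) ≤
      expect (unif Bool) (fun A => ind (IsRegular (32 * d ^ 2 * 81 ^ d * τ) (restrict c L A))) := by
  have hinf_nonneg (A : ι → Bool) : 0 ≤ totalInfluence (restrict c L A) :=
    (variance_nonneg _).trans (variance_le_totalInfluence _)
  have hprob := (isProbWeight_unif Bool).paley_zygmund_and_markov hinf_nonneg
    (fun A => sum_nonneg fun i _ => sq_nonneg (influence i (restrict c L A)))
    (Q := 9 ^ d) (one_le_pow₀ (by norm_num))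
    (by simpa only [expect_totalInfluence_restrict_unif] using
      expect_totalInfluence_restrict_sq_le hc L)
    (expect_sum_sq_influence_restrict_le hc hsmall)
  refine hprob.trans ((isProbWeight_unif Bool).expect_mono fun A => ind_mono ?_)
  rintro ⟨hlarge, hsum⟩
  rw [expect_totalInfluence_restrict_unif] at hlarge
  have hlive := liveInfluence_nonneg c L
  calc ∑ i, influence i (restrict c L A) ^ 2
      ≤ 8 * 9 ^ d * (9 ^ d * τ * liveInfluence c L ^ 2) := hsum
    _ ≤ 8 * 9 ^ d * (9 ^ d * τ * (2 * (d * variance (restrict c L A))) ^ 2) := by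
        gcongr
        linarith [totalInfluence_le (hc.restrict L A)]
    _ = 32 * d ^ 2 * 81 ^ d * τ * variance (restrict c L A) ^ 2 := by
        have h81 : (81 : ℝ) ^ d = 9 ^ d * 9 ^ d := by rw [← mul_pow]; norm_num
        rw [h81]
        ring

lemma expect_sqNorm_restrict (c : Finset ι → ℝ) (L : ι → Bool) :
    expect (unif Bool) (fun A => sqNorm (restrict c L A)) = sqNorm c := by
  simpa [weightedSq, sqNorm] using expect_weightedSq_restrict c L fun _ => 1

lemma half_variance_le_expect_sq_mean (h : liveInfluence c L ≤ variance c / 2) :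
    variance c / 2 ≤ expect (unif Bool) (fun A => restrict c L A ∅ ^ 2) := by
  have hle := (isProbWeight_unif Bool).expect_mono fun A : ι → Bool =>
    add_le_add_right (variance_le_totalInfluence (restrict c L A)) (restrict c L A ∅ ^ 2)
  simp only [← sqNorm_eq_sq_add_variance, expect_add, expect_sqNorm_restrict,
    expect_totalInfluence_restrict_unif] at hle
  rw [sqNorm_eq_sq_add_variance] at hle
  nlinarith [sq_nonneg (c ∅)]

lemma le_expect_ind_isSkewed_restrict (hc : DegreeLE d c) {q : ℝ} (hq0 : 0 ≤ q)
    (hq : d * q ≤ 1 / 2) (hlive : liveInfluence c L ≤ q * totalInfluence c) :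
    1 / (8 * 9 ^ d) ≤
      expect (unif Bool) (fun A => ind (IsSkewed (32 * d * 9 ^ d * q) (restrict c L A))) := by
  have hinf_nonneg (A : ι → Bool) : 0 ≤ totalInfluence (restrict c L A) :=
    (variance_nonneg _).trans (variance_le_totalInfluence _)
  have hvar := variance_nonneg c
  have hlive_var : liveInfluence c L ≤ d * q * variance c := by
    nlinarith [mul_le_mul_of_nonneg_left (totalInfluence_le hc) hq0]
  have hmean := half_variance_le_expect_sq_mean (c := c) (L := L) (by nlinarith)
  have hprob := (isProbWeight_unif Bool).paley_zygmund_and_markov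
    (fun A : ι → Bool => sq_nonneg (restrict c L A ∅)) hinf_nonneg
    (Q := 9 ^ d) (one_le_pow₀ (by norm_num))
    (by simpa only [← pow_mul, Nat.reduceMul, restrict] using
      (hc.restrictCoeff L ∅).isPoly.expect_pow_four_le)
    ((expect_totalInfluence_restrict_unif c L).trans_le hlive_var)
  refine hprob.trans ((isProbWeight_unif Bool).expect_mono fun A => ind_mono ?_)
  rintro ⟨hlarge, hsmall⟩
  calc variance (restrict c L A) ≤ totalInfluence (restrict c L A) :=
        variance_le_totalInfluence _
    _ ≤ 8 * 9 ^ d * (d * q * variance c) := hsmall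
    _ ≤ 8 * 9 ^ d * (d * q * (4 * restrict c L A ∅ ^ 2)) := by
        gcongr
        linarith
    _ = 32 * d * 9 ^ d * q * restrict c L A ∅ ^ 2 := by ring

lemma exists_restriction_isRegular_or_isSkewed (hc : DegreeLE d c) (h0 : 0 ≤ τ) (h1 : τ ≤ 1)
    (k : ℕ) (hk : d * (1 - τ) ^ k ≤ 1 / 2) :
    ∃ L : ι → Bool, #{i | L i = false} ≤ k ∧
      1 / (8 * 9 ^ d) ≤ expect (unif Bool) (fun A =>
        ind (IsRegular (32 * d ^ 2 * 81 ^ d * τ) (restrict c L A) ∨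
          IsSkewed (32 * d * 9 ^ d * (1 - τ) ^ k) (restrict c L A))) := by
  obtain ⟨L, hL, hsmall | hlive⟩ :=
    exists_restriction_small_influences_or_small_liveInfluence c h1 k
  · exact ⟨L, hL, (le_expect_ind_isRegular_restrict hc h0 hsmall).trans
      ((isProbWeight_unif Bool).expect_mono fun A => ind_mono Or.inl)⟩
  · exact ⟨L, hL,
      (le_expect_ind_isSkewed_restrict hc (pow_nonneg (sub_nonneg.2 h1) k) hk hlive).trans
        ((isProbWeight_unif Bool).expect_mono fun A => ind_mono Or.inr)⟩

end RegularityDichotomy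

section Lindeberg

/-- The smooth bounded test function `b² / (1 + a² + b²)`: it is at most `b² / a²`, and bounded
below wherever `b` is at least of the order of `a` and of `1`. -/
noncomputable def softRatio (a b : ℝ) : ℝ := b ^ 2 / (1 + a ^ 2 + b ^ 2)

/-- The linear term of the Taylor expansion of `softRatio` at `(a, b)` in the direction
`(α, β)`. -/
noncomputable def softRatioLin (a b α β : ℝ) : ℝ :=
  (2 * b * β - softRatio a b * (2 * a * α + 2 * b * β)) / (1 + a ^ 2 + b ^ 2)

/-- The quadratic term of the Taylor expansion of `softRatio` at `(a, b)` in the direction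
`(α, β)`. -/
noncomputable def softRatioQuad (a b α β : ℝ) : ℝ :=
  (β ^ 2 - softRatio a b * (α ^ 2 + β ^ 2) - softRatioLin a b α β * (2 * a * α + 2 * b * β)) /
    (1 + a ^ 2 + b ^ 2)

lemma softRatio_nonneg (a b : ℝ) : 0 ≤ softRatio a b := by unfold softRatio; positivity

lemma softRatio_le_one (a b : ℝ) : softRatio a b ≤ 1 := by
  rw [softRatio, div_le_one (by positivity)]
  nlinarith [sq_nonneg a]

lemma one_le_one_add_sq_add_sq (a b : ℝ) : 1 ≤ 1 + a ^ 2 + b ^ 2 := by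
  linarith [sq_nonneg a, sq_nonneg b]

lemma one_le_sqrt_one_add_sq_add_sq (a b : ℝ) : 1 ≤ √(1 + a ^ 2 + b ^ 2) :=
  Real.one_le_sqrt.2 (one_le_one_add_sq_add_sq a b)

lemma abs_softRatio_mul_le (a b x : ℝ) : |softRatio a b * x| ≤ |x| := by
  rw [abs_mul, abs_of_nonneg (softRatio_nonneg a b)]
  exact mul_le_of_le_one_left (abs_nonneg x) (softRatio_le_one a b)

lemma abs_two_mul_inner_le (a b α β : ℝ) :
    |2 * a * α + 2 * b * β| ≤ 2 * √(1 + a ^ 2 + b ^ 2) * (|α| + |β|) := by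
  have ha : |a| ≤ √(1 + a ^ 2 + b ^ 2) := Real.abs_le_sqrt (by linarith [sq_nonneg b])
  have hb : |b| ≤ √(1 + a ^ 2 + b ^ 2) := Real.abs_le_sqrt (by linarith [sq_nonneg a])
  calc |2 * a * α + 2 * b * β| ≤ 2 * |a| * |α| + 2 * |b| * |β| := by
        simpa only [abs_mul, abs_two] using abs_add_le (2 * a * α) (2 * b * β)
    _ ≤ 2 * √(1 + a ^ 2 + b ^ 2) * |α| + 2 * √(1 + a ^ 2 + b ^ 2) * |β| := by gcongr
    _ = 2 * √(1 + a ^ 2 + b ^ 2) * (|α| + |β|) := by ring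

lemma sq_add_sq_le_abs_add_abs_sq (α β : ℝ) : α ^ 2 + β ^ 2 ≤ (|α| + |β|) ^ 2 := by
  rw [← sq_abs α, ← sq_abs β]
  nlinarith [mul_nonneg (abs_nonneg α) (abs_nonneg β)]

lemma abs_softRatioLin_le (a b α β : ℝ) :
    |softRatioLin a b α β| ≤ 4 * (|α| + |β|) / √(1 + a ^ 2 + b ^ 2) := by
  have hD := one_le_one_add_sq_add_sq a b
  have hb : |2 * b * β| ≤ 2 * √(1 + a ^ 2 + b ^ 2) * (|α| + |β|) := by
    refine le_trans ?_ ((abs_two_mul_inner_le a b 0 β).trans ?_)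
    · simp
    · rw [abs_zero, zero_add]
      gcongr
      linarith [abs_nonneg α]
  have he := (abs_softRatio_mul_le a b _).trans (abs_two_mul_inner_le a b α β)
  have hnum := (abs_sub (2 * b * β) (softRatio a b * (2 * a * α + 2 * b * β))).trans
    (add_le_add hb he)
  rw [softRatioLin, abs_div, abs_of_pos (by linarith : 0 < 1 + a ^ 2 + b ^ 2)]
  calc _ ≤ _ := div_le_div_of_nonneg_right hnum (by linarith)
    _ = 4 * (|α| + |β|) * (√(1 + a ^ 2 + b ^ 2) / (1 + a ^ 2 + b ^ 2)) := by ring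
    _ = 4 * (|α| + |β|) / √(1 + a ^ 2 + b ^ 2) := by rw [Real.sqrt_div_self', mul_one_div]

lemma abs_softRatioQuad_le (a b α β : ℝ) :
    |softRatioQuad a b α β| ≤ 10 * (|α| + |β|) ^ 2 / (1 + a ^ 2 + b ^ 2) := by
  have hsq := sq_add_sq_le_abs_add_abs_sq α β
  have hβ : |β ^ 2| ≤ (|α| + |β|) ^ 2 := by
    rw [abs_of_nonneg (sq_nonneg β)]
    linarith [sq_nonneg α]
  have hq : |softRatio a b * (α ^ 2 + β ^ 2)| ≤ (|α| + |β|) ^ 2 :=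
    (abs_softRatio_mul_le a b _).trans (by rwa [abs_of_nonneg (by positivity)])
  have hlin : |softRatioLin a b α β * (2 * a * α + 2 * b * β)| ≤ 8 * (|α| + |β|) ^ 2 := by
    rw [abs_mul]
    calc _ ≤ 4 * (|α| + |β|) / √(1 + a ^ 2 + b ^ 2) *
          (2 * √(1 + a ^ 2 + b ^ 2) * (|α| + |β|)) :=
          mul_le_mul (abs_softRatioLin_le a b α β) (abs_two_mul_inner_le a b α β)
            (abs_nonneg _) (by positivity)
      _ = 8 * (|α| + |β|) ^ 2 := by field_simp; ring
  rw [softRatioQuad, abs_div, abs_of_pos (by positivity : 0 < 1 + a ^ 2 + b ^ 2)]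
  refine div_le_div_of_nonneg_right ?_ (by positivity)
  refine (abs_sub _ _).trans ((add_le_add_left (abs_sub _ _) _).trans ?_)
  linarith

lemma softRatio_add_sub_taylor (a b α β : ℝ) :
    softRatio (a + α) (b + β) - (softRatio a b + softRatioLin a b α β + softRatioQuad a b α β) =
      -(softRatioQuad a b α β * (2 * a * α + 2 * b * β) + softRatioLin a b α β * (α ^ 2 + β ^ 2) +
        softRatioQuad a b α β * (α ^ 2 + β ^ 2)) / (1 + (a + α) ^ 2 + (b + β) ^ 2) := by
  have hD : 1 + a ^ 2 + b ^ 2 ≠ 0 := by positivity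
  have hD' : 1 + (a + α) ^ 2 + (b + β) ^ 2 ≠ 0 := by positivity
  have hratio : softRatio a b * (1 + a ^ 2 + b ^ 2) = b ^ 2 := div_mul_cancel₀ _ hD
  have hlin : softRatioLin a b α β * (1 + a ^ 2 + b ^ 2) =
      2 * b * β - softRatio a b * (2 * a * α + 2 * b * β) := div_mul_cancel₀ _ hD
  have hquad : softRatioQuad a b α β * (1 + a ^ 2 + b ^ 2) = β ^ 2 -
      softRatio a b * (α ^ 2 + β ^ 2) - softRatioLin a b α β * (2 * a * α + 2 * b * β) :=
    div_mul_cancel₀ _ hD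
  rw [eq_div_iff hD', sub_mul, softRatio, div_mul_cancel₀ _ hD']
  linear_combination -hlin - hquad - hratio

lemma abs_softRatio_sub_taylor_le_of_le_one {a b α β : ℝ} (h : |α| + |β| ≤ 1) :
    |softRatio (a + α) (b + β) - (softRatio a b + softRatioLin a b α β + softRatioQuad a b α β)| ≤
      34 * (|α| + |β|) ^ 3 := by
  have hs := one_le_sqrt_one_add_sq_add_sq a b
  have hρ : 0 ≤ |α| + |β| := by positivity
  have hsq : |α ^ 2 + β ^ 2| ≤ (|α| + |β|) ^ 2 := by
    rw [abs_of_nonneg (by positivity)]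
    exact sq_add_sq_le_abs_add_abs_sq α β
  have hquad_inner : |softRatioQuad a b α β * (2 * a * α + 2 * b * β)| ≤ 20 * (|α| + |β|) ^ 3 := by
    rw [abs_mul]
    calc _ ≤ 10 * (|α| + |β|) ^ 2 / √(1 + a ^ 2 + b ^ 2) ^ 2 *
          (2 * √(1 + a ^ 2 + b ^ 2) * (|α| + |β|)) := by
          rw [Real.sq_sqrt (by positivity)]
          exact mul_le_mul (abs_softRatioQuad_le a b α β) (abs_two_mul_inner_le a b α β)
            (abs_nonneg _) (by positivity)
      _ = 20 * (|α| + |β|) ^ 3 / √(1 + a ^ 2 + b ^ 2) := by field_simp; ring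
      _ ≤ 20 * (|α| + |β|) ^ 3 := div_le_self (by positivity) hs
  have hlin_sq : |softRatioLin a b α β * (α ^ 2 + β ^ 2)| ≤ 4 * (|α| + |β|) ^ 3 := by
    have hlin := (abs_softRatioLin_le a b α β).trans (div_le_self (by positivity) hs)
    rw [abs_mul]
    exact (mul_le_mul hlin hsq (abs_nonneg _) (by positivity)).trans_eq (by ring)
  have hquad_sq : |softRatioQuad a b α β * (α ^ 2 + β ^ 2)| ≤ 10 * (|α| + |β|) ^ 3 := by
    have hquad := (abs_softRatioQuad_le a b α β).trans
      (div_le_self (by positivity) (one_le_one_add_sq_add_sq a b))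
    rw [abs_mul]
    refine (mul_le_mul hquad hsq (abs_nonneg _) (by positivity)).trans ?_
    nlinarith [mul_le_mul_of_nonneg_left h (pow_nonneg hρ 3)]
  rw [softRatio_add_sub_taylor, abs_div, abs_neg,
    abs_of_pos (by positivity : 0 < 1 + (a + α) ^ 2 + (b + β) ^ 2)]
  refine (div_le_self (abs_nonneg _) (one_le_one_add_sq_add_sq _ _)).trans ?_
  exact (abs_add_three _ _ _).trans (by linarith)

lemma abs_softRatio_sub_taylor_le (a b α β : ℝ) :
    |softRatio (a + α) (b + β) - (softRatio a b + softRatioLin a b α β + softRatioQuad a b α β)| ≤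
      34 * (|α| + |β|) ^ 3 := by
  rcases le_total (|α| + |β|) 1 with h | h
  · exact abs_softRatio_sub_taylor_le_of_le_one h
  have habs (x y : ℝ) : |softRatio x y| ≤ 1 := by
    simpa only [mul_one, abs_one] using abs_softRatio_mul_le x y 1
  have hlin := (abs_softRatioLin_le a b α β).trans
    (div_le_self (by positivity) (one_le_sqrt_one_add_sq_add_sq a b))
  have hquad := (abs_softRatioQuad_le a b α β).trans
    (div_le_self (by positivity) (one_le_one_add_sq_add_sq a b))
  have hpow2 : |α| + |β| ≤ (|α| + |β|) ^ 3 := le_self_pow₀ h three_ne_zero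
  have hpow3 : (|α| + |β|) ^ 2 ≤ (|α| + |β|) ^ 3 := pow_le_pow_right₀ h (by norm_num)
  calc _ ≤ |softRatio (a + α) (b + β)| +
        (|softRatio a b| + |softRatioLin a b α β| + |softRatioQuad a b α β|) :=
        (abs_sub _ _).trans (add_le_add_right (abs_add_three _ _ _) _)
    _ ≤ 34 * (|α| + |β|) ^ 3 := by linarith [habs (a + α) (b + β), habs a b]

lemma exists_coeff_softRatio_taylor (a b : ℝ) : ∃ A₁ A₂ A₁₁ A₁₂ A₂₂ : ℝ, ∀ α β : ℝ,
    softRatioLin a b α β + softRatioQuad a b α β =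
      A₁ * α + A₂ * β + A₁₁ * α ^ 2 + A₁₂ * (α * β) + A₂₂ * β ^ 2 := by
  have hD : 1 + a ^ 2 + b ^ 2 ≠ 0 := by positivity
  set D := 1 + a ^ 2 + b ^ 2
  set q := softRatio a b
  refine ⟨-(2 * q * a) / D, 2 * b * (1 - q) / D, (4 * q * a ^ 2 / D - q) / D,
    (4 * q * a * b - 4 * a * b * (1 - q)) / D ^ 2, (1 - q - 4 * b ^ 2 * (1 - q) / D) / D,
    fun α β => ?_⟩
  simp only [softRatioQuad, softRatioLin]
  field_simp
  ring

variable {κ : Type*} [Fintype κ] {w : κ → ℝ}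

lemma sum_softRatio_taylor_eq {X Y X' Y' : κ → ℝ}
    (hX : IsStandardized w X) (hY : IsStandardized w Y) (hX' : IsStandardized w X')
    (hY' : IsStandardized w Y') (hcorr : ∑ k, w k * (X k * Y k) = ∑ k, w k * (X' k * Y' k))
    (a b x y z : ℝ) :
    ∑ k, w k * (softRatioLin a b (X k * x) (Y k * y - X k * z) +
        softRatioQuad a b (X k * x) (Y k * y - X k * z)) =
      ∑ k, w k * (softRatioLin a b (X' k * x) (Y' k * y - X' k * z) +
        softRatioQuad a b (X' k * x) (Y' k * y - X' k * z)) := by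
  obtain ⟨A₁, A₂, A₁₁, A₁₂, A₂₂, hcoeff⟩ := exists_coeff_softRatio_taylor a b
  have hmoments {X Y : κ → ℝ} (hX : IsStandardized w X) (hY : IsStandardized w Y) :
      ∑ k, w k * (softRatioLin a b (X k * x) (Y k * y - X k * z) +
        softRatioQuad a b (X k * x) (Y k * y - X k * z)) =
      (A₁₁ * x ^ 2 - A₁₂ * x * z + A₂₂ * z ^ 2) +
        (A₁₂ * x * y - 2 * A₂₂ * y * z) * ∑ k, w k * (X k * Y k) + A₂₂ * y ^ 2 := by
    have hexpand (k : κ) : w k * (softRatioLin a b (X k * x) (Y k * y - X k * z) +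
        softRatioQuad a b (X k * x) (Y k * y - X k * z)) =
        (A₁ * x - A₂ * z) * (w k * X k) + A₂ * y * (w k * Y k) +
        (A₁₁ * x ^ 2 - A₁₂ * x * z + A₂₂ * z ^ 2) * (w k * X k ^ 2) +
        (A₁₂ * x * y - 2 * A₂₂ * y * z) * (w k * (X k * Y k)) +
        A₂₂ * y ^ 2 * (w k * Y k ^ 2) := by
      rw [hcoeff]
      ring
    simp only [hexpand, sum_add_distrib, ← mul_sum, hX.mean, hY.mean, hX.sq, hY.sq]
    ring
  rw [hmoments hX hY, hmoments hX' hY', hcorr]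

lemma abs_sum_softRatio_sub_taylor_le (hw : IsProbWeight w) {X Y : κ → ℝ}
    (hX : IsStandardized w X) (hY : IsStandardized w Y) (a b x y z : ℝ) :
    |∑ k, w k * softRatio (a + X k * x) (b + (Y k * y - X k * z)) -
      (softRatio a b + ∑ k, w k * (softRatioLin a b (X k * x) (Y k * y - X k * z) +
        softRatioQuad a b (X k * x) (Y k * y - X k * z)))| ≤
      272 * (|x| + |y| + |z|) ^ 3 := by
  have hmul {Z : κ → ℝ} (hZ : IsStandardized w Z) (k : κ) (u : ℝ) : |Z k * u| ≤ 2 * |u| := by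
    rw [abs_mul]
    exact mul_le_mul_of_nonneg_right (hZ.abs_le_two k) (abs_nonneg u)
  have hterm (k : κ) : |softRatio (a + X k * x) (b + (Y k * y - X k * z)) -
      (softRatio a b + softRatioLin a b (X k * x) (Y k * y - X k * z) +
        softRatioQuad a b (X k * x) (Y k * y - X k * z))| ≤ 272 * (|x| + |y| + |z|) ^ 3 := by
    have hinc : |X k * x| + |Y k * y - X k * z| ≤ 2 * (|x| + |y| + |z|) := by
      linarith [abs_sub (Y k * y) (X k * z), hmul hX k x, hmul hY k y, hmul hX k z]
    calc _ ≤ 34 * (|X k * x| + |Y k * y - X k * z|) ^ 3 := abs_softRatio_sub_taylor_le _ _ _ _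
      _ ≤ 34 * (2 * (|x| + |y| + |z|)) ^ 3 := by gcongr
      _ = 272 * (|x| + |y| + |z|) ^ 3 := by ring
  have hsum : ∑ k, w k * softRatio (a + X k * x) (b + (Y k * y - X k * z)) -
      (softRatio a b + ∑ k, w k * (softRatioLin a b (X k * x) (Y k * y - X k * z) +
        softRatioQuad a b (X k * x) (Y k * y - X k * z))) =
      ∑ k, w k * (softRatio (a + X k * x) (b + (Y k * y - X k * z)) -
        (softRatio a b + softRatioLin a b (X k * x) (Y k * y - X k * z) +
          softRatioQuad a b (X k * x) (Y k * y - X k * z))) := by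
    simp only [mul_sub, mul_add, sum_sub_distrib, sum_add_distrib, ← sum_mul, hw.sum_eq_one,
      one_mul, add_assoc]
  rw [hsum]
  calc _ ≤ ∑ k, w k * (272 * (|x| + |y| + |z|) ^ 3) :=
        (abs_sum_le_sum_abs _ _).trans <| sum_le_sum fun k _ => by
          rw [abs_mul, abs_of_nonneg (hw.nonneg k)]
          exact mul_le_mul_of_nonneg_left (hterm k) (hw.nonneg k)
    _ = 272 * (|x| + |y| + |z|) ^ 3 := by rw [← sum_mul, hw.sum_eq_one, one_mul]

lemma abs_sum_softRatio_sub_sum_le (hw : IsProbWeight w) {X Y X' Y' : κ → ℝ}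
    (hX : IsStandardized w X) (hY : IsStandardized w Y) (hX' : IsStandardized w X')
    (hY' : IsStandardized w Y') (hcorr : ∑ k, w k * (X k * Y k) = ∑ k, w k * (X' k * Y' k))
    {t l : ℝ} (hl : 0 ≤ l) (hlt : l ≤ t) (a b p q : ℝ) :
    |∑ k, w k * softRatio (a + X' k * (t * p)) (b + (Y' k * (l * q) - X' k * (l * p))) -
      ∑ k, w k * softRatio (a + X k * (t * p)) (b + (Y k * (l * q) - X k * (l * p)))| ≤
      17408 * t ^ 3 * (|p| ^ 3 + |q| ^ 3) := by
  have ht := hl.trans hlt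
  have h := abs_sum_softRatio_sub_taylor_le hw hX hY a b (t * p) (l * q) (l * p)
  have h' := abs_sum_softRatio_sub_taylor_le hw hX' hY' a b (t * p) (l * q) (l * p)
  rw [← sum_softRatio_taylor_eq hX hY hX' hY' hcorr, abs_sub_comm] at h'
  rw [abs_sub_comm] at h
  have hcube : (|t * p| + |l * q| + |l * p|) ^ 3 ≤ 32 * t ^ 3 * (|p| ^ 3 + |q| ^ 3) := by
    calc (|t * p| + |l * q| + |l * p|) ^ 3 = (t * |p| + l * |q| + l * |p|) ^ 3 := by
          simp only [abs_mul, abs_of_nonneg ht, abs_of_nonneg hl]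
      _ ≤ (t * |p| + (t + t) * |q| + t * |p|) ^ 3 := by
          gcongr
          linarith
      _ = 8 * t ^ 3 * (|p| + |q|) ^ 3 := by ring
      _ ≤ 8 * t ^ 3 * (2 ^ (3 - 1) * (|p| ^ 3 + |q| ^ 3)) := by
          gcongr
          exact add_pow_le (abs_nonneg p) (abs_nonneg q) 3
      _ = 32 * t ^ 3 * (|p| ^ 3 + |q| ^ 3) := by ring
  rw [abs_le] at h h' ⊢
  constructor <;> linarith [h.1, h.2, h'.1, h'.2]

lemma abs_pow_three_le {s : ℝ} (hs : 0 < s) (x : ℝ) : |x| ^ 3 ≤ s * x ^ 2 + 1 / s * x ^ 4 := by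
  have h : |x| ^ 3 * s ≤ s ^ 2 * |x| ^ 2 + |x| ^ 4 := by
    nlinarith [sq_nonneg (|x| * s - |x| ^ 2), sq_nonneg (|x| * s), sq_nonneg (|x| ^ 2)]
  rw [sq_abs, Even.pow_abs ⟨2, rfl⟩] at h
  calc |x| ^ 3 ≤ (s ^ 2 * x ^ 2 + x ^ 4) / s := (le_div_iff₀ hs).2 h
    _ = s * x ^ 2 + 1 / s * x ^ 4 := by field_simp

variable {ι : Type*} [Fintype ι] [DecidableEq ι] {d : ℕ} {c : Finset ι → ℝ}

lemma expect_abs_polyRV_pow_three_le (hw : IsProbWeight w) {ξ : ι → κ → ℝ}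
    (hξ : ∀ i, IsStandardized w (ξ i)) (hc : DegreeLE d c) {s : ℝ} (hs : 0 < s) :
    expect w (fun ω => |polyRV ξ c ω| ^ 3) ≤ s * sqNorm c + 9 ^ d * sqNorm c ^ 2 / s := by
  have h9 : (9 : ℝ) ^ d = 3 ^ d * 3 ^ d := by rw [← mul_pow]; norm_num
  calc expect w (fun ω => |polyRV ξ c ω| ^ 3)
      ≤ expect w (fun ω => s * polyRV ξ c ω ^ 2 + 1 / s * polyRV ξ c ω ^ 4) :=
        hw.expect_mono fun ω => abs_pow_three_le hs _
    _ ≤ s * sqNorm c + 1 / s * (3 ^ d * sqNorm c) ^ 2 := by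
        rw [expect_add, expect_mul_left, expect_mul_left, expect_polyRV_sq hw hξ]
        gcongr
        exact expect_polyRV_pow_four_le hw hξ hc
    _ = s * sqNorm c + 9 ^ d * sqNorm c ^ 2 / s := by rw [h9]; ring

/-- The mean of the soft ratio of `t * c(ξ)` and the increment `l * (c(η) - c(ξ))`. -/
noncomputable def softRatioMean (w : κ → ℝ) (t l : ℝ) (ξ η : ι → κ → ℝ) (c : Finset ι → ℝ) : ℝ :=
  expect w fun ω => softRatio (t * polyRV ξ c ω) (l * (polyRV η c ω - polyRV ξ c ω))

lemma abs_softRatioMean_update_sub_le (hw : IsProbWeight w) {ξ η : ι → κ → ℝ} {X Y : κ → ℝ} {i : ι}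
    (hξ : ∀ i, IsStandardized w (ξ i)) (hη : ∀ i, IsStandardized w (η i))
    (hX : IsStandardized w X) (hY : IsStandardized w Y)
    (hcorr : ∑ k, w k * (ξ i k * η i k) = ∑ k, w k * (X k * Y k))
    {t l s : ℝ} (hl : 0 ≤ l) (hlt : l ≤ t) (hs : 0 < s) (hc : DegreeLE d c) :
    |softRatioMean w t l (Function.update ξ i X) (Function.update η i Y) c -
        softRatioMean w t l ξ η c| ≤
      34816 * t ^ 3 * (s * influence i c + 9 ^ d * influence i c ^ 2 / s) := by
  have hmean (X Y : κ → ℝ) :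
      softRatioMean w t l (Function.update ξ i X) (Function.update η i Y) c =
        expect w fun ω => ∑ k, w k * softRatio
          (t * polyRV ξ (eraseVar i c) ω + X k * (t * polyRV ξ (derivVar i c) ω))
          (l * (polyRV η (eraseVar i c) ω - polyRV ξ (eraseVar i c) ω) +
            (Y k * (l * polyRV η (derivVar i c) ω) - X k * (l * polyRV ξ (derivVar i c) ω))) := by
    rw [softRatioMean, hw.expect_update i]
    simp only [polyRV_update_update]
    refine congrArg _ (funext fun ω => sum_congr rfl fun k _ => ?_)
    congr 2 <;> ring
  have hderiv := (hc.derivVar i).mono (Nat.sub_le d 1)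
  have ht := hl.trans hlt
  have hself := hmean (ξ i) (η i)
  rw [Function.update_eq_self, Function.update_eq_self] at hself
  rw [hmean, hself, ← expect_sub]
  calc _ ≤ expect w (fun ω => 17408 * t ^ 3 *
          (|polyRV ξ (derivVar i c) ω| ^ 3 + |polyRV η (derivVar i c) ω| ^ 3)) :=
        (hw.abs_expect_le _).trans <| hw.expect_mono fun ω =>
          abs_sum_softRatio_sub_sum_le hw (hξ i) (hη i) hX hY hcorr hl hlt _ _ _ _
    _ ≤ 17408 * t ^ 3 * ((s * influence i c + 9 ^ d * influence i c ^ 2 / s) +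
          (s * influence i c + 9 ^ d * influence i c ^ 2 / s)) := by
        rw [expect_mul_left, expect_add]
        gcongr
        · exact expect_abs_polyRV_pow_three_le hw hξ hderiv hs
        · exact expect_abs_polyRV_pow_three_le hw hη hderiv hs
    _ = 34816 * t ^ 3 * (s * influence i c + 9 ^ d * influence i c ^ 2 / s) := by ring

theorem abs_softRatioMean_sub_le (hw : IsProbWeight w) {ξ η ξ' η' : ι → κ → ℝ}
    (hξ : ∀ i, IsStandardized w (ξ i)) (hη : ∀ i, IsStandardized w (η i))
    (hξ' : ∀ i, IsStandardized w (ξ' i)) (hη' : ∀ i, IsStandardized w (η' i))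
    (hcorr : ∀ i, ∑ k, w k * (ξ i k * η i k) = ∑ k, w k * (ξ' i k * η' i k))
    {t l s : ℝ} (hl : 0 ≤ l) (hlt : l ≤ t) (hs : 0 < s) (hc : DegreeLE d c) :
    |softRatioMean w t l ξ' η' c - softRatioMean w t l ξ η c| ≤
      34816 * t ^ 3 * (s * totalInfluence c + 9 ^ d * (∑ i, influence i c ^ 2) / s) := by
  have hpiecewise {ζ ζ' : ι → κ → ℝ} (hζ : ∀ i, IsStandardized w (ζ i))
      (hζ' : ∀ i, IsStandardized w (ζ' i)) (V : Finset ι) (i : ι) :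
      IsStandardized w (V.piecewise ζ' ζ i) := by
    by_cases hi : i ∈ V
    · rw [piecewise_eq_of_mem _ _ _ hi]; exact hζ' i
    · rw [piecewise_eq_of_notMem _ _ _ hi]; exact hζ i
  have hreplace (V : Finset ι) :
      |softRatioMean w t l (V.piecewise ξ' ξ) (V.piecewise η' η) c - softRatioMean w t l ξ η c| ≤
        ∑ i ∈ V, 34816 * t ^ 3 * (s * influence i c + 9 ^ d * influence i c ^ 2 / s) := by
    induction V using Finset.induction with
    | empty => simp
    | insert i V hi ih =>
      rw [sum_insert hi, piecewise_insert, piecewise_insert]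
      refine (abs_sub_le _ (softRatioMean w t l (V.piecewise ξ' ξ) (V.piecewise η' η) c) _).trans
        (add_le_add ?_ ih)
      exact abs_softRatioMean_update_sub_le hw (hpiecewise hξ hξ' V) (hpiecewise hη hη' V) (hξ' i)
        (hη' i) (by simpa only [piecewise_eq_of_notMem _ _ _ hi] using hcorr i) hl hlt hs hc
  refine (by simpa only [piecewise_univ] using hreplace univ :).trans_eq ?_
  rw [← mul_sum, sum_add_distrib, ← mul_sum, totalInfluence, ← sum_div, ← mul_sum]

end Lindeberg

section RootsOfUnity

variable {N : ℕ} [NeZero N]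

/-- The root of unity `exp (2πi j / N)`. -/
noncomputable def circlePt (j : ZMod N) : ℂ := ZMod.stdAddChar j

lemma circlePt_add (i j : ZMod N) : circlePt (i + j) = circlePt i * circlePt j :=
  AddChar.map_add_eq_mul _ _ _

lemma norm_circlePt (j : ZMod N) : ‖circlePt j‖ = 1 := AddChar.norm_apply _ _

lemma norm_circlePt_sub (i j : ZMod N) :
    ‖circlePt i - circlePt j‖ = ‖circlePt (i - j) - 1‖ := by
  have hfactor : circlePt i - circlePt j = circlePt j * (circlePt (i - j) - 1) := by
    rw [mul_sub, ← circlePt_add, mul_one, add_sub_cancel]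
  rw [hfactor, norm_mul, norm_circlePt, one_mul]

lemma norm_circlePt_natCast_sub_one (k : ℕ) :
    ‖circlePt (k : ZMod N) - 1‖ = 2 * |Real.sin (Real.pi * k / N)| := by
  have hexp : circlePt (k : ZMod N) =
      Complex.exp (Complex.I * ((2 * Real.pi * k / N : ℝ) : ℂ)) := by
    have h := ZMod.stdAddChar_coe (N := N) (k : ℤ)
    push_cast at h
    rw [circlePt, h]
    push_cast
    ring_nf
  rw [hexp, Complex.norm_exp_I_mul_ofReal_sub_one, Real.norm_eq_abs, abs_mul, abs_two]
  ring_nf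

lemma sum_zmod_val (F : ℕ → ℝ) : ∑ j : ZMod N, F j.val = ∑ k ∈ range N, F k := by
  obtain ⟨n, rfl⟩ := Nat.exists_eq_succ_of_ne_zero (NeZero.ne N)
  exact Fin.sum_univ_eq_sum_range F (n + 1)

variable (N) in
/-- The distance between consecutive `N`-th roots of unity. -/
noncomputable def gridStep : ℝ := ‖circlePt (1 : ZMod N) - 1‖

lemma gridStep_eq : gridStep N = 2 * |Real.sin (Real.pi / N)| := by
  simpa [gridStep] using norm_circlePt_natCast_sub_one (N := N) 1

lemma gridStep_nonneg : 0 ≤ gridStep N := norm_nonneg _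

lemma gridStep_le : gridStep N ≤ 2 * Real.pi / N := by
  have h := Real.abs_sin_le_abs (x := Real.pi / N)
  rw [abs_of_nonneg (a := Real.pi / N) (by positivity)] at h
  rw [gridStep_eq, mul_div_assoc]
  gcongr

lemma two_mul_div_le_sin {y : ℝ} (hy : 0 ≤ y) (hyN : y ≤ N / 2) :
    2 * y / N ≤ Real.sin (Real.pi * y / N) := by
  have hN : (0 : ℝ) < N := mod_cast Nat.pos_of_ne_zero (NeZero.ne N)
  have h := Real.mul_le_sin (x := Real.pi * y / N) (by positivity) (by
    rw [div_le_div_iff₀ hN two_pos]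
    nlinarith [Real.pi_pos])
  rwa [show 2 / Real.pi * (Real.pi * y / N) = 2 * y / N by field_simp] at h

lemma four_div_le_gridStep (hN : 2 ≤ N) : 4 / N ≤ gridStep N := by
  have hN' : (2 : ℝ) ≤ N := mod_cast hN
  have h := two_mul_div_le_sin (N := N) zero_le_one (by linarith)
  simp only [mul_one] at h
  calc (4 : ℝ) / N = 2 * (2 / N) := by ring
    _ ≤ 2 * |Real.sin (Real.pi / N)| := by gcongr; exact h.trans (le_abs_self _)
    _ = gridStep N := gridStep_eq.symm

lemma gridStep_pos (hN : 2 ≤ N) : 0 < gridStep N :=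
  (div_pos four_pos (mod_cast (by lia : 0 < N))).trans_le (four_div_le_gridStep hN)

lemma inv_sin_sq_le_of_le_half {y : ℝ} (hy : 0 < y) (hyN : y ≤ N / 2) :
    1 / (4 * Real.sin (Real.pi * y / N) ^ 2) ≤ N ^ 2 / 16 * (1 / y ^ 2) := by
  have hN : (0 : ℝ) < N := mod_cast Nat.pos_of_ne_zero (NeZero.ne N)
  calc 1 / (4 * Real.sin (Real.pi * y / N) ^ 2) ≤ 1 / (4 * (2 * y / N) ^ 2) := by
        gcongr
        exact two_mul_div_le_sin hy.le hyN
    _ = N ^ 2 / 16 * (1 / y ^ 2) := by field_simp; norm_num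

lemma inv_sin_sq_le {k : ℕ} (h1 : 0 < k) (hk : k < N) :
    1 / (4 * Real.sin (Real.pi * k / N) ^ 2) ≤
      N ^ 2 / 16 * (1 / (k : ℝ) ^ 2 + 1 / ((N - k : ℕ) : ℝ) ^ 2) := by
  have hN : (0 : ℝ) < N := mod_cast h1.trans hk
  rcases le_total (k : ℝ) (N / 2) with h | h
  · refine (inv_sin_sq_le_of_le_half (mod_cast h1) h).trans ?_
    gcongr
    exact le_add_of_nonneg_right (by positivity)
  · have hrefl := inv_sin_sq_le_of_le_half (N := N) (y := N - k)
      (sub_pos.2 (mod_cast hk)) (by linarith)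
    rw [show Real.pi * (N - k) / N = Real.pi - Real.pi * k / N by field_simp,
      Real.sin_pi_sub] at hrefl
    refine hrefl.trans ?_
    rw [Nat.cast_sub hk.le]
    gcongr
    exact le_add_of_nonneg_left (by positivity)

lemma sum_inv_dist_sq_eq :
    ∑ j : ZMod N, (if j = 0 then 0 else 1 / ‖circlePt j - 1‖ ^ 2) =
      ∑ k ∈ Ioo 0 N, 1 / (4 * Real.sin (Real.pi * k / N) ^ 2) := by
  have hval (j : ZMod N) : (if j = 0 then (0 : ℝ) else 1 / ‖circlePt j - 1‖ ^ 2) =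
      if j.val = 0 then 0 else 1 / (4 * Real.sin (Real.pi * j.val / N) ^ 2) := by
    have hnorm := norm_circlePt_natCast_sub_one (N := N) j.val
    rw [ZMod.natCast_zmod_val] at hnorm
    simp only [ZMod.val_eq_zero, hnorm, mul_pow, sq_abs]
    norm_num
  rw [sum_congr rfl fun j _ => hval j, sum_zmod_val
    (fun k : ℕ => if k = 0 then (0 : ℝ) else 1 / (4 * Real.sin (Real.pi * k / N) ^ 2)),
    sum_ite, sum_const_zero, zero_add]
  refine sum_congr ?_ fun _ _ => rfl
  ext k
  simp only [mem_filter, mem_range, mem_Ioo]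
  lia

lemma sum_inv_dist_sq_le :
    ∑ j : ZMod N, (if j = 0 then 0 else 1 / ‖circlePt j - 1‖ ^ 2) ≤ (N : ℝ) ^ 2 / 4 := by
  have hbasel : ∑ k ∈ Ioo 0 N, 1 / (k : ℝ) ^ 2 ≤ 2 := by
    simpa using sum_Ioo_inv_sq_le (α := ℝ) 0 N
  have hreflect : ∑ k ∈ Ioo 0 N, 1 / ((N - k : ℕ) : ℝ) ^ 2 = ∑ k ∈ Ioo 0 N, 1 / (k : ℝ) ^ 2 := by
    refine sum_nbij' (fun k => N - k) (fun k => N - k) ?_ ?_ ?_ ?_ fun _ _ => rfl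
    all_goals
      intro k hk
      simp only [mem_Ioo] at hk ⊢
      lia
  rw [sum_inv_dist_sq_eq]
  calc ∑ k ∈ Ioo 0 N, 1 / (4 * Real.sin (Real.pi * k / N) ^ 2)
      ≤ ∑ k ∈ Ioo 0 N, (N : ℝ) ^ 2 / 16 * (1 / (k : ℝ) ^ 2 + 1 / ((N - k : ℕ) : ℝ) ^ 2) :=
        sum_le_sum fun k hk => inv_sin_sq_le (mem_Ioo.1 hk).1 (mem_Ioo.1 hk).2
    _ = (N : ℝ) ^ 2 / 16 * (∑ k ∈ Ioo 0 N, 1 / (k : ℝ) ^ 2 + ∑ k ∈ Ioo 0 N, 1 / (k : ℝ) ^ 2) := by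
        rw [← mul_sum, sum_add_distrib, hreflect]
    _ ≤ (N : ℝ) ^ 2 / 16 * (2 + 2) := by gcongr
    _ = (N : ℝ) ^ 2 / 4 := by ring

variable (N) in
/-- A bound, at the scale of the grid of `N`-th roots of unity, for the squared relative increment
at `z` of a linear factor with root `r`. -/
noncomputable def rootMass (z r : ℂ) : ℝ :=
  if ‖z - r‖ < gridStep N then 1 else gridStep N ^ 2 / ‖z - r‖ ^ 2

lemma rootMass_nonneg (z r : ℂ) : 0 ≤ rootMass N z r := by
  unfold rootMass; split_ifs <;> positivity

lemma rootMass_le_one (z r : ℂ) : rootMass N z r ≤ 1 := by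
  unfold rootMass
  split_ifs with h
  · exact le_rfl
  · exact div_le_one_of_le₀ (pow_le_pow_left₀ gridStep_nonneg (not_lt.1 h) 2) (sq_nonneg _)

lemma rootMass_le_of_dist_le {x : ℝ} {z r : ℂ} (hx : 0 < x) (h : x ≤ 2 * ‖z - r‖) :
    rootMass N z r ≤ 4 * gridStep N ^ 2 * (1 / x ^ 2) := by
  have hr : 0 < ‖z - r‖ := by linarith
  have hfar : gridStep N ^ 2 / ‖z - r‖ ^ 2 ≤ 4 * gridStep N ^ 2 * (1 / x ^ 2) := by
    calc gridStep N ^ 2 / ‖z - r‖ ^ 2 ≤ gridStep N ^ 2 / (x / 2) ^ 2 := by gcongr; linarith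
      _ = 4 * gridStep N ^ 2 * (1 / x ^ 2) := by field_simp; norm_num
  unfold rootMass
  split_ifs with hnear
  · refine le_trans ((one_le_div (by positivity)).2 ?_) hfar
    gcongr
  · exact hfar

lemma sum_rootMass_le (r : ℂ) : ∑ j : ZMod N, rootMass N (circlePt j) r ≤ 41 := by
  obtain ⟨j₀, -, hmin⟩ := exists_min_image (univ : Finset (ZMod N)) (fun j => ‖circlePt j - r‖)
    ⟨0, mem_univ _⟩
  -- A grid point other than `j₀` is at least half as far from `r` as from `j₀`.
  have hterm (j : ZMod N) : rootMass N (circlePt j) r ≤ (if j = j₀ then 1 else 0) +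
      4 * gridStep N ^ 2 * (if j - j₀ = 0 then 0 else 1 / ‖circlePt (j - j₀) - 1‖ ^ 2) := by
    by_cases h : j = j₀
    · simpa [h] using rootMass_le_one _ _
    rw [if_neg h, if_neg (sub_ne_zero.2 h), zero_add, ← norm_circlePt_sub]
    refine rootMass_le_of_dist_le
      (norm_pos_iff.2 (sub_ne_zero.2 fun h' => h (ZMod.injective_stdAddChar h'))) ?_
    rw [← sub_sub_sub_cancel_right _ _ r]
    linarith [norm_sub_le (circlePt j - r) (circlePt j₀ - r), hmin j (mem_univ _)]
  have hshift : ∑ j : ZMod N, (if j - j₀ = 0 then 0 else 1 / ‖circlePt (j - j₀) - 1‖ ^ 2) =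
      ∑ j : ZMod N, (if j = 0 then 0 else 1 / ‖circlePt j - 1‖ ^ 2) :=
    Equiv.sum_comp (Equiv.subRight j₀) fun j : ZMod N =>
      if j = 0 then (0 : ℝ) else 1 / ‖circlePt j - 1‖ ^ 2
  have hN : (N : ℝ) ≠ 0 := Nat.cast_ne_zero.2 (NeZero.ne N)
  calc ∑ j : ZMod N, rootMass N (circlePt j) r
      ≤ 1 + 4 * gridStep N ^ 2 *
          ∑ j : ZMod N, (if j = 0 then 0 else 1 / ‖circlePt j - 1‖ ^ 2) := by
        refine (sum_le_sum fun j _ => hterm j).trans_eq ?_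
        rw [sum_add_distrib, ← mul_sum, hshift]
        simp
    _ ≤ 1 + 4 * (2 * Real.pi / N) ^ 2 * (N ^ 2 / 4) := by
        gcongr
        · exact gridStep_nonneg
        · exact gridStep_le
        · exact sum_inv_dist_sq_le
    _ = 1 + 4 * Real.pi ^ 2 := by field_simp; ring
    _ ≤ 41 := by nlinarith [Real.pi_lt_d2, Real.pi_pos]

end RootsOfUnity

section TrigPoly

lemma norm_prod_one_add_sub_one_le (x : ℂ → ℂ) (R : Multiset ℂ) (h : ∀ r ∈ R, ‖x r‖ ≤ 1) :
    ‖(R.map fun r => 1 + x r).prod - 1‖ ≤ 2 ^ R.card * (R.map fun r => ‖x r‖).sum := by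
  induction R using Multiset.induction_on with
  | empty => simp
  | cons a R ih =>
    have ihR := ih fun r hr => h r (Multiset.mem_cons_of_mem hr)
    have ha := h a (Multiset.mem_cons_self a R)
    have hnorm : ‖1 + x a‖ ≤ 2 := (norm_add_le _ _).trans (by rw [norm_one]; linarith)
    have hpow : (1 : ℝ) ≤ 2 ^ (R.card + 1) := one_le_pow₀ one_le_two
    simp only [Multiset.map_cons, Multiset.prod_cons, Multiset.sum_cons, Multiset.card_cons]
    set P := (R.map fun r => 1 + x r).prod
    calc ‖(1 + x a) * P - 1‖ = ‖(1 + x a) * (P - 1) + x a‖ := by ring_nf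
      _ ≤ ‖1 + x a‖ * ‖P - 1‖ + ‖x a‖ := (norm_add_le _ _).trans_eq (by rw [norm_mul])
      _ ≤ 2 * (2 ^ R.card * (R.map fun r => ‖x r‖).sum) + 2 ^ (R.card + 1) * ‖x a‖ := by
        gcongr
        exact le_mul_of_one_le_left (norm_nonneg _) hpow
      _ = 2 ^ (R.card + 1) * (‖x a‖ + (R.map fun r => ‖x r‖).sum) := by ring

lemma sq_sum_map_le (x : ℂ → ℝ) (R : Multiset ℂ) :
    (R.map x).sum ^ 2 ≤ 2 ^ R.card * (R.map fun r => x r ^ 2).sum := by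
  induction R using Multiset.induction_on with
  | empty => simp
  | cons a R ih =>
    have hpow : (1 : ℝ) ≤ 2 ^ R.card := one_le_pow₀ one_le_two
    simp only [Multiset.map_cons, Multiset.sum_cons, Multiset.card_cons, pow_succ (2 : ℝ)]
    nlinarith [sq_nonneg (x a - (R.map x).sum), mul_le_mul_of_nonneg_right hpow (sq_nonneg (x a))]

lemma norm_prod_map_le {x : ℂ → ℂ} {B : ℝ} {R : Multiset ℂ} (h : ∀ r ∈ R, ‖x r‖ ≤ B) :
    ‖(R.map x).prod‖ ≤ B ^ R.card := by
  induction R using Multiset.induction_on with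
  | empty => simp
  | cons a R ih =>
    have ihR := ih fun r hr => h r (Multiset.mem_cons_of_mem hr)
    have ha := h a (Multiset.mem_cons_self a R)
    simp only [Multiset.map_cons, Multiset.prod_cons, Multiset.card_cons, norm_mul]
    rw [pow_succ, mul_comm]
    have hB := (norm_nonneg _).trans ha
    gcongr

lemma norm_pow_sub_one_le {u : ℂ} (hu : ‖u‖ = 1) (d : ℕ) : ‖u ^ d - 1‖ ≤ d * ‖u - 1‖ := by
  induction d with
  | zero => simp
  | succ d ih =>
    calc ‖u ^ (d + 1) - 1‖ = ‖u ^ d * (u - 1) + (u ^ d - 1)‖ := by ring_nf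
      _ ≤ ‖u ^ d * (u - 1)‖ + ‖u ^ d - 1‖ := norm_add_le _ _
      _ ≤ ‖u - 1‖ + d * ‖u - 1‖ := by
        rw [norm_mul, norm_pow, hu, one_pow, one_mul]
        gcongr
      _ = (d + 1 : ℕ) * ‖u - 1‖ := by push_cast; ring

lemma softRatio_le_of_sq_le {a b K : ℝ} (hK : 0 ≤ K) (h : b ^ 2 ≤ K * a ^ 2) :
    softRatio a b ≤ K := by
  rw [softRatio, div_le_iff₀ (by positivity)]
  nlinarith [mul_nonneg hK (sq_nonneg b)]

variable {N : ℕ} [NeZero N]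

variable (N) in
/-- The sum of the `rootMass` of the roots in `R`, with multiplicity. -/
noncomputable def totalRootMass (z : ℂ) (R : Multiset ℂ) : ℝ := (R.map (rootMass N z)).sum

lemma totalRootMass_nonneg (z : ℂ) (R : Multiset ℂ) : 0 ≤ totalRootMass N z R :=
  Multiset.sum_nonneg (Multiset.forall_mem_map_iff.2 fun _ _ => rootMass_nonneg _ _)

lemma one_le_totalRootMass {z r : ℂ} {R : Multiset ℂ} (hr : r ∈ R) (h : ‖z - r‖ < gridStep N) :
    1 ≤ totalRootMass N z R := by
  have hmass : rootMass N z r = 1 := if_pos h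
  rw [← hmass]
  exact Multiset.single_le_sum (Multiset.forall_mem_map_iff.2 fun _ _ => rootMass_nonneg _ _) _
    (Multiset.mem_map_of_mem _ hr)

lemma sum_totalRootMass_le (R : Multiset ℂ) :
    ∑ j : ZMod N, totalRootMass N (circlePt j) R ≤ 41 * R.card := by
  unfold totalRootMass
  induction R using Multiset.induction_on with
  | empty => simp
  | cons a R ih =>
    simp only [Multiset.map_cons, Multiset.sum_cons, Multiset.card_cons, sum_add_distrib]
    push_cast
    linarith [sum_rootMass_le (N := N) a]

lemma sq_sum_gridStep_div_le {z : ℂ} {R : Multiset ℂ} (hfar : ∀ r ∈ R, gridStep N ≤ ‖z - r‖) :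
    (R.map fun r => gridStep N / ‖z - r‖).sum ^ 2 ≤ 2 ^ R.card * totalRootMass N z R := by
  have hmass : (R.map fun r => (gridStep N / ‖z - r‖) ^ 2) = R.map (rootMass N z) :=
    Multiset.map_congr rfl fun r hr => by
      rw [rootMass, if_neg (not_lt.2 (hfar r hr)), div_pow]
  rw [totalRootMass, ← hmass]
  exact sq_sum_map_le _ _

/-- `g` is the restriction to the `N`-th roots of unity `z` of a trigonometric polynomial of degree
at most `d`, where `R` is the multiset of roots of the polynomial `z ^ d * g z`. -/
structure IsTrigPoly (d : ℕ) (R : Multiset ℂ) (g : ZMod N → ℝ) : Prop where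
  card_roots_le : R.card ≤ 2 * d
  exists_lead : ∃ a : ℂ, ∀ j, circlePt j ^ d * (g j : ℂ) = a * (R.map fun r => circlePt j - r).prod

namespace IsTrigPoly

variable {d : ℕ} {R : Multiset ℂ} {g : ZMod N → ℝ} {j : ZMod N}

lemma abs_sub_eq (hg : IsTrigPoly d R g) (hne : ∀ r ∈ R, circlePt j - r ≠ 0) (s : ZMod N) :
    |g (j + s) - g j| = ‖circlePt (-s) ^ d *
      (R.map fun r => 1 + (circlePt (j + s) - circlePt j) / (circlePt j - r)).prod - 1‖ *
        |g j| := by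
  obtain ⟨a, ha⟩ := hg.exists_lead
  set P := (R.map fun r => 1 + (circlePt (j + s) - circlePt j) / (circlePt j - r)).prod
  have hprod : (R.map fun r => circlePt (j + s) - r).prod =
      (R.map fun r => circlePt j - r).prod * P := by
    rw [← Multiset.prod_map_mul]
    refine congrArg _ (Multiset.map_congr rfl fun r hr => ?_)
    have := hne r hr
    field_simp
    ring
  have hz : circlePt (j + s) ^ d ≠ 0 :=
    pow_ne_zero _ (norm_ne_zero_iff.1 (by rw [norm_circlePt]; exact one_ne_zero))
  have hshift : circlePt j ^ d = circlePt (j + s) ^ d * circlePt (-s) ^ d := by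
    rw [← mul_pow, ← circlePt_add, add_neg_cancel_right]
  have hratio : ((g (j + s) - g j : ℝ) : ℂ) = (circlePt (-s) ^ d * P - 1) * g j := by
    have hval := ha (j + s)
    rw [hprod, ← mul_assoc, ← ha j, hshift] at hval
    refine mul_left_cancel₀ hz ?_
    push_cast
    rw [mul_sub, hval]
    ring
  simpa only [norm_mul, Complex.norm_real, Real.norm_eq_abs] using congrArg norm hratio

lemma abs_sub_step_le (hg : IsTrigPoly d R g) (hN : 2 ≤ N)
    (hfar : ∀ r ∈ R, gridStep N ≤ ‖circlePt j - r‖) :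
    |g (j + 1) - g j| ≤ (2 ^ R.card * (R.map fun r => gridStep N / ‖circlePt j - r‖).sum +
      d * gridStep N) * |g j| := by
  have hδ := gridStep_pos hN
  have hne (r) (hr : r ∈ R) : circlePt j - r ≠ 0 := norm_pos_iff.1 (hδ.trans_le (hfar r hr))
  have hquot (r : ℂ) : ‖(circlePt (j + 1) - circlePt j) / (circlePt j - r)‖ =
      gridStep N / ‖circlePt j - r‖ := by
    rw [norm_div, norm_circlePt_sub, add_sub_cancel_left, gridStep]
  have hback : ‖circlePt (-1 : ZMod N) - 1‖ = gridStep N := by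
    have h := norm_circlePt_sub (0 : ZMod N) 1
    rwa [zero_sub, norm_sub_rev, show circlePt (0 : ZMod N) = 1 from AddChar.map_zero_eq_one _,
      eq_comm] at h
  have hprod := norm_prod_one_add_sub_one_le
    (fun r => (circlePt (j + 1) - circlePt j) / (circlePt j - r)) R fun r hr => by
      rw [hquot]
      exact div_le_one_of_le₀ (hfar r hr) (norm_nonneg _)
  simp only [hquot] at hprod
  rw [hg.abs_sub_eq hne 1]
  set P := (R.map fun r => 1 + (circlePt (j + 1) - circlePt j) / (circlePt j - r)).prod
  gcongr
  calc ‖circlePt (-1) ^ d * P - 1‖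
      = ‖circlePt (-1) ^ d * (P - 1) + (circlePt (-1) ^ d - 1)‖ := by ring_nf
    _ ≤ ‖P - 1‖ + ‖circlePt (-1 : ZMod N) ^ d - 1‖ := (norm_add_le _ _).trans_eq <| by
        rw [norm_mul, norm_pow, norm_circlePt, one_pow, one_mul]
    _ ≤ _ := add_le_add hprod (hback ▸ norm_pow_sub_one_le (norm_circlePt _) d)

lemma sq_sub_step_le (hg : IsTrigPoly d R g) (hN : 2 ≤ N)
    (hfar : ∀ r ∈ R, gridStep N ≤ ‖circlePt j - r‖) :
    (g (j + 1) - g j) ^ 2 ≤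
      (2 * 64 ^ d * totalRootMass N (circlePt j) R + 2 * d ^ 2 * gridStep N ^ 2) * g j ^ 2 := by
  have hM := totalRootMass_nonneg (N := N) (circlePt j) R
  set T := (R.map fun r => gridStep N / ‖circlePt j - r‖).sum
  set M := totalRootMass N (circlePt j) R
  rw [← sq_abs (g (j + 1) - g j), ← sq_abs (g j)]
  refine (pow_le_pow_left₀ (abs_nonneg _) (hg.abs_sub_step_le hN hfar) 2).trans ?_
  rw [mul_pow]
  gcongr
  calc (2 ^ R.card * T + d * gridStep N) ^ 2
      ≤ 2 * ((2 ^ R.card * T) ^ 2 + (d * gridStep N) ^ 2) := add_sq_le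
    _ ≤ 2 * ((2 ^ R.card) ^ 2 * (2 ^ R.card * M) + (d * gridStep N) ^ 2) := by
        rw [mul_pow _ T]
        gcongr
        exact sq_sum_gridStep_div_le hfar
    _ = 2 * 8 ^ R.card * M + 2 * d ^ 2 * gridStep N ^ 2 := by
        rw [← mul_assoc, ← pow_succ, ← pow_mul, mul_comm R.card, pow_mul]
        norm_num
        ring
    _ ≤ 2 * 8 ^ (2 * d) * M + 2 * d ^ 2 * gridStep N ^ 2 := by
        gcongr
        · norm_num
        · exact hg.card_roots_le
    _ = 2 * 64 ^ d * M + 2 * d ^ 2 * gridStep N ^ 2 := by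
        rw [pow_mul]
        norm_num

lemma abs_sub_le (hg : IsTrigPoly d R g) (hN : 2 ≤ N)
    (hfar : ∀ r ∈ R, gridStep N ≤ ‖circlePt j - r‖) (s : ZMod N) :
    |g (j + s) - g j| ≤ 2 * N ^ (2 * d) * |g j| := by
  have hN' : (2 : ℝ) ≤ N := mod_cast hN
  have hδ := gridStep_pos hN
  have hne (r) (hr : r ∈ R) : circlePt j - r ≠ 0 := norm_pos_iff.1 (hδ.trans_le (hfar r hr))
  have hone : (1 : ℝ) ≤ N ^ (2 * d) := one_le_pow₀ (by linarith)
  have hfactor (r) (hr : r ∈ R) :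
      ‖1 + (circlePt (j + s) - circlePt j) / (circlePt j - r)‖ ≤ N := by
    have htwo : ‖circlePt (j + s) - circlePt j‖ ≤ 2 :=
      (norm_sub_le _ _).trans_eq (by rw [norm_circlePt, norm_circlePt, one_add_one_eq_two])
    calc ‖1 + (circlePt (j + s) - circlePt j) / (circlePt j - r)‖
        ≤ 1 + ‖circlePt (j + s) - circlePt j‖ / ‖circlePt j - r‖ :=
          (norm_add_le _ _).trans_eq (by rw [norm_one, norm_div])
      _ ≤ 1 + 2 / (4 / N) := by
          gcongr
          exact (four_div_le_gridStep hN).trans (hfar r hr)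
      _ = 1 + N / 2 := by field_simp; ring
      _ ≤ N := by linarith
  have hprod := norm_prod_map_le hfactor
  rw [hg.abs_sub_eq hne s]
  set P := (R.map fun r => 1 + (circlePt (j + s) - circlePt j) / (circlePt j - r)).prod
  gcongr
  calc ‖circlePt (-s) ^ d * P - 1‖ ≤ ‖P‖ + 1 := (norm_sub_le _ _).trans_eq <| by
        rw [norm_mul, norm_pow, norm_circlePt, one_pow, one_mul, norm_one]
    _ ≤ N ^ R.card + N ^ (2 * d) := add_le_add hprod hone
    _ ≤ N ^ (2 * d) + N ^ (2 * d) := by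
        gcongr
        · linarith
        · exact hg.card_roots_le
    _ = 2 * N ^ (2 * d) := by ring

end IsTrigPoly

lemma sum_softRatio_le {R : Multiset ℂ} {a b : ZMod N → ℝ} {A B : ℝ} (hA : 1 ≤ A)
    (hB : 0 ≤ B) (h : ∀ j, (∀ r ∈ R, gridStep N ≤ ‖circlePt j - r‖) →
      b j ^ 2 ≤ (A * totalRootMass N (circlePt j) R + B) * a j ^ 2) :
    ∑ j, softRatio (a j) (b j) ≤ A * (41 * R.card) + N * B := by
  have hterm (j : ZMod N) :
      softRatio (a j) (b j) ≤ A * totalRootMass N (circlePt j) R + B := by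
    have hM := totalRootMass_nonneg (N := N) (circlePt j) R
    by_cases hnear : ∃ r ∈ R, ‖circlePt j - r‖ < gridStep N
    · obtain ⟨r, hr, hrj⟩ := hnear
      have := one_le_totalRootMass hr hrj
      nlinarith [softRatio_le_one (a j) (b j)]
    · push Not at hnear
      exact softRatio_le_of_sq_le (by positivity) (h j hnear)
  calc ∑ j, softRatio (a j) (b j)
      ≤ ∑ j : ZMod N, (A * totalRootMass N (circlePt j) R + B) := sum_le_sum fun j _ => hterm j
    _ = A * ∑ j : ZMod N, totalRootMass N (circlePt j) R + N * B := by
        rw [sum_add_distrib, ← mul_sum, sum_const, card_univ, ZMod.card, nsmul_eq_mul]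
    _ ≤ A * (41 * R.card) + N * B := by
        gcongr
        exact sum_totalRootMass_le R

namespace IsTrigPoly

variable {d : ℕ} {R : Multiset ℂ} {g : ZMod N → ℝ}

lemma sum_softRatio_step_le (hg : IsTrigPoly d R g) (hN : 2 ≤ N) (t : ℝ) :
    ∑ j, softRatio (t * g j) (t * (g (j + 1) - g j)) ≤ 2 * 64 ^ d * (82 * d) + 80 * d ^ 2 := by
  have hN' : (2 : ℝ) ≤ N := mod_cast hN
  have hcard : (R.card : ℝ) ≤ 2 * d := mod_cast hg.card_roots_le
  have hA : (1 : ℝ) ≤ 2 * 64 ^ d := by linarith [one_le_pow₀ (n := d) (by norm_num : (1 : ℝ) ≤ 64)]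
  refine (sum_softRatio_le (R := R) (B := 2 * d ^ 2 * gridStep N ^ 2) hA (by positivity)
    fun j hfar => ?_).trans ?_
  · rw [mul_pow, mul_pow, mul_left_comm]
    gcongr
    exact hg.sq_sub_step_le hN hfar
  · calc 2 * 64 ^ d * (41 * (R.card : ℝ)) + N * (2 * d ^ 2 * gridStep N ^ 2)
        ≤ 2 * 64 ^ d * (41 * (2 * d)) + N * (2 * d ^ 2 * (2 * Real.pi / N) ^ 2) := by
          gcongr
          · exact gridStep_nonneg
          · exact gridStep_le
      _ = 2 * 64 ^ d * (82 * d) + 8 * Real.pi ^ 2 / N * d ^ 2 := by field_simp; ring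
      _ ≤ 2 * 64 ^ d * (82 * d) + 80 * d ^ 2 := by
          gcongr
          rw [div_le_iff₀ (by linarith)]
          nlinarith [Real.pi_lt_d2, Real.pi_pos]

lemma sum_softRatio_shift_le (hg : IsTrigPoly d R g) (hN : 2 ≤ N) (s : ZMod N) :
    ∑ j, softRatio (N ^ (2 * d + 1) * g j) (g (j + s) - g j) ≤ 82 * d + 2 := by
  have hN' : (2 : ℝ) ≤ N := mod_cast hN
  have hcard : (R.card : ℝ) ≤ 2 * d := mod_cast hg.card_roots_le
  refine (sum_softRatio_le (R := R) (B := 4 / N ^ 2) le_rfl (by positivity)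
    fun j hfar => ?_).trans ?_
  · calc (g (j + s) - g j) ^ 2 ≤ (2 * N ^ (2 * d) * g j) ^ 2 := by
          rw [sq_le_sq, abs_mul, abs_of_pos (by positivity : (0 : ℝ) < 2 * N ^ (2 * d))]
          exact hg.abs_sub_le hN hfar s
      _ = 4 / N ^ 2 * (N ^ (2 * d + 1) * g j) ^ 2 := by
          rw [pow_succ (N : ℝ) (2 * d)]
          field_simp
          ring
      _ ≤ _ := by
          gcongr
          exact le_add_of_nonneg_left (mul_nonneg zero_le_one (totalRootMass_nonneg _ _))
  · calc 1 * (41 * (R.card : ℝ)) + N * (4 / N ^ 2) = 41 * R.card + 4 / N := by field_simp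
      _ ≤ 41 * (2 * d) + 4 / 2 := by gcongr
      _ = 82 * d + 2 := by ring

end IsTrigPoly

/-- The coordinate of a grid point of the circle, normalised to have second moment one. -/
noncomputable def circleCoord (k : ZMod N) : ℝ := √2 * (circlePt k).re

lemma circlePt_mul_circleCoord_add (k j : ZMod N) :
    circlePt j * (circleCoord (k + j) : ℂ) =
      √2 / 2 * circlePt k * circlePt j ^ 2 + √2 / 2 * starRingEnd ℂ (circlePt k) := by
  have hunit : circlePt j * starRingEnd ℂ (circlePt j) = 1 := by
    rw [Complex.mul_conj, Complex.normSq_eq_norm_sq, norm_circlePt]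
    norm_num
  unfold circleCoord
  push_cast
  rw [Complex.re_eq_add_conj, circlePt_add, map_mul]
  linear_combination (√2 : ℂ) / 2 * starRingEnd ℂ (circlePt k) * hunit

open Polynomial in
lemma exists_polynomial_eval_circlePt {ι : Type*} [Fintype ι] {c : Finset ι → ℝ} {d : ℕ}
    (hc : DegreeLE d c) (φ : ι → ZMod N) :
    ∃ Q : ℂ[X], Q.natDegree ≤ 2 * d ∧ ∀ j : ZMod N, Q.eval (circlePt j) =
      circlePt j ^ d * (mlEval c (fun i => circleCoord (φ i + j)) : ℂ) := by
  let q (i : ι) : ℂ[X] :=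
    C (√2 / 2 * circlePt (φ i)) * X ^ 2 + C (√2 / 2 * starRingEnd ℂ (circlePt (φ i)))
  have hq (i : ι) (j : ZMod N) :
      (q i).eval (circlePt j) = circlePt j * (circleCoord (φ i + j) : ℂ) := by
    simp only [q, eval_add, eval_mul, eval_C, eval_pow, eval_X, circlePt_mul_circleCoord_add]
  refine ⟨∑ S, C (c S : ℂ) * ((∏ i ∈ S, q i) * X ^ (d - #S)),
    natDegree_sum_le_of_forall_le _ _ fun S _ => ?_, fun j => ?_⟩
  · by_cases hS : c S = 0
    · simp [hS]
    have hcard := hc S hS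
    have hprod : (∏ i ∈ S, q i).natDegree ≤ ∑ i ∈ S, 2 :=
      (natDegree_prod_le _ _).trans (sum_le_sum fun i _ => by unfold q; compute_degree)
    rw [sum_const, smul_eq_mul] at hprod
    refine (natDegree_C_mul_le _ _).trans (natDegree_mul_le.trans ?_)
    have hX : (X ^ (d - #S) : ℂ[X]).natDegree ≤ d - #S := natDegree_X_pow_le _
    lia
  · rw [eval_finsetSum, mlEval]
    push_cast
    rw [mul_sum]
    refine sum_congr rfl fun S _ => ?_
    by_cases hS : c S = 0
    · simp [hS]
    rw [eval_mul, eval_C, eval_mul, eval_pow, eval_X, eval_prod, prod_congr rfl fun i _ => hq i j,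
      prod_mul_distrib, prod_const, ← Nat.add_sub_cancel' (hc S hS), pow_add,
      Nat.add_sub_cancel_left]
    ring

lemma exists_isTrigPoly {ι : Type*} [Fintype ι] {c : Finset ι → ℝ} {d : ℕ} (hc : DegreeLE d c)
    (φ : ι → ZMod N) :
    ∃ R : Multiset ℂ, IsTrigPoly d R fun j => mlEval c fun i => circleCoord (φ i + j) := by
  obtain ⟨Q, hdeg, heval⟩ := exists_polynomial_eval_circlePt hc φ
  refine ⟨Q.roots, (Polynomial.card_roots' _).trans hdeg, Q.leadingCoeff, fun j => ?_⟩
  rw [← heval j]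
  exact (IsAlgClosed.splits Q).eval_eq_prod_roots _

end TrigPoly

section Comparison

variable {κ κ' : Type*} [Fintype κ] [Fintype κ'] {w : κ → ℝ} {w' : κ' → ℝ}

lemma IsProbWeight.sum_fst (hw' : IsProbWeight w') (f : κ → ℝ) :
    ∑ k : κ × κ', w k.1 * w' k.2 * f k.1 = ∑ k, w k * f k := by
  rw [Fintype.sum_prod_type]
  refine sum_congr rfl fun a _ => ?_
  simp only [mul_right_comm _ _ (f a), ← mul_sum, hw'.sum_eq_one, mul_one]

lemma IsProbWeight.sum_snd (hw : IsProbWeight w) (f : κ' → ℝ) :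
    ∑ k : κ × κ', w k.1 * w' k.2 * f k.2 = ∑ k, w' k * f k := by
  simp only [Fintype.sum_prod_type_right, mul_assoc, ← sum_mul, hw.sum_eq_one, one_mul]

lemma IsStandardized.fst {X : κ → ℝ} (hX : IsStandardized w X) (hw' : IsProbWeight w') :
    IsStandardized (fun k : κ × κ' => w k.1 * w' k.2) (fun k => X k.1) where
  mean := (hw'.sum_fst X).trans hX.mean
  sq := (hw'.sum_fst fun k => X k ^ 2).trans hX.sq
  cube := (hw'.sum_fst fun k => X k ^ 3).trans hX.cube
  abs_le_two _ := hX.abs_le_two _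

lemma IsStandardized.snd {X : κ' → ℝ} (hX : IsStandardized w' X) (hw : IsProbWeight w) :
    IsStandardized (fun k : κ × κ' => w k.1 * w' k.2) (fun k => X k.2) where
  mean := (hw.sum_snd X).trans hX.mean
  sq := (hw.sum_snd fun k => X k ^ 2).trans hX.sq
  cube := (hw.sum_snd fun k => X k ^ 3).trans hX.cube
  abs_le_two _ := hX.abs_le_two _

lemma IsStandardized.comp_equiv {X : κ → ℝ} (hX : IsStandardized (unif κ) X) (e : κ ≃ κ) :
    IsStandardized (unif κ) (X ∘ e) where
  mean := (e.sum_comp fun k => unif κ k * X k).trans hX.mean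
  sq := (e.sum_comp fun k => unif κ k * X k ^ 2).trans hX.sq
  cube := (e.sum_comp fun k => unif κ k * X k ^ 3).trans hX.cube
  abs_le_two _ := hX.abs_le_two _

variable {ι : Type*} [Fintype ι] [DecidableEq ι] {d : ℕ} {c : Finset ι → ℝ} {t l s : ℝ}

theorem abs_softRatioMean_sub_le_of_corr_eq (hw : IsProbWeight w) (hw' : IsProbWeight w')
    {ξ η : ι → κ → ℝ} {ξ' η' : ι → κ' → ℝ}
    (hξ : ∀ i, IsStandardized w (ξ i)) (hη : ∀ i, IsStandardized w (η i))
    (hξ' : ∀ i, IsStandardized w' (ξ' i)) (hη' : ∀ i, IsStandardized w' (η' i))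
    (hcorr : ∀ i, ∑ k, w k * (ξ i k * η i k) = ∑ k, w' k * (ξ' i k * η' i k))
    (hl : 0 ≤ l) (hlt : l ≤ t) (hs : 0 < s) (hc : DegreeLE d c) :
    |softRatioMean w' t l ξ' η' c - softRatioMean w t l ξ η c| ≤
      34816 * t ^ 3 * (s * totalInfluence c + 9 ^ d * (∑ i, influence i c ^ 2) / s) := by
  have h := abs_softRatioMean_sub_le (hw.prod hw') (fun i => (hξ i).fst hw')
    (fun i => (hη i).fst hw') (fun i => (hξ' i).snd hw) (fun i => (hη' i).snd hw)
    (fun i => by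
      rw [hw'.sum_fst fun k => ξ i k * η i k, hw.sum_snd fun k => ξ' i k * η' i k, hcorr])
    hl hlt hs hc
  unfold softRatioMean polyRV at h ⊢
  rwa [hw'.expect_fst fun a => softRatio (t * mlEval c fun i => ξ i (a i))
      (l * ((mlEval c fun i => η i (a i)) - mlEval c fun i => ξ i (a i))),
    hw.expect_snd fun b => softRatio (t * mlEval c fun i => ξ' i (b i))
      (l * ((mlEval c fun i => η' i (b i)) - mlEval c fun i => ξ' i (b i)))] at h

/-- The joint law of two uniform signs with correlation `ρ`. -/
noncomputable def correlatedCoin (ρ : ℝ) (p : Bool × Bool) : ℝ := (1 + ρ * (chi p.1 * chi p.2)) / 4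

lemma isProbWeight_correlatedCoin {ρ : ℝ} (hρ : |ρ| ≤ 1) : IsProbWeight (correlatedCoin ρ) := by
  obtain ⟨h0, h1⟩ := abs_le.1 hρ
  refine ⟨?_, ?_⟩
  · rintro ⟨a, b⟩
    cases a <;> cases b <;> norm_num [correlatedCoin, chi] <;> linarith
  · norm_num [Fintype.sum_prod_type, correlatedCoin, chi]
    ring

lemma sum_correlatedCoin_fst (ρ : ℝ) (f : Bool → ℝ) :
    ∑ p, correlatedCoin ρ p * f p.1 = ∑ a, unif Bool a * f a := by
  simp only [Fintype.sum_prod_type, correlatedCoin, unif, chi, Fintype.sum_bool, Fintype.card_bool]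
  norm_num
  ring

lemma sum_correlatedCoin_snd (ρ : ℝ) (f : Bool → ℝ) :
    ∑ p, correlatedCoin ρ p * f p.2 = ∑ a, unif Bool a * f a := by
  simp only [Fintype.sum_prod_type, correlatedCoin, unif, chi, Fintype.sum_bool, Fintype.card_bool]
  norm_num
  ring

lemma isStandardized_correlatedCoin_fst (ρ : ℝ) :
    IsStandardized (correlatedCoin ρ) fun p => chi p.1 where
  mean := (sum_correlatedCoin_fst ρ chi).trans isStandardized_chi.mean
  sq := (sum_correlatedCoin_fst ρ fun a => chi a ^ 2).trans isStandardized_chi.sq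
  cube := (sum_correlatedCoin_fst ρ fun a => chi a ^ 3).trans isStandardized_chi.cube
  abs_le_two _ := isStandardized_chi.abs_le_two _

lemma isStandardized_correlatedCoin_snd (ρ : ℝ) :
    IsStandardized (correlatedCoin ρ) fun p => chi p.2 where
  mean := (sum_correlatedCoin_snd ρ chi).trans isStandardized_chi.mean
  sq := (sum_correlatedCoin_snd ρ fun a => chi a ^ 2).trans isStandardized_chi.sq
  cube := (sum_correlatedCoin_snd ρ fun a => chi a ^ 3).trans isStandardized_chi.cube
  abs_le_two _ := isStandardized_chi.abs_le_two _

lemma sum_correlatedCoin_mul (ρ : ℝ) : ∑ p, correlatedCoin ρ p * (chi p.1 * chi p.2) = ρ := by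
  simp only [Fintype.sum_prod_type, correlatedCoin, chi, Fintype.sum_bool]
  norm_num
  ring

variable {N : ℕ} [NeZero N] {q : ZMod N}

lemma sum_unif_mul_of_add_shift_eq {f : ZMod N → ℝ} (a : ZMod N) {v : ℝ}
    (h : ∀ k, f k + f (k + a) = v) : ∑ k, unif (ZMod N) k * f k = v / 2 := by
  have hN : (0 : ℝ) < N := mod_cast Nat.pos_of_ne_zero (NeZero.ne N)
  have hshift : ∑ k, f (k + a) = ∑ k, f k := Equiv.sum_comp (Equiv.addRight a) f
  have hsum : ∑ k, (f k + f (k + a)) = N * v := by simp [h]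
  rw [sum_add_distrib, hshift] at hsum
  simp only [unif, ZMod.card, ← mul_sum]
  field_simp
  linarith

lemma circlePt_natCast_eq_I {M : ℕ} (hN : N = 4 * M) : circlePt (M : ZMod N) = Complex.I := by
  have hM : (M : ℂ) ≠ 0 := by
    rintro h
    exact NeZero.ne N (by rw [hN, Nat.cast_eq_zero.1 h, mul_zero])
  have h := ZMod.stdAddChar_coe (N := N) (M : ℤ)
  push_cast at h
  have hangle : 2 * Real.pi * Complex.I * M / N = Real.pi / 2 * Complex.I := by
    rw [hN]
    push_cast
    field_simp
    norm_num
  rw [circlePt, h, hangle, Complex.exp_pi_div_two_mul_I]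

lemma sum_circleCoord_mul (hq : circlePt q = Complex.I) (a : ZMod N) :
    ∑ k, unif (ZMod N) k * (circleCoord k * circleCoord (k + a)) = (circlePt a).re := by
  have hunit (k : ZMod N) : (circlePt k).re ^ 2 + (circlePt k).im ^ 2 = 1 := by
    have h := Complex.sq_norm (circlePt k)
    rw [norm_circlePt, Complex.normSq_apply] at h
    linarith
  rw [sum_unif_mul_of_add_shift_eq q (v := 2 * (circlePt a).re) fun k => ?_]
  · ring
  simp only [circleCoord, circlePt_add, hq, Complex.mul_re, Complex.I_re, Complex.I_im,
    Complex.mul_im]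
  linear_combination ((circlePt a).re * ((circlePt k).re ^ 2 + (circlePt k).im ^ 2)) *
    Real.sq_sqrt (zero_le_two (α := ℝ)) + 2 * (circlePt a).re * hunit k

lemma isStandardized_circleCoord (hq : circlePt q = Complex.I) :
    IsStandardized (unif (ZMod N)) circleCoord := by
  have hneg (k : ZMod N) : circleCoord (k + (q + q)) = -circleCoord k := by
    simp [circleCoord, circlePt_add, hq]
  refine ⟨?_, ?_, ?_, fun k => ?_⟩
  · rw [sum_unif_mul_of_add_shift_eq (q + q) (v := 0) fun k => by rw [hneg]; ring, zero_div]
  · have h := sum_circleCoord_mul hq 0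
    simpa [pow_two, circlePt, AddChar.map_zero_eq_one] using h
  · rw [sum_unif_mul_of_add_shift_eq (q + q) (v := 0) fun k => by rw [hneg]; ring, zero_div]
  · rw [circleCoord, abs_mul, abs_of_nonneg (Real.sqrt_nonneg 2)]
    have hre : |(circlePt k).re| ≤ 1 := (Complex.abs_re_le_norm _).trans_eq (norm_circlePt _)
    have hsqrt : √2 ≤ 2 := Real.sqrt_le_iff.2 ⟨zero_le_two, by norm_num⟩
    exact (mul_le_mul hsqrt hre (abs_nonneg _) zero_le_two).trans_eq (mul_one 2)

/-- The mean of `softRatio` along two copies of `c` evaluated at uniform points of the grid on the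
circle, the second of which is turned by the angle of `circlePt a`. -/
noncomputable def circleRatioMean (N : ℕ) [NeZero N] (t l : ℝ) (a : ZMod N)
    (c : Finset ι → ℝ) : ℝ :=
  softRatioMean (unif (ZMod N)) t l (fun _ => circleCoord) (fun _ k => circleCoord (k + a)) c

/-- The mean of `softRatio` along two copies of `c` evaluated at uniform points of the cube whose
coordinates have correlation `ρ`. -/
noncomputable def cubeRatioMean (t l ρ : ℝ) (c : Finset ι → ℝ) : ℝ :=
  softRatioMean (correlatedCoin ρ) t l (fun _ p => chi p.1) (fun _ p => chi p.2) c

lemma expect_unif_le_of_sum_shift_le {F : (ι → ZMod N) → ℝ} {B : ℝ}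
    (h : ∀ φ : ι → ZMod N, ∑ j : ZMod N, F (fun i => φ i + j) ≤ B) :
    expect (unif (ZMod N)) F ≤ B / N := by
  have hN : (0 : ℝ) < N := mod_cast Nat.pos_of_ne_zero (NeZero.ne N)
  have hshift (j : ZMod N) : expect (unif (ZMod N)) (fun φ : ι → ZMod N => F fun i => φ i + j) =
      expect (unif (ZMod N)) F :=
    expect_map (· + j) (fun k => by simp [unif, ← eq_sub_iff_add_eq]) F
  rw [le_div_iff₀ hN]
  calc expect (unif (ZMod N)) F * N
      = ∑ j : ZMod N, expect (unif (ZMod N)) (fun φ : ι → ZMod N => F fun i => φ i + j) := by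
        simp only [hshift, sum_const, card_univ, ZMod.card, nsmul_eq_mul, mul_comm]
    _ = expect (unif (ZMod N)) (fun φ : ι → ZMod N => ∑ j : ZMod N, F fun i => φ i + j) :=
        (expect_sum _ _).symm
    _ ≤ expect (unif (ZMod N)) fun _ : ι → ZMod N => B :=
        (isProbWeight_unif _).expect_mono h
    _ = B := (isProbWeight_unif _).expect_const B

lemma circleRatioMean_step_le (hN : 2 ≤ N) (hc : DegreeLE d c) (t : ℝ) :
    circleRatioMean N t t 1 c ≤ (2 * 64 ^ d * (82 * d) + 80 * d ^ 2) / N := by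
  refine expect_unif_le_of_sum_shift_le fun φ => ?_
  obtain ⟨R, hR⟩ := exists_isTrigPoly hc φ
  simpa only [polyRV, add_assoc] using hR.sum_softRatio_step_le hN t

lemma circleRatioMean_shift_le (hN : 2 ≤ N) (hc : DegreeLE d c) (a : ZMod N) :
    circleRatioMean N (N ^ (2 * d + 1)) 1 a c ≤ (82 * d + 2) / N := by
  refine expect_unif_le_of_sum_shift_le fun φ => ?_
  obtain ⟨R, hR⟩ := exists_isTrigPoly hc φ
  simpa only [polyRV, add_assoc, one_mul] using hR.sum_softRatio_shift_le hN a

lemma cubeRatioMean_le (hq : circlePt q = Complex.I) (a : ZMod N) (hl : 0 ≤ l) (hlt : l ≤ t)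
    (hs : 0 < s) (hc : DegreeLE d c) :
    cubeRatioMean t l (circlePt a).re c ≤ circleRatioMean N t l a c +
      34816 * t ^ 3 * (s * totalInfluence c + 9 ^ d * (∑ i, influence i c ^ 2) / s) := by
  have hρ : |(circlePt a).re| ≤ 1 := (Complex.abs_re_le_norm _).trans_eq (norm_circlePt _)
  have h := abs_softRatioMean_sub_le_of_corr_eq (c := c) (isProbWeight_unif (ZMod N))
    (isProbWeight_correlatedCoin hρ) (fun _ => isStandardized_circleCoord hq)
    (fun _ => (isStandardized_circleCoord hq).comp_equiv (Equiv.addRight a))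
    (fun _ => isStandardized_correlatedCoin_fst _) (fun _ => isStandardized_correlatedCoin_snd _)
    (fun _ => (sum_circleCoord_mul hq a).trans (sum_correlatedCoin_mul _).symm) hl hlt hs hc
  exact sub_le_iff_le_add'.1 ((le_abs_self _).trans h)

end Comparison

section Anticoncentration

variable {ι : Type*} [DecidableEq ι] {d : ℕ} {c : Finset ι → ℝ}

lemma centered_update_empty (c : Finset ι → ℝ) (a : ℝ) :
    centered (Function.update c ∅ a) = centered c := by
  funext S
  by_cases hS : S = ∅ <;> simp [centered, hS]

lemma DegreeLE.update_empty (hc : DegreeLE d c) (a : ℝ) : DegreeLE d (Function.update c ∅ a) := by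
  intro S hS
  by_cases h : S = ∅
  · simp [h]
  · exact hc S (by rwa [Function.update_of_ne h] at hS)

variable [Fintype ι]

lemma cubeEval_update_empty (c : Finset ι → ℝ) (u : ℝ) (x : ι → Bool) :
    cubeEval (Function.update c ∅ (c ∅ - u)) x = cubeEval c x - u := by
  rw [cubeEval_eq_add_centered, cubeEval_eq_add_centered c, centered_update_empty,
    Function.update_self]
  ring

lemma sqNorm_update_empty (c : Finset ι → ℝ) (a : ℝ) :
    sqNorm (Function.update c ∅ a) = a ^ 2 + variance c := by
  rw [sqNorm_eq_sq_add_variance, variance, centered_update_empty, Function.update_self, variance]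

lemma expect_cubeEval_sub_sq (c : Finset ι → ℝ) (u : ℝ) :
    expect (unif Bool) (fun y => (cubeEval c y - u) ^ 2) = (c ∅ - u) ^ 2 + variance c := by
  have h := expect_polyRV_sq (isProbWeight_unif Bool) (fun _ => isStandardized_chi)
    (Function.update c ∅ (c ∅ - u))
  rw [sqNorm_update_empty] at h
  simp only [← cubeEval_update_empty]
  exact h

lemma expect_cubeEval_sub_pow_four_le (hc : DegreeLE d c) (u : ℝ) :
    expect (unif Bool) (fun y => (cubeEval c y - u) ^ 4) ≤
      9 ^ d * ((c ∅ - u) ^ 2 + variance c) ^ 2 := by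
  have h9 : (9 : ℝ) ^ d = (3 ^ d) ^ 2 := by rw [← pow_mul, mul_comm, pow_mul]; norm_num
  have h := expect_polyRV_pow_four_le (isProbWeight_unif Bool) (fun _ => isStandardized_chi)
    (hc.update_empty (c ∅ - u))
  rw [sqNorm_update_empty, mul_pow, ← h9] at h
  simp only [← cubeEval_update_empty]
  exact h

lemma IsProbWeight.sq_expect_le_expect_div_mul {κ : Type*} [Fintype κ] {w : κ → ℝ}
    (hw : IsProbWeight w) {X Y : (ι → κ) → ℝ} (hX : ∀ ω, 0 ≤ X ω) (hXY : ∀ ω, X ω ≤ Y ω) :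
    expect w X ^ 2 ≤ expect w (fun ω => X ω / Y ω) * expect w (fun ω => X ω * Y ω) := by
  have h := hw.sq_expect_mul_le (fun ω => √(X ω / Y ω)) fun ω => √(X ω * Y ω)
  have hmul (ω : ι → κ) : √(X ω / Y ω) * √(X ω * Y ω) = X ω := by
    rw [← Real.sqrt_mul (div_nonneg (hX ω) ((hX ω).trans (hXY ω)))]
    rcases ((hX ω).trans (hXY ω)).eq_or_lt with hY | hY
    · rw [le_antisymm (hY ▸ hXY ω) (hX ω)]
      simp
    · rw [← Real.sqrt_sq (hX ω)]
      congr 1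
      rw [Real.sqrt_sq (hX ω)]
      field_simp
  simpa only [hmul, Real.sq_sqrt (div_nonneg (hX _) ((hX _).trans (hXY _))),
    Real.sq_sqrt (mul_nonneg (hX _) ((hX _).trans (hXY _)))] using h

lemma le_expect_softRatio (hc : DegreeLE d c) (hvar : variance c = 1) {a : ℝ} (ha : |a| ≤ 1)
    (u : ℝ) :
    1 / (2 + 9 ^ d) ≤ expect (unif Bool) fun y => softRatio a (cubeEval c y - u) := by
  set s := (c ∅ - u) ^ 2 + variance c with hs
  have hcs := (isProbWeight_unif Bool).sq_expect_le_expect_div_mul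
    (X := fun y : ι → Bool => (cubeEval c y - u) ^ 2)
    (Y := fun y => 2 + (cubeEval c y - u) ^ 2) (fun y => sq_nonneg _) fun y => by linarith
  have hratio (y : ι → Bool) : (cubeEval c y - u) ^ 2 / (2 + (cubeEval c y - u) ^ 2) ≤
      softRatio a (cubeEval c y - u) := by
    have : a ^ 2 ≤ 1 := (sq_le_one_iff_abs_le_one a).2 ha
    exact div_le_div_of_nonneg_left (sq_nonneg _) (by positivity) (by linarith)
  have hfourth := expect_cubeEval_sub_pow_four_le hc u
  have hprod : expect (unif Bool) (fun y =>
      (cubeEval c y - u) ^ 2 * (2 + (cubeEval c y - u) ^ 2)) ≤ (2 + 9 ^ d) * s ^ 2 := by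
    simp only [mul_add, ← pow_add, Nat.reduceAdd, mul_comm _ (2 : ℝ), expect_add,
      expect_mul_left, expect_cubeEval_sub_sq, ← hs]
    nlinarith
  have hmono := (isProbWeight_unif Bool).expect_mono hratio
  rw [div_le_iff₀ (by positivity)]
  refine le_of_mul_le_mul_right ?_ (by positivity : 0 < s ^ 2)
  rw [one_mul, mul_assoc]
  rw [expect_cubeEval_sub_sq, ← hs] at hcs
  have hratio_nonneg := (isProbWeight_unif Bool).expect_nonneg fun y : ι → Bool =>
    softRatio_nonneg a (cubeEval c y - u)
  exact hcs.trans (mul_le_mul hmono hprod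
    ((isProbWeight_unif Bool).expect_nonneg fun y => by positivity) hratio_nonneg)

lemma correlatedCoin_zero : correlatedCoin 0 = fun k => unif Bool k.1 * unif Bool k.2 := by
  funext k
  norm_num [correlatedCoin, unif]

lemma expect_correlatedCoin_fst (ρ : ℝ) (F : (ι → Bool) → ℝ) :
    expect (correlatedCoin ρ) (fun p => F (Prod.fst ∘ p)) = expect (unif Bool) F := by
  refine expect_map Prod.fst (fun k => ?_) F
  cases k <;> norm_num [Fintype.sum_prod_type, correlatedCoin, chi, unif] <;> ring

lemma expect_correlatedCoin_snd (ρ : ℝ) (F : (ι → Bool) → ℝ) :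
    expect (correlatedCoin ρ) (fun p => F (Prod.snd ∘ p)) = expect (unif Bool) F := by
  refine expect_map Prod.snd (fun k => ?_) F
  cases k <;> norm_num [Fintype.sum_prod_type, correlatedCoin, chi, unif] <;> ring

lemma expect_correlatedCoin_zero (F : (ι → Bool) → (ι → Bool) → ℝ) :
    expect (correlatedCoin 0) (fun p => F (Prod.fst ∘ p) (Prod.snd ∘ p)) =
      expect (unif Bool) fun y => expect (unif Bool) (F y) := by
  rw [correlatedCoin_zero]
  exact expect_prod _

/-- The ratio `(c(y') - c(y))² / (c(y)² + (c(y') - c(y))²)` at the pair of points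
`p = (y, y')`. -/
noncomputable def incrementRatio (c : Finset ι → ℝ) (p : ι → Bool × Bool) : ℝ :=
  (cubeEval c (Prod.snd ∘ p) - cubeEval c (Prod.fst ∘ p)) ^ 2 /
    (cubeEval c (Prod.fst ∘ p) ^ 2 +
      (cubeEval c (Prod.snd ∘ p) - cubeEval c (Prod.fst ∘ p)) ^ 2)

lemma sq_sub_mul_le (μ a b : ℝ) :
    (b - a) ^ 2 * (a ^ 2 + (b - a) ^ 2) ≤
      2 * μ ^ 2 * (b - a) ^ 2 + (17 * (a - μ) ^ 4 + 16 * (b - μ) ^ 4) := by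
  have hinc : (b - a) ^ 2 ≤ 2 * (a - μ) ^ 2 + 2 * (b - μ) ^ 2 := by
    nlinarith [sq_nonneg (a - μ + (b - μ))]
  have hinc_sq : ((b - a) ^ 2) ^ 2 ≤ 8 * (a - μ) ^ 4 + 8 * (b - μ) ^ 4 :=
    (pow_le_pow_left₀ (sq_nonneg _) hinc 2).trans
      (by nlinarith [sq_nonneg ((a - μ) ^ 2 - (b - μ) ^ 2)])
  have ha : a ^ 2 ≤ 2 * μ ^ 2 + 2 * (a - μ) ^ 2 := by nlinarith [sq_nonneg (a - 2 * μ)]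
  nlinarith [mul_le_mul_of_nonneg_left ha (sq_nonneg (b - a)),
    sq_nonneg ((a - μ) ^ 2 - (b - a) ^ 2)]

lemma relVariance_le_expect_incrementRatio (hc : DegreeLE d c) :
    relVariance c ≤ 33 * 9 ^ d / 4 * expect (correlatedCoin 0) (incrementRatio c) := by
  have hw : IsProbWeight (correlatedCoin 0) := isProbWeight_correlatedCoin (by simp)
  set I := expect (correlatedCoin 0) (incrementRatio c)
  have hI : 0 ≤ I := hw.expect_nonneg fun p => by unfold incrementRatio; positivity
  have hvar := variance_nonneg c
  have hcs := hw.sq_expect_le_expect_div_mul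
    (X := fun p => (cubeEval c (Prod.snd ∘ p) - cubeEval c (Prod.fst ∘ p)) ^ 2)
    (Y := fun p => cubeEval c (Prod.fst ∘ p) ^ 2 +
      (cubeEval c (Prod.snd ∘ p) - cubeEval c (Prod.fst ∘ p)) ^ 2)
    (fun p => sq_nonneg _) fun p => by linarith [sq_nonneg (cubeEval c (Prod.fst ∘ p))]
  have hsq : expect (correlatedCoin 0) (fun p =>
      (cubeEval c (Prod.snd ∘ p) - cubeEval c (Prod.fst ∘ p)) ^ 2) = 2 * variance c := by
    rw [expect_correlatedCoin_zero fun y y' => (cubeEval c y' - cubeEval c y) ^ 2]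
    simp only [expect_cubeEval_sub_sq, expect_add, (isProbWeight_unif Bool).expect_const,
      sub_sq_comm (c ∅), sub_self]
    ring
  have hfourth := expect_cubeEval_sub_pow_four_le hc (c ∅)
  rw [sub_self, zero_pow two_ne_zero, zero_add] at hfourth
  have hprod := hw.expect_mono fun p : ι → Bool × Bool =>
    sq_sub_mul_le (c ∅) (cubeEval c (Prod.fst ∘ p)) (cubeEval c (Prod.snd ∘ p))
  simp only [expect_add, expect_mul_left, hsq] at hprod
  rw [expect_correlatedCoin_fst 0 fun y => (cubeEval c y - c ∅) ^ 4,
    expect_correlatedCoin_snd 0 fun y => (cubeEval c y - c ∅) ^ 4] at hprod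
  rw [hsq] at hcs
  have hbound : (2 * variance c) ^ 2 ≤ I * (33 * 9 ^ d * variance c * sqNorm c) := by
    refine hcs.trans (mul_le_mul_of_nonneg_left (hprod.trans ?_) hI)
    rw [sqNorm_eq_sq_add_variance]
    have h9 : 4 * (variance c * c ∅ ^ 2) ≤ 33 * 9 ^ d * (variance c * c ∅ ^ 2) := by
      gcongr
      linarith [one_le_pow₀ (n := d) (show (1 : ℝ) ≤ 9 by norm_num)]
    linarith
  rcases hvar.eq_or_lt with hvar | hvar
  · rw [relVariance, ← hvar, zero_div]
    positivity
  have hnorm : 0 < sqNorm c := by rw [sqNorm_eq_sq_add_variance]; positivity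
  rw [relVariance, div_le_iff₀ hnorm]
  nlinarith

lemma expect_mix_correlatedCoin (η : ℝ) (F : (ι → Bool) → (ι → Bool) → ℝ) :
    expect (bernoulli η) (fun L => expect (unif Bool) fun A => expect (correlatedCoin 0) fun p =>
        F (mix L A (Prod.fst ∘ p)) (mix L A (Prod.snd ∘ p))) =
      expect (correlatedCoin (1 - η)) fun p => F (Prod.fst ∘ p) (Prod.snd ∘ p) := by
  let select : Bool × Bool × Bool × Bool → Bool × Bool :=
    fun k => if k.1 then k.2.2 else (k.2.1, k.2.1)
  have hmap (ω : ι → Bool × Bool × Bool × Bool) : F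
      (mix (fun i => (ω i).1) (fun i => (ω i).2.1) (Prod.fst ∘ fun i => (ω i).2.2))
      (mix (fun i => (ω i).1) (fun i => (ω i).2.1) (Prod.snd ∘ fun i => (ω i).2.2)) =
      F (Prod.fst ∘ select ∘ ω) (Prod.snd ∘ select ∘ ω) := by
    congr 1 <;> funext i <;> cases h : (ω i).1 <;> simp [mix, select, h]
  have hprod (L : ι → Bool) := expect_prod (w := unif Bool) (w' := correlatedCoin 0)
    fun ω : ι → Bool × Bool × Bool => F
      (mix L (fun i => (ω i).1) (Prod.fst ∘ fun i => (ω i).2))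
      (mix L (fun i => (ω i).1) (Prod.snd ∘ fun i => (ω i).2))
  simp only [← hprod]
  rw [← expect_prod (w := bernoulli η)
    (w' := fun k : Bool × Bool × Bool => unif Bool k.1 * correlatedCoin 0 k.2) fun ω => F
      (mix (fun i => (ω i).1) (fun i => (ω i).2.1) (Prod.fst ∘ fun i => (ω i).2.2))
      (mix (fun i => (ω i).1) (fun i => (ω i).2.1) (Prod.snd ∘ fun i => (ω i).2.2))]
  simp only [hmap]
  refine expect_map select (fun k => ?_) fun p => F (Prod.fst ∘ p) (Prod.snd ∘ p)
  obtain ⟨a, b⟩ := k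
  cases a <;> cases b <;>
    norm_num [select, Fintype.sum_prod_type, correlatedCoin, bernoulli, chi, unif] <;> ring

lemma expect_relVariance_restrict_le {η : ℝ} (h0 : 0 ≤ η) (h1 : η ≤ 1) (hc : DegreeLE d c) :
    expect (bernoulli η) (fun L => expect (unif Bool) fun A => relVariance (restrict c L A)) ≤
      33 * 9 ^ d / 4 * expect (correlatedCoin (1 - η)) (incrementRatio c) := by
  have hmix := expect_mix_correlatedCoin η fun x y =>
    (cubeEval c y - cubeEval c x) ^ 2 / (cubeEval c x ^ 2 + (cubeEval c y - cubeEval c x) ^ 2)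
  simp only [cubeEval_mix] at hmix
  calc _ ≤ expect (bernoulli η) (fun L => expect (unif Bool) fun A =>
        33 * 9 ^ d / 4 * expect (correlatedCoin 0) (incrementRatio (restrict c L A))) :=
      (isProbWeight_bernoulli h0 h1).expect_mono fun L => (isProbWeight_unif Bool).expect_mono
        fun A => relVariance_le_expect_incrementRatio (hc.restrict L A)
    _ = _ := by
      simp only [expect_mul_left]
      exact congrArg _ hmix

end Anticoncentration

section Scaling

variable {ι : Type*}

lemma DegreeLE.smul {d : ℕ} {c : Finset ι → ℝ} (hc : DegreeLE d c) (a : ℝ) :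
    DegreeLE d (a • c) := fun S hS => hc S (right_ne_zero_of_mul hS)

variable [Fintype ι]

lemma weightedSq_smul_right (a : ℝ) (h c : Finset ι → ℝ) :
    weightedSq h (a • c) = a ^ 2 * weightedSq h c := by
  simp only [weightedSq, Pi.smul_apply, smul_eq_mul, mul_pow, mul_sum]
  exact sum_congr rfl fun S _ => mul_left_comm _ _ _

variable [DecidableEq ι]

lemma variance_smul (a : ℝ) (c : Finset ι → ℝ) : variance (a • c) = a ^ 2 * variance c := by
  simp only [variance_eq_weightedSq, weightedSq_smul_right]

lemma influence_smul (i : ι) (a : ℝ) (c : Finset ι → ℝ) :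
    influence i (a • c) = a ^ 2 * influence i c := by
  simp only [influence_eq_weightedSq, weightedSq_smul_right]

lemma relVariance_smul {a : ℝ} (ha : a ≠ 0) (c : Finset ι → ℝ) :
    relVariance (a • c) = relVariance c := by
  rw [relVariance, relVariance, sqNorm_eq_sq_add_variance, sqNorm_eq_sq_add_variance,
    variance_smul, Pi.smul_apply, smul_eq_mul, mul_pow, ← mul_add,
    mul_div_mul_left _ _ (pow_ne_zero 2 ha)]

lemma IsRegular.smul {τ : ℝ} {c : Finset ι → ℝ} (h : IsRegular τ c) (a : ℝ) :
    IsRegular τ (a • c) := by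
  simp only [IsRegular, influence_smul, variance_smul, mul_pow, ← mul_sum]
  rw [mul_left_comm]
  exact mul_le_mul_of_nonneg_left h (by positivity)

lemma restrict_smul (a : ℝ) (c : Finset ι → ℝ) (L A : ι → Bool) :
    restrict (a • c) L A = a • restrict c L A := by
  funext T
  simp only [restrict, cubeEval, polyRV, mlEval, restrictCoeff, Pi.smul_apply, smul_eq_mul,
    mul_sum, ← mul_assoc, mul_ite, mul_zero]

end Scaling

section RegularCase

variable {ι : Type*} [Fintype ι] [DecidableEq ι] {N : ℕ} [NeZero N] {q : ZMod N}
  {d : ℕ} {c : Finset ι → ℝ}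

variable (N) in
/-- The rate of resampling at which the two points of a pair differ by the rotation through one
step of the grid of `N`-th roots of unity. -/
noncomputable def noiseRate : ℝ := 1 - (circlePt (1 : ZMod N)).re

lemma noiseRate_eq : noiseRate N = gridStep N ^ 2 / 2 := by
  have h := Complex.sq_norm (circlePt (1 : ZMod N))
  rw [norm_circlePt, Complex.normSq_apply] at h
  rw [noiseRate, gridStep, Complex.sq_norm, Complex.normSq_apply]
  simp only [Complex.sub_re, Complex.sub_im, Complex.one_re, Complex.one_im]
  linarith

lemma noiseRate_nonneg : 0 ≤ noiseRate N := by
  rw [noiseRate_eq]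
  positivity

lemma le_noiseRate (hN : 2 ≤ N) : 8 / (N : ℝ) ^ 2 ≤ noiseRate N := by
  have h := pow_le_pow_left₀ (by positivity) (four_div_le_gridStep hN) 2
  rw [div_pow] at h
  rw [noiseRate_eq]
  linarith [show (8 : ℝ) / (N : ℝ) ^ 2 = 4 ^ 2 / (N : ℝ) ^ 2 / 2 by ring]

lemma noiseRate_le : noiseRate N ≤ 20 / (N : ℝ) ^ 2 := by
  have h := pow_le_pow_left₀ gridStep_nonneg (gridStep_le (N := N)) 2
  rw [div_pow] at h
  have hpi : (2 * Real.pi) ^ 2 / (N : ℝ) ^ 2 ≤ 40 / (N : ℝ) ^ 2 := by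
    gcongr
    nlinarith [Real.pi_lt_d2, Real.pi_pos]
  rw [noiseRate_eq]
  linarith [show (20 : ℝ) / (N : ℝ) ^ 2 = 40 / (N : ℝ) ^ 2 / 2 by ring]

lemma noiseRate_le_one (hN : 8 ≤ N) : noiseRate N ≤ 1 := by
  have hN' : (8 : ℝ) ≤ N := mod_cast hN
  refine noiseRate_le.trans ((div_le_one (by positivity)).2 ?_)
  nlinarith

lemma sq_div_sq_add_sq_le {t : ℝ} (ht : 0 < t) (u w : ℝ) :
    w ^ 2 / (u ^ 2 + w ^ 2) ≤ 2 * softRatio (t * u) (t * w) + ind (|t * u| ≤ 1) := by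
  by_cases h : |t * u| ≤ 1
  · have hle : w ^ 2 / (u ^ 2 + w ^ 2) ≤ 1 :=
      div_le_one_of_le₀ (le_add_of_nonneg_left (sq_nonneg u)) (by positivity)
    rw [ind_of_true h]
    linarith [softRatio_nonneg (t * u) (t * w)]
  · rw [ind_of_false h, add_zero]
    have htu : 1 ≤ (t * u) ^ 2 := (one_le_sq_iff_one_le_abs _).2 (not_le.1 h).le
    have hu : u ≠ 0 := by
      rintro rfl
      norm_num at htu
    rw [softRatio, ← mul_div_assoc, div_le_div_iff₀ (by positivity) (by positivity)]
    nlinarith [mul_le_mul_of_nonneg_left htu (sq_nonneg w),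
      mul_nonneg (sq_nonneg w) (sq_nonneg (t * w))]

lemma expect_ind_abs_le_one_le (hc : DegreeLE d c) (hvar : variance c = 1) (t : ℝ) :
    expect (unif Bool) (fun x => ind (|t * cubeEval c x| ≤ 1)) ≤
      (2 + 9 ^ d) * cubeRatioMean t 1 0 c := by
  have hmean : cubeRatioMean t 1 0 c = expect (unif Bool) fun x => expect (unif Bool) fun y =>
      softRatio (t * cubeEval c x) (cubeEval c y - cubeEval c x) := by
    rw [← expect_correlatedCoin_zero fun x y =>
      softRatio (t * cubeEval c x) (cubeEval c y - cubeEval c x)]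
    simp only [cubeRatioMean, softRatioMean, one_mul]
    rfl
  rw [hmean, ← expect_mul_left]
  refine (isProbWeight_unif Bool).expect_mono fun x => ?_
  by_cases h : |t * cubeEval c x| ≤ 1
  · rw [ind_of_true h]
    exact (div_le_iff₀' (by positivity)).1 (le_expect_softRatio hc hvar h _)
  · rw [ind_of_false h]
    exact mul_nonneg (by positivity)
      ((isProbWeight_unif Bool).expect_nonneg fun y => softRatio_nonneg _ _)

lemma expect_incrementRatio_le {ρ : ℝ} (hρ : |ρ| ≤ 1) (hc : DegreeLE d c)
    (hvar : variance c = 1) {t : ℝ} (ht : 0 < t) :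
    expect (correlatedCoin ρ) (incrementRatio c) ≤
      2 * cubeRatioMean t t ρ c + (2 + 9 ^ d) * cubeRatioMean t 1 0 c := by
  calc expect (correlatedCoin ρ) (incrementRatio c)
      ≤ expect (correlatedCoin ρ) fun p =>
          2 * softRatio (t * cubeEval c (Prod.fst ∘ p))
            (t * (cubeEval c (Prod.snd ∘ p) - cubeEval c (Prod.fst ∘ p))) +
          ind (|t * cubeEval c (Prod.fst ∘ p)| ≤ 1) :=
        (isProbWeight_correlatedCoin hρ).expect_mono fun p => sq_div_sq_add_sq_le ht _ _
    _ = 2 * cubeRatioMean t t ρ c +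
          expect (unif Bool) fun x => ind (|t * cubeEval c x| ≤ 1) := by
        rw [expect_add, expect_mul_left,
          expect_correlatedCoin_fst ρ fun x => ind (|t * cubeEval c x| ≤ 1)]
        rfl
    _ ≤ _ := by
        gcongr
        exact expect_ind_abs_le_one_le hc hvar t

/-- The constant of the error of the comparison of the cube with the grid on the circle, for
polynomials of degree `d`. -/
noncomputable def comparisonConst (d : ℕ) : ℝ := 34816 * (d + 9 ^ d)

lemma comparison_error_le (hc : DegreeLE d c) (hvar : variance c = 1)
    (hreg : IsRegular (1 / (N : ℝ) ^ (12 * d + 8)) c) :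
    34816 * ((N : ℝ) ^ (2 * d + 1)) ^ 3 * (1 / (N : ℝ) ^ (6 * d + 4) * totalInfluence c +
      9 ^ d * (∑ i, influence i c ^ 2) / (1 / (N : ℝ) ^ (6 * d + 4))) ≤
        comparisonConst d / N := by
  have hN : (0 : ℝ) < N := mod_cast Nat.pos_of_ne_zero (NeZero.ne N)
  have ht : (N : ℝ) ^ (2 * d + 1) ≠ 0 := by positivity
  have htotal := totalInfluence_le hc
  rw [hvar, mul_one] at htotal
  rw [IsRegular, hvar, one_pow, mul_one] at hreg
  calc _ ≤ 34816 * ((N : ℝ) ^ (2 * d + 1)) ^ 3 * (1 / (N : ℝ) ^ (6 * d + 4) * d +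
        9 ^ d * (1 / (N : ℝ) ^ (12 * d + 8)) / (1 / (N : ℝ) ^ (6 * d + 4))) := by gcongr
    _ = comparisonConst d / N := by
      rw [comparisonConst, show 12 * d + 8 = (6 * d + 4) + (6 * d + 4) by ring,
        pow_add _ (6 * d + 4) (6 * d + 4), show 6 * d + 4 = (2 * d + 1) * 3 + 1 by ring,
        pow_succ _ ((2 * d + 1) * 3), pow_mul _ (2 * d + 1) 3]
      generalize (N : ℝ) ^ (2 * d + 1) = t at ht ⊢
      field_simp

/-- The constant of the bound in the regular case for polynomials of degree `d`. -/
noncomputable def regularConst (d : ℕ) : ℝ :=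
  33 * 9 ^ d / 4 * (2 * (2 * 64 ^ d * (82 * d) + 80 * d ^ 2 + comparisonConst d) +
    (2 + 9 ^ d) * (82 * d + 2 + comparisonConst d))

lemma expect_relVariance_restrict_le_of_variance_eq_one (hq : circlePt q = Complex.I) (hN : 8 ≤ N)
    (hc : DegreeLE d c) (hvar : variance c = 1)
    (hreg : IsRegular (1 / (N : ℝ) ^ (12 * d + 8)) c) :
    expect (bernoulli (noiseRate N)) (fun L => expect (unif Bool) fun A =>
      relVariance (restrict c L A)) ≤ regularConst d / N := by
  have hN2 : 2 ≤ N := by omega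
  set t := (N : ℝ) ^ (2 * d + 1)
  have ht : 1 ≤ t := one_le_pow₀ (mod_cast (by omega : 1 ≤ N))
  have hρ : |1 - noiseRate N| ≤ 1 := by
    rw [abs_of_nonneg (sub_nonneg.2 (noiseRate_le_one hN))]
    linarith [noiseRate_nonneg (N := N)]
  have hs : 0 < 1 / (N : ℝ) ^ (6 * d + 4) := by positivity
  have herr := comparison_error_le hc hvar hreg
  have hnear := cubeRatioMean_le (a := 1) hq (by linarith) (le_refl t) hs hc
  have hfar := cubeRatioMean_le (a := q) hq zero_le_one ht hs hc
  rw [hq, Complex.I_re] at hfar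
  rw [← sub_sub_self 1 (circlePt (1 : ZMod N)).re, ← noiseRate] at hnear
  calc _ ≤ 33 * 9 ^ d / 4 * expect (correlatedCoin (1 - noiseRate N)) (incrementRatio c) :=
        expect_relVariance_restrict_le noiseRate_nonneg (noiseRate_le_one hN) hc
    _ ≤ 33 * 9 ^ d / 4 * (2 * cubeRatioMean t t (1 - noiseRate N) c +
          (2 + 9 ^ d) * cubeRatioMean t 1 0 c) := by
        gcongr
        exact expect_incrementRatio_le hρ hc hvar (by linarith)
    _ ≤ 33 * 9 ^ d / 4 * (2 * ((2 * 64 ^ d * (82 * d) + 80 * d ^ 2) / N + comparisonConst d / N) +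
          (2 + 9 ^ d) * ((82 * d + 2) / N + comparisonConst d / N)) := by
        gcongr
        · exact hnear.trans (add_le_add (circleRatioMean_step_le hN2 hc t) herr)
        · exact hfar.trans (add_le_add (circleRatioMean_shift_le hN2 hc q) herr)
    _ = regularConst d / N := by
        rw [regularConst]
        ring

lemma IsRegular.expect_relVariance_restrict_le (hq : circlePt q = Complex.I) (hN : 8 ≤ N)
    (hc : DegreeLE d c) (hvar : 0 < variance c)
    (hreg : IsRegular (1 / (N : ℝ) ^ (12 * d + 8)) c) :
    expect (bernoulli (noiseRate N)) (fun L => expect (unif Bool) fun A =>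
      relVariance (restrict c L A)) ≤ regularConst d / N := by
  have ha : (√(variance c))⁻¹ ≠ 0 := by positivity
  have hnormalized : variance ((√(variance c))⁻¹ • c) = 1 := by
    rw [variance_smul, inv_pow, Real.sq_sqrt hvar.le, inv_mul_cancel₀ hvar.ne']
  simpa only [restrict_smul, relVariance_smul ha] using
    expect_relVariance_restrict_le_of_variance_eq_one hq hN (hc.smul _) hnormalized
      (hreg.smul (√(variance c))⁻¹)

end RegularCase

section LargeThresholds

variable {ι : Type*} [Fintype ι] [DecidableEq ι] {d : ℕ}

/-- A lower bound for the probability that the restriction of a polynomial of degree `d` provided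
by `exists_restriction_isRegular_or_isSkewed` is regular or skewed. -/
noncomputable def dichotomyProb (d : ℕ) : ℝ := 1 / (8 * 9 ^ d)

/-- A grid with `N` points on the circle is used for thresholds `m` of order
`N ^ gridExponent d`. -/
def gridExponent (d : ℕ) : ℕ := 24 * d + 16

/-- The factor by which the restrictions provided by `exists_restriction_isRegular_or_isSkewed` may
be less regular than its parameter. -/
noncomputable def regularityLoss (d : ℕ) : ℝ := 1 + 32 * d ^ 2 * 81 ^ d

/-- For thresholds `m`, the restrictions provided by `exists_restriction_isRegular_or_isSkewed`
can be made `skewConst d / √m`-skewed unless they are regular. -/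
noncomputable def skewConst (d : ℕ) : ℝ :=
  1 + 32 * d * 9 ^ d * (4 * regularityLoss d / dichotomyProb d)

/-- The induction on the threshold `m` starts where `√m` is at least this constant. -/
noncomputable def largeConst (d : ℕ) : ℝ :=
  4 * (terminalConst d * skewConst d ^ 32) / dichotomyProb d

lemma dichotomyProb_pos (d : ℕ) : 0 < dichotomyProb d := by
  unfold dichotomyProb
  positivity

lemma dichotomyProb_le_one (d : ℕ) : dichotomyProb d ≤ 1 :=
  div_le_one_of_le₀ (by linarith [one_le_pow₀ (show (1 : ℝ) ≤ 9 by norm_num) (n := d)])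
    (by positivity)

lemma one_le_regularityLoss (d : ℕ) : 1 ≤ regularityLoss d :=
  le_add_of_nonneg_right (by positivity)

lemma one_le_skewConst (d : ℕ) : 1 ≤ skewConst d := by
  have := one_le_regularityLoss d
  have := dichotomyProb_pos d
  exact le_add_of_nonneg_right (by positivity)

lemma four_mul_div_dichotomyProb_le_largeConst {x : ℝ}
    (hx : x ≤ terminalConst d * skewConst d ^ 32) : 4 * x / dichotomyProb d ≤ largeConst d := by
  have := dichotomyProb_pos d
  unfold largeConst
  gcongr

lemma one_le_terminalConst_mul_skewConst_pow (d : ℕ) :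
    1 ≤ terminalConst d * skewConst d ^ 32 :=
  one_le_mul_of_one_le_of_one_le (one_le_terminalConst d) (one_le_pow₀ (one_le_skewConst d))

lemma two_mul_skewConst_le_largeConst (d : ℕ) : 2 * skewConst d ≤ largeConst d := by
  have hp := dichotomyProb_pos d
  have hA := one_le_skewConst d
  calc 2 * skewConst d ≤ 4 * skewConst d := by gcongr; norm_num
    _ ≤ 4 * skewConst d / dichotomyProb d :=
        le_div_self (by positivity) hp (dichotomyProb_le_one d)
    _ ≤ largeConst d := four_mul_div_dichotomyProb_le_largeConst <|
        (le_self_pow₀ hA (by norm_num)).trans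
          (le_mul_of_one_le_left (by positivity) (one_le_terminalConst d))

lemma one_sub_pow_le {τ : ℝ} (h0 : 0 ≤ τ) (h1 : τ ≤ 1) (k : ℕ) :
    (1 - τ) ^ k ≤ 1 / (1 + k * τ) := by
  rw [le_div_iff₀ (by positivity)]
  calc (1 - τ) ^ k * (1 + k * τ) ≤ (1 - τ) ^ k * (1 + τ) ^ k := by
        gcongr
        exact one_add_mul_le_pow (by linarith) k
    _ = (1 - τ ^ 2) ^ k := by rw [← mul_pow]; ring
    _ ≤ 1 := pow_le_one₀ (by nlinarith) (by nlinarith)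

lemma four_le_dichotomyProb_mul {m : ℝ} (hm : largeConst d ≤ √m) : 4 ≤ dichotomyProb d * m := by
  have hp := dichotomyProb_pos d
  have hlarge := four_mul_div_dichotomyProb_le_largeConst (one_le_terminalConst_mul_skewConst_pow d)
  rw [mul_one] at hlarge
  have hsqrt : 1 ≤ √m := (by linarith [one_le_skewConst d, two_mul_skewConst_le_largeConst d])
  rw [← div_le_iff₀' hp]
  exact (hlarge.trans hm).trans (Real.sqrt_le_self_iff.2 (Or.inr (Real.one_le_sqrt.1 hsqrt)))

lemma skew_le_skewConst_div {σ m : ℝ} (hσ0 : 0 ≤ σ) (hσ1 : σ ≤ 1) (hσ : 1 / √m ≤ σ)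
    (hm : largeConst d ≤ √m) :
    32 * d * 9 ^ d * (1 - σ / regularityLoss d) ^ ⌊dichotomyProb d / 2 * m⌋₊ ≤
      skewConst d / √m := by
  have hp := dichotomyProb_pos d
  have hloss := one_le_regularityLoss d
  have hfour := four_le_dichotomyProb_mul hm
  have hsqrt : 0 < √m := by linarith [one_le_skewConst d, two_mul_skewConst_le_largeConst d]
  have hfloor : dichotomyProb d / 4 * m ≤ ⌊dichotomyProb d / 2 * m⌋₊ := by
    linarith [Nat.lt_floor_add_one (dichotomyProb d / 2 * m)]
  have hrate : dichotomyProb d * √m / (4 * regularityLoss d) ≤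
      ⌊dichotomyProb d / 2 * m⌋₊ * (σ / regularityLoss d) := by
    calc dichotomyProb d * √m / (4 * regularityLoss d)
        = dichotomyProb d / 4 * m * (1 / √m / regularityLoss d) := by
          field_simp
          rw [Real.sq_sqrt (Real.sqrt_pos.1 hsqrt).le]
      _ ≤ _ := by gcongr
  calc 32 * d * 9 ^ d * (1 - σ / regularityLoss d) ^ ⌊dichotomyProb d / 2 * m⌋₊
      ≤ 32 * d * 9 ^ d * (1 / (1 + ⌊dichotomyProb d / 2 * m⌋₊ * (σ / regularityLoss d))) := by
        gcongr
        exact one_sub_pow_le (by positivity) (div_le_one_of_le₀ (by linarith) (by linarith)) _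
    _ ≤ 32 * d * 9 ^ d * (1 / (dichotomyProb d * √m / (4 * regularityLoss d))) := by
        gcongr
        linarith
    _ = (skewConst d - 1) / √m := by
        unfold skewConst
        field_simp
        ring
    _ ≤ skewConst d / √m := by gcongr; linarith

lemma IsRegular.mono {τ τ' : ℝ} (h : τ ≤ τ') {c : Finset ι → ℝ} (hc : IsRegular τ c) :
    IsRegular τ' c :=
  hc.trans (mul_le_mul_of_nonneg_right h (sq_nonneg _))

lemma IsSkewed.mono {κ κ' : ℝ} (h : κ ≤ κ') {c : Finset ι → ℝ} (hc : IsSkewed κ c) :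
    IsSkewed κ' c :=
  hc.trans (mul_le_mul_of_nonneg_right h (sq_nonneg _))

variable {c : Finset ι → ℝ} {m : ℝ}

lemma exists_restriction_isRegular_or_isSkewed_of_large (hc : DegreeLE d c) {N : ℕ} (hN : 1 ≤ N)
    (hNm : (N : ℝ) ^ gridExponent d ≤ m) (hm : largeConst d ≤ √m) :
    ∃ L : ι → Bool, #{i | L i = false} ≤ dichotomyProb d / 2 * m ∧
      dichotomyProb d ≤ expect (unif Bool) (fun A =>
        ind (IsRegular (1 / (N : ℝ) ^ (12 * d + 8)) (restrict c L A) ∨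
          IsSkewed (skewConst d / √m) (restrict c L A))) := by
  have hloss := one_le_regularityLoss d
  have hA := two_mul_skewConst_le_largeConst d
  have hpow : 1 ≤ (N : ℝ) ^ (12 * d + 8) := one_le_pow₀ (mod_cast hN)
  have hm0 : 0 ≤ m := (by positivity : 0 ≤ (N : ℝ) ^ gridExponent d).trans hNm
  set σ := 1 / (N : ℝ) ^ (12 * d + 8)
  have hσ0 : 0 ≤ σ := by positivity
  have hσ1 : σ ≤ 1 := div_le_one_of_le₀ hpow (by positivity)
  have hσ : 1 / √m ≤ σ := by
    refine one_div_le_one_div_of_le (by positivity) (Real.le_sqrt_of_sq_le ?_)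
    rwa [← pow_mul, show (12 * d + 8) * 2 = gridExponent d by unfold gridExponent; ring]
  have hskew := skew_le_skewConst_div hσ0 hσ1 hσ hm
  have hτ1 : σ / regularityLoss d ≤ 1 := div_le_one_of_le₀ (by linarith) (by linarith)
  obtain ⟨L, hL, hprob⟩ := exists_restriction_isRegular_or_isSkewed hc
    (by positivity) hτ1 ⌊dichotomyProb d / 2 * m⌋₊ <| by
      have hpos : 0 < √m := by linarith [one_le_skewConst d]
      calc d * (1 - σ / regularityLoss d) ^ ⌊dichotomyProb d / 2 * m⌋₊
          ≤ 32 * d * 9 ^ d * (1 - σ / regularityLoss d) ^ ⌊dichotomyProb d / 2 * m⌋₊ := by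
            gcongr
            nlinarith [one_le_pow₀ (show (1 : ℝ) ≤ 9 by norm_num) (n := d),
              Nat.cast_nonneg (α := ℝ) d]
        _ ≤ skewConst d / √m := hskew
        _ ≤ 1 / 2 := by rw [div_le_div_iff₀ hpos two_pos]; linarith
  have hp := dichotomyProb_pos d
  refine ⟨L, (Nat.cast_le.2 hL).trans (Nat.floor_le (by positivity)), hprob.trans <|
    (isProbWeight_unif Bool).expect_mono fun A => ind_mono <| Or.imp (.mono ?_) (.mono hskew)⟩
  rw [← mul_div_assoc, div_le_iff₀ (by linarith), mul_comm]
  gcongr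
  exact le_add_of_nonneg_left zero_le_one

lemma IsSkewed.flipTail_le {κ : ℝ} (hκ : 0 < κ) (hc : DegreeLE d c) (h : IsSkewed κ c)
    (hm : 0 < m) : flipTail c m ≤ terminalConst d * κ ^ 32 := by
  have hR : √(1 / κ) ^ 2 = 1 / κ := Real.sq_sqrt (by positivity)
  have hmean : √(1 / κ) ^ 2 * variance c ≤ c ∅ ^ 2 := by
    rwa [hR, one_div, inv_mul_le_iff₀ hκ]
  calc flipTail c m ≤ terminalConst d / √(1 / κ) ^ 64 :=
        flipTail_le_of_large_mean hc (by positivity) hmean hm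
    _ = terminalConst d * κ ^ 32 := by
        rw [show 64 = 2 * 32 by norm_num, pow_mul, hR, one_div, inv_pow, div_inv_eq_mul]

lemma IsSkewed.flipTail_le_div_sqrt {μ : ℝ} (hc : DegreeLE d c)
    (h : IsSkewed (skewConst d / √m) c) (hm : largeConst d ≤ √m) (hμ : 0 < μ) :
    flipTail c μ ≤ dichotomyProb d / 2 * (1 / √m) := by
  have hp := dichotomyProb_pos d
  have hA := one_le_skewConst d
  have hsqrt : 1 ≤ √m := by linarith [two_mul_skewConst_le_largeConst d]
  have hnum : terminalConst d * skewConst d ^ 32 ≤ dichotomyProb d / 2 * √m := by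
    have hpos := one_le_terminalConst_mul_skewConst_pow d
    rw [largeConst, div_le_iff₀ hp] at hm
    linarith
  calc flipTail c μ ≤ terminalConst d * (skewConst d / √m) ^ 32 :=
        h.flipTail_le (by positivity) hc hμ
    _ = terminalConst d * skewConst d ^ 32 / √m ^ 32 := by ring
    _ ≤ dichotomyProb d / 2 * √m / √m ^ 2 := by
        gcongr; norm_num
    _ = dichotomyProb d / 2 * (1 / √m) := by field_simp

/-- The constant of the tail bound for regular polynomials of degree `d`. -/
noncomputable def regularTailConst (d : ℕ) : ℝ := 130 * decayConst d * regularConst d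

lemma regularTailConst_nonneg (d : ℕ) : 0 ≤ regularTailConst d := by
  have := one_le_decayConst d
  unfold regularTailConst regularConst comparisonConst
  positivity

variable {Φ : ℝ → ℝ} {M μ : ℝ} {N : ℕ} [NeZero N] {q : ZMod N}

lemma TailBoundUpTo.flipTail_le_noiseRate (hΦ : IsTailProfile Φ) (hM : TailBoundUpTo ι d Φ M)
    (hq : circlePt q = Complex.I) (hN : 8 ≤ N) (hμ : 8 ≤ noiseRate N * μ)
    (hμM : noiseRate N * μ / 2 ≤ M) (hc : DegreeLE d c)
    (hreg : IsRegular (1 / (N : ℝ) ^ (12 * d + 8)) c) :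
    flipTail c μ ≤
      regularTailConst d / N * (Φ (noiseRate N * μ / 2) / √(noiseRate N * μ / 2)) := by
  have hη0 := noiseRate_nonneg (N := N)
  have hη1 := noiseRate_le_one hN
  have hm' : 1 ≤ noiseRate N * μ / 2 := by linarith
  set m' := noiseRate N * μ / 2
  have hprofile := hΦ.div_sqrt_nonneg hm'
  have hdecay := one_le_decayConst d
  have hconst := regularTailConst_nonneg d
  rcases (variance_nonneg c).eq_or_lt with hvar | hvar
  · rw [flipTail_eq_zero_of_variance_eq_zero hvar.symm
      (pos_of_mul_pos_right (by linarith) hη0)]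
    positivity
  calc flipTail c μ ≤ 2 * expect (bernoulli (noiseRate N)) (fun L => expect (unif Bool) fun A =>
        flipTail (restrict c L A) m') := flipTail_le_two_mul_expect hη0 hη1 c hμ
    _ ≤ 2 * expect (bernoulli (noiseRate N)) (fun L => expect (unif Bool) fun A =>
          65 * decayConst d * (Φ m' / √m') * relVariance (restrict c L A)) := by
        gcongr
        refine (isProbWeight_bernoulli hη0 hη1).expect_mono fun L =>
          (isProbWeight_unif Bool).expect_mono fun A => ?_
        exact (hM.flipTail_le hΦ hm' hμM (hc.restrict L A)).trans_eq (by ring)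
    _ ≤ 2 * (65 * decayConst d * (Φ m' / √m') * (regularConst d / N)) := by
        simp only [expect_mul_left]
        gcongr
        exact hreg.expect_relVariance_restrict_le hq hN hc hvar
    _ = regularTailConst d / N * (Φ m' / √m') := by
        rw [regularTailConst]
        ring

lemma TailBoundUpTo.flipTail_le_of_isRegular (hΦ : IsTailProfile Φ) (hM : TailBoundUpTo ι d Φ M)
    (hq : circlePt q = Complex.I) (hN : 8 ≤ N) (hNm : (N : ℝ) ^ 3 ≤ m) (hmμ : m ≤ 4 * μ)
    (hμm : μ ≤ m) (hμM : μ ≤ M) (hc : DegreeLE d c)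
    (hreg : IsRegular (1 / (N : ℝ) ^ (12 * d + 8)) c) :
    flipTail c μ ≤ regularTailConst d * Φ (10 * m / (N : ℝ) ^ 2) / √m := by
  have hN8 : (8 : ℝ) ≤ N := mod_cast hN
  have hm0 : 0 < m := lt_of_lt_of_le (by positivity) hNm
  have hη0 := noiseRate_nonneg (N := N)
  have hη1 := noiseRate_le_one hN
  have hconst := regularTailConst_nonneg d
  have hlow : m / (N : ℝ) ^ 2 ≤ noiseRate N * μ / 2 := by
    have hηlow := le_noiseRate (N := N) (by omega)
    calc m / (N : ℝ) ^ 2 = 8 / (N : ℝ) ^ 2 * (m / 4) / 2 := by ring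
      _ ≤ noiseRate N * μ / 2 := by gcongr; linarith
  have hhigh : noiseRate N * μ / 2 ≤ 10 * m / (N : ℝ) ^ 2 := by
    calc noiseRate N * μ / 2 ≤ 20 / (N : ℝ) ^ 2 * m / 2 := by
          gcongr
          · linarith
          · exact noiseRate_le
      _ = 10 * m / (N : ℝ) ^ 2 := by ring
  have hNμ : N ≤ noiseRate N * μ / 2 := by
    refine le_trans ?_ hlow
    rw [le_div_iff₀ (by positivity)]
    linarith [pow_succ' (N : ℝ) 2]
  have hsqrt : √m / N ≤ √(noiseRate N * μ / 2) :=
    Real.le_sqrt_of_sq_le (by rwa [div_pow, Real.sq_sqrt hm0.le])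
  have hmono := hΦ.monotoneOn (Set.mem_Ici.2 (by linarith))
    (Set.mem_Ici.2 (by linarith)) hhigh
  have hΦ0 : 0 ≤ Φ (10 * m / (N : ℝ) ^ 2) :=
    zero_le_one.trans (hΦ.one_le _ (by linarith))
  calc flipTail c μ
      ≤ regularTailConst d / N * (Φ (noiseRate N * μ / 2) / √(noiseRate N * μ / 2)) :=
        hM.flipTail_le_noiseRate hΦ hq hN (by linarith) (by nlinarith) hc hreg
    _ ≤ regularTailConst d / N * (Φ (10 * m / (N : ℝ) ^ 2) / (√m / N)) := by gcongr
    _ = regularTailConst d * Φ (10 * m / (N : ℝ) ^ 2) / √m := by field_simp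

lemma IsProbWeight.expect_le_of_le_expect_ind {κ : Type*} [Fintype κ] {w : κ → ℝ}
    (hw : IsProbWeight w) {P : (ι → κ) → Prop} {X : (ι → κ) → ℝ} {p B : ℝ} (hp0 : 0 ≤ p)
    (hp1 : p ≤ 1) (hB : 0 ≤ B) (hP : p ≤ expect w fun ω => ind (P ω))
    (hgood : ∀ ω, P ω → X ω ≤ p / 2 * B) (hX : ∀ ω, X ω ≤ 1 / (1 - p / 2) * B) :
    expect w X ≤ B := by
  have hpos : 0 < 1 - p / 2 := by linarith
  have hgap : p / 2 ≤ 1 / (1 - p / 2) := by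
    rw [le_div_iff₀ hpos]
    nlinarith
  calc expect w X ≤ expect w (fun ω =>
        1 / (1 - p / 2) * B + -((1 / (1 - p / 2) - p / 2) * B) * ind (P ω)) := by
        refine hw.expect_mono fun ω => ?_
        by_cases h : P ω
        · rw [ind_of_true h]
          linarith [hgood ω h]
        · rw [ind_of_false h]
          linarith [hX ω]
    _ = 1 / (1 - p / 2) * B -
          (1 / (1 - p / 2) - p / 2) * B * expect w (fun ω => ind (P ω)) := by
        rw [expect_add, hw.expect_const, expect_mul_left]
        ring
    _ ≤ 1 / (1 - p / 2) * B - (1 / (1 - p / 2) - p / 2) * B * p := by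
        have := mul_nonneg (sub_nonneg.2 hgap) hB
        gcongr
    _ ≤ 1 * B := by
        rw [← sub_nonneg]
        have : 1 * B - (1 / (1 - p / 2) * B - (1 / (1 - p / 2) - p / 2) * B * p) =
            p / 2 * B * (1 - p * (1 - p / 2)) / (1 - p / 2) := by
          have : 2 - p ≠ 0 := by linarith
          field_simp
          ring
        rw [this]
        have : 0 ≤ 1 - p * (1 - p / 2) := by nlinarith
        positivity
    _ = B := one_mul B

lemma TailBoundUpTo.flipTail_le_of_step (hΦ : IsTailProfile Φ) (hM : TailBoundUpTo ι d Φ M)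
    (hmM : m ≤ M + 1) (hm : largeConst d ≤ √m) (hq : circlePt q = Complex.I) (hN : 8 ≤ N)
    (hNm : (N : ℝ) ^ gridExponent d ≤ m)
    (hstep : regularTailConst d * Φ (10 * m / (N : ℝ) ^ 2) ≤ dichotomyProb d / 2 * Φ m)
    (hc : DegreeLE d c) : flipTail c m ≤ Φ m / √m := by
  have hp0 := dichotomyProb_pos d
  have hp1 := dichotomyProb_le_one d
  have hpm := four_le_dichotomyProb_mul hm
  have hm1 : 4 ≤ m := by nlinarith
  set μ := m - dichotomyProb d / 2 * m with hμ
  have hμm : m ≤ 4 * μ := by nlinarith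
  have hμM : μ ≤ M := by linarith
  have hN3 : (N : ℝ) ^ 3 ≤ m :=
    (pow_le_pow_right₀ (mod_cast (by omega : 1 ≤ N)) (by unfold gridExponent; omega)).trans hNm
  obtain ⟨L, hdead, hprob⟩ :=
    exists_restriction_isRegular_or_isSkewed_of_large hc (by omega) hNm hm
  refine (flipTail_le_expect_flipTail_restrict c L m hdead).trans ?_
  refine (isProbWeight_unif Bool).expect_le_of_le_expect_ind hp0.le hp1
    (hΦ.div_sqrt_nonneg (by linarith)) hprob ?_ fun A => ?_
  · rintro A (hreg | hskew)
    · calc flipTail (restrict c L A) μ ≤ regularTailConst d * Φ (10 * m / (N : ℝ) ^ 2) / √m :=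
          hM.flipTail_le_of_isRegular hΦ hq hN hN3 hμm (by linarith) hμM (hc.restrict L A) hreg
        _ ≤ dichotomyProb d / 2 * Φ m / √m := by gcongr
        _ = dichotomyProb d / 2 * (Φ m / √m) := mul_div_assoc _ _ _
    · refine (hskew.flipTail_le_div_sqrt (hc.restrict L A) hm (by linarith)).trans ?_
      gcongr
      exact hΦ.one_le m (by linarith)
  · refine (hM μ (by linarith) hμM _ (hc.restrict L A)).trans ?_
    have hpos : 0 < 1 - dichotomyProb d / 2 := by linarith
    refine hΦ.div_sqrt_le (by linarith) (by linarith) (by positivity) ?_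
    calc m ≤ 1 / (1 - dichotomyProb d / 2) * m :=
          le_mul_of_one_le_left (by linarith) (one_le_one_div hpos (by linarith))
      _ = (1 / (1 - dichotomyProb d / 2)) ^ 2 * μ := by
          rw [hμ]
          field_simp

end LargeThresholds

section Induction

variable {e : ℕ} {m : ℝ}

lemma forty_le_exp_four : (40 : ℝ) ≤ Real.exp 4 := by
  calc (40 : ℝ) ≤ 2.7 ^ 4 := by norm_num
    _ ≤ Real.exp 1 ^ 4 := by
        gcongr
        linarith [Real.exp_one_gt_d9]
    _ = Real.exp 4 := by
        rw [← Real.exp_nat_mul]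
        norm_num

lemma eight_pow_le_exp (e : ℕ) : (8 : ℝ) ^ e ≤ Real.exp (4 * e + 1) := by
  calc (8 : ℝ) ^ e ≤ Real.exp 4 ^ e := by
        gcongr
        linarith [forty_le_exp_four]
    _ = Real.exp (4 * e) := by rw [← Real.exp_nat_mul, mul_comm]
    _ ≤ Real.exp (4 * e + 1) := Real.exp_le_exp.2 (by linarith)

lemma exists_grid_size (he : e ≠ 0) (hm : 8 ^ e ≤ m) :
    ∃ N M : ℕ, N = 4 * M ∧ 8 ≤ N ∧ (N : ℝ) ^ e ≤ m ∧ m < (2 * N) ^ e := by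
  have hm0 : 0 ≤ m := (by positivity : (0 : ℝ) ≤ 8 ^ e).trans hm
  set x := m ^ (e : ℝ)⁻¹
  have hx : x ^ e = m := Real.rpow_inv_natCast_pow hm0 he
  have hx0 : 0 ≤ x := Real.rpow_nonneg hm0 _
  have hx8 : 8 ≤ x := by rwa [← pow_le_pow_iff_left₀ (by norm_num) hx0 he, hx]
  have hfloor : (⌊x / 4⌋₊ : ℝ) ≤ x / 4 := Nat.floor_le (by positivity)
  have hfloor' := Nat.lt_floor_add_one (x / 4)
  have htwo : 2 ≤ ⌊x / 4⌋₊ := Nat.le_floor (by push_cast; linarith)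
  refine ⟨4 * ⌊x / 4⌋₊, ⌊x / 4⌋₊, rfl, by omega, ?_, ?_⟩
  · calc ((4 * ⌊x / 4⌋₊ : ℕ) : ℝ) ^ e ≤ x ^ e := by
          gcongr
          push_cast
          linarith
      _ = m := hx
  · calc m = x ^ e := hx.symm
      _ < (2 * (4 * ⌊x / 4⌋₊ : ℕ)) ^ e := by
          gcongr
          push_cast
          linarith

lemma one_add_log_le (he : e ≠ 0) (hm : Real.exp (4 * e + 1) ≤ m) {N : ℝ} (hN : 0 < N)
    (hmN : m < (2 * N) ^ e) :
    1 + Real.log (10 * m / N ^ 2) ≤ (1 - 1 / e) * (1 + Real.log m) := by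
  have he0 : (0 : ℝ) < e := mod_cast Nat.pos_of_ne_zero he
  have hm0 : 0 < m := (Real.exp_pos _).trans_le hm
  have hlog_m : 4 + 1 / (e : ℝ) ≤ Real.log m / e := by
    rw [← Real.le_log_iff_exp_le hm0] at hm
    rw [le_div_iff₀ he0, add_mul, one_div_mul_cancel he0.ne']
    exact hm
  have hlog_N : Real.log m / e ≤ Real.log 2 + Real.log N := by
    rw [← Real.log_mul two_ne_zero hN.ne', div_le_iff₀' he0, ← Real.log_pow]
    exact Real.log_le_log hm0 hmN.le
  have hlog_forty : Real.log 10 + 2 * Real.log 2 ≤ 4 := by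
    calc Real.log 10 + 2 * Real.log 2 = Real.log 40 := by
          rw [show (40 : ℝ) = 10 * 2 ^ 2 by norm_num, Real.log_mul (by norm_num) (by norm_num),
            Real.log_pow]
          norm_num
      _ ≤ 4 := (Real.log_le_iff_le_exp (by norm_num)).2 forty_le_exp_four
  calc 1 + Real.log (10 * m / N ^ 2) = 1 + Real.log 10 + Real.log m - 2 * Real.log N := by
        rw [Real.log_div (by positivity) (by positivity), Real.log_mul (by norm_num) hm0.ne',
          Real.log_pow]
        push_cast
        ring
    _ ≤ 1 + Real.log m - 1 / e - Real.log m / e := by linarith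
    _ = (1 - 1 / e) * (1 + Real.log m) := by ring

/-- The polylogarithmic numerator of the tail bound. -/
noncomputable def logProfile (Λ : ℝ) (β : ℕ) (m : ℝ) : ℝ := Λ * (1 + Real.log m) ^ β

variable {Λ : ℝ} {β : ℕ}

lemma le_logProfile (hΛ : 0 ≤ Λ) (hm : 1 ≤ m) : Λ ≤ logProfile Λ β m :=
  le_mul_of_one_le_right hΛ (one_le_pow₀ (by linarith [Real.log_nonneg hm]))

lemma isTailProfile_logProfile (hΛ : 1 ≤ Λ) (β : ℕ) : IsTailProfile (logProfile Λ β) where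
  one_le _ hm := hΛ.trans (le_logProfile (zero_le_one.trans hΛ) hm)
  monotoneOn m hm m' _ hle := by
    have := Real.log_nonneg hm
    have := Real.log_le_log (zero_lt_one.trans_le hm) hle
    unfold logProfile
    gcongr

lemma logProfile_le (hΛ : 0 ≤ Λ) (he : e ≠ 0) (hm : Real.exp (4 * e + 1) ≤ m) {N : ℝ}
    (hN : 0 < N) (hmN : m < (2 * N) ^ e) (hone : 1 ≤ 10 * m / N ^ 2) :
    logProfile Λ β (10 * m / N ^ 2) ≤ (1 - 1 / e) ^ β * logProfile Λ β m := by
  have := Real.log_nonneg hone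
  calc logProfile Λ β (10 * m / N ^ 2) ≤ Λ * ((1 - 1 / e) * (1 + Real.log m)) ^ β := by
        unfold logProfile
        gcongr
        exact one_add_log_le he hm hN hmN
    _ = (1 - 1 / e) ^ β * logProfile Λ β m := by
        rw [mul_pow, mul_left_comm, logProfile]

/-- The threshold from which on the induction step applies. -/
noncomputable def inductionStart (d : ℕ) : ℝ :=
  largeConst d ^ 2 + Real.exp (4 * gridExponent d + 1)

variable {ι : Type*} [Fintype ι] [DecidableEq ι] {d : ℕ} {c : Finset ι → ℝ} {M : ℝ}

lemma TailBoundUpTo.flipTail_le_logProfile (hΛ : 1 ≤ Λ)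
    (hβ : regularTailConst d * (1 - 1 / gridExponent d) ^ β ≤ dichotomyProb d / 2)
    (hM : TailBoundUpTo ι d (logProfile Λ β) M) (hmM : m ≤ M + 1) (hm : inductionStart d ≤ m)
    (hc : DegreeLE d c) : flipTail c m ≤ logProfile Λ β m / √m := by
  have he : gridExponent d ≠ 0 := by unfold gridExponent; omega
  have hexp : Real.exp (4 * gridExponent d + 1) ≤ m :=
    (le_add_of_nonneg_left (sq_nonneg _)).trans hm
  have hlarge : largeConst d ≤ √m :=
    Real.le_sqrt_of_sq_le ((le_add_of_nonneg_right (Real.exp_pos _).le).trans hm)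
  obtain ⟨N, K, hNK, hN, hNm, hmN⟩ := exists_grid_size he ((eight_pow_le_exp _).trans hexp)
  have : NeZero N := ⟨by omega⟩
  have hN0 : (0 : ℝ) < N := mod_cast (by omega : 0 < N)
  have hN2 : (N : ℝ) ^ 2 ≤ m :=
    (pow_le_pow_right₀ (mod_cast (by omega : 1 ≤ N)) (by unfold gridExponent; omega)).trans hNm
  have hone : 1 ≤ 10 * m / (N : ℝ) ^ 2 := by
    rw [le_div_iff₀ (by positivity)]
    linarith [sq_nonneg (N : ℝ)]
  have hm1 : 1 ≤ m := (Real.one_le_exp (by positivity)).trans hexp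
  refine hM.flipTail_le_of_step (isTailProfile_logProfile hΛ β) hmM hlarge
    (circlePt_natCast_eq_I hNK) hN hNm ?_ hc
  have hconst := regularTailConst_nonneg d
  have hprofile := (zero_le_one.trans hΛ).trans (le_logProfile (β := β) (zero_le_one.trans hΛ) hm1)
  calc regularTailConst d * logProfile Λ β (10 * m / (N : ℝ) ^ 2)
      ≤ regularTailConst d * ((1 - 1 / gridExponent d) ^ β * logProfile Λ β m) := by
        gcongr
        exact logProfile_le (zero_le_one.trans hΛ) he hexp hN0 hmN hone
    _ = regularTailConst d * (1 - 1 / gridExponent d) ^ β * logProfile Λ β m := by ring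
    _ ≤ dichotomyProb d / 2 * logProfile Λ β m := by gcongr

lemma tailBoundUpTo_logProfile (hΛ : 1 ≤ Λ) (hstart : √(inductionStart d) ≤ Λ)
    (hβ : regularTailConst d * (1 - 1 / gridExponent d) ^ β ≤ dichotomyProb d / 2) (k : ℕ) :
    TailBoundUpTo ι d (logProfile Λ β) k := by
  induction k with
  | zero => exact fun m hm hm0 => absurd (hm.trans hm0) (by norm_num)
  | succ k ih =>
    intro m hm hmk c hc
    push_cast at hmk
    rcases le_total (inductionStart d) m with hlarge | hsmall
    · exact ih.flipTail_le_logProfile hΛ hβ hmk hlarge hc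
    · refine (flipTail_le_one c m).trans ?_
      rw [one_le_div (by positivity)]
      exact ((Real.sqrt_le_sqrt hsmall).trans hstart).trans
        (le_logProfile (zero_le_one.trans hΛ) hm)

lemma exists_regularTailConst_mul_pow_le (d : ℕ) :
    ∃ β : ℕ, regularTailConst d * (1 - 1 / gridExponent d) ^ β ≤ dichotomyProb d / 2 := by
  have hconst := regularTailConst_nonneg d
  have hp := dichotomyProb_pos d
  have he : (1 : ℝ) ≤ gridExponent d := mod_cast (by unfold gridExponent; omega)
  obtain ⟨β, hβ⟩ := exists_pow_lt_of_lt_one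
    (show 0 < dichotomyProb d / 2 / (regularTailConst d + 1) by positivity)
    (sub_lt_self 1 (show (0 : ℝ) < 1 / gridExponent d by positivity))
  rw [lt_div_iff₀' (by positivity)] at hβ
  have hpow : 0 ≤ (1 - 1 / (gridExponent d : ℝ)) ^ β :=
    pow_nonneg (sub_nonneg.2 (div_le_one_of_le₀ he (by positivity))) β
  exact ⟨β, by linarith⟩

theorem exists_flipTail_le (d : ℕ) :
    ∃ (Λ : ℝ) (β : ℕ), 1 ≤ Λ ∧ ∀ (ι : Type*) [Fintype ι] [DecidableEq ι] (c : Finset ι → ℝ),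
      DegreeLE d c → ∀ m : ℝ, 1 ≤ m → flipTail c m ≤ Λ * (1 + Real.log m) ^ β / √m := by
  obtain ⟨β, hβ⟩ := exists_regularTailConst_mul_pow_le d
  have hsqrt := Real.sqrt_nonneg (inductionStart d)
  exact ⟨√(inductionStart d) + 1, β, by linarith, fun ι _ _ c hc m hm =>
    tailBoundUpTo_logProfile (by linarith) (by linarith) hβ ⌈m⌉₊ m hm (Nat.le_ceil m) c hc⟩

end Induction

section ThresholdFunctions

section Multilinear

variable {ι : Type*}

/-- The coefficient function of the multilinear part of a polynomial. -/
noncomputable def multilinearCoeff (p : MvPolynomial ι ℝ) (S : Finset ι) : ℝ :=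
  p.coeff (Finsupp.indicator S fun _ _ => 1)

lemma support_indicator_one (S : Finset ι) :
    (Finsupp.indicator S fun _ _ => 1 : ι →₀ ℕ).support = S := by
  ext i
  simp [Finsupp.indicator_apply]

lemma indicator_support_one {v : ι →₀ ℕ} (hv : ∀ i, v i ≤ 1) :
    (Finsupp.indicator v.support fun _ _ => 1 : ι →₀ ℕ) = v := by
  ext i
  have := hv i
  by_cases hi : v i = 0
  · simp [Finsupp.indicator_apply, hi]
  · simp [Finsupp.indicator_apply, hi]
    omega

lemma degreeLE_multilinearCoeff {d : ℕ} {p : MvPolynomial ι ℝ} (hp : p.totalDegree ≤ d) :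
    DegreeLE d (multilinearCoeff p) := fun S hS => by
  have hdeg := MvPolynomial.le_totalDegree (MvPolynomial.mem_support_iff.2 hS)
  have hsum : (Finsupp.indicator S fun _ _ => 1 : ι →₀ ℕ).sum (fun _ k => k) = #S := by
    simp only [Finsupp.sum, support_indicator_one]
    simp +contextual [Finsupp.indicator_apply]
  exact hsum ▸ hdeg.trans hp

lemma eval_eq_mlEval [Fintype ι] {p : MvPolynomial ι ℝ} (hp : ∀ v ∈ p.support, ∀ i, v i ≤ 1)
    (x : ι → ℝ) : MvPolynomial.eval x p = mlEval (multilinearCoeff p) x := by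
  rw [MvPolynomial.eval_eq, mlEval]
  refine sum_of_injOn Finsupp.support ?_ (fun v _ => mem_coe.2 (mem_univ _)) ?_ ?_
  · intro v hv w hw h
    rw [← indicator_support_one (hp v hv), ← indicator_support_one (hp w hw), h]
  · intro S _ hS
    have : multilinearCoeff p S = 0 := by
      by_contra hne
      exact hS ⟨_, MvPolynomial.mem_support_iff.2 hne, support_indicator_one S⟩
    rw [this, zero_mul]
  · intro v hv
    rw [multilinearCoeff, indicator_support_one (hp v hv)]
    congr 1
    refine prod_congr rfl fun i hi => ?_
    have hle := hp v hv i
    have hne := Finsupp.mem_support_iff.1 hi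
    rw [show v i = 1 by omega, pow_one]

end Multilinear

variable {n : ℕ}

lemma sign_ne_sign_iff {a b : ℝ} (ha : a ≠ 0) (hb : b ≠ 0) :
    Real.sign b ≠ Real.sign a ↔ a * b < 0 := by
  rcases ha.lt_or_gt with ha | ha <;> rcases hb.lt_or_gt with hb | hb <;>
    simp [Real.sign_of_neg, Real.sign_of_pos, mul_neg_iff, ha, hb, ha.le, hb.le] <;> norm_num

lemma sens_eq_signFlips {f F : (Fin n → Bool) → ℝ} (hF : ∀ x, F x ≠ 0)
    (hf : ∀ x, f x = Real.sign (F x)) (x : Fin n → Bool) : sens f x = signFlips F x := by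
  simp only [sens, signFlips, flipSet, hf, sign_ne_sign_iff (hF _) (hF _), flipAt]

lemma card_signFlips_div_eq_flipTail (c : Finset (Fin n) → ℝ) (m : ℕ) :
    (#{x | m ≤ signFlips (cubeEval c) x} : ℝ) / 2 ^ n = flipTail c m := by
  simp only [flipTail, expect, unif, ind, Nat.cast_le, mul_ite, mul_one, mul_zero, prod_const,
    card_univ, Fintype.card_bool, Fintype.card_fin, ← sum_filter, sum_const, nsmul_eq_mul]
  simp [div_eq_mul_inv]

lemma exists_card_sens_div_eq_flipTail {d : ℕ} {f : (Fin n → Bool) → ℝ} (hf : IsPTF d f) :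
    ∃ c : Finset (Fin n) → ℝ, DegreeLE d c ∧
      ∀ m : ℕ, (#{x | m ≤ sens f x} : ℝ) / 2 ^ n = flipTail c m := by
  obtain ⟨p, hp, hdeg, hsign⟩ := hf
  have heval : pev p = cubeEval (multilinearCoeff p) := funext fun _ => eval_eq_mlEval hp _
  refine ⟨multilinearCoeff p, degreeLE_multilinearCoeff hdeg, fun m => ?_⟩
  rw [heval] at hsign
  simp only [sens_eq_signFlips (fun x => (hsign x).1) (fun x => (hsign x).2),
    card_signFlips_div_eq_flipTail]

end ThresholdFunctions

end BooleanCube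

open BooleanCube in
theorem sens_tail_bound_general (d : ℕ) :
    ∃ C : ℝ, 0 < C ∧ ∀ n : ℕ, ∀ f : (Fin n → Bool) → ℝ, IsPTF d f → ∀ m : ℕ, 1 ≤ m →
      ((Finset.univ.filter (fun x : Fin n → Bool => m ≤ sens f x)).card : ℝ) / 2 ^ n
        ≤ C * Real.log (Real.exp 1 * m) ^ C / Real.sqrt m := by
  obtain ⟨Λ, β, hΛ, hbound⟩ := exists_flipTail_le d
  refine ⟨Λ + β, by positivity, fun n f hf m hm => ?_⟩
  obtain ⟨c, hc, hcard⟩ := exists_card_sens_div_eq_flipTail hf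
  have hm1 : (1 : ℝ) ≤ m := mod_cast hm
  have hlog_nonneg := Real.log_nonneg hm1
  have hlog : Real.log (Real.exp 1 * m) = 1 + Real.log m := by
    rw [Real.log_mul (Real.exp_ne_zero 1) (by positivity), Real.log_exp]
  calc _ = flipTail c m := hcard m
    _ ≤ Λ * (1 + Real.log m) ^ β / √m := hbound _ c hc m hm1
    _ ≤ (Λ + β) * (1 + Real.log m) ^ (Λ + β) / √m := by
        rw [← Real.rpow_natCast]
        gcongr
        · exact le_add_of_nonneg_right β.cast_nonneg
        · linarith
        · linarith
    _ = (Λ + β) * Real.log (Real.exp 1 * m) ^ (Λ + β) / √m := by rw [hlog]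

/-- Tail bound for the pointwise sensitivity of degree-`d` PTFs. -/
theorem sens_tail_bound (d : ℕ) (hd : 1 ≤ d) :
    ∃ C : ℝ, 0 < C ∧ ∀ n : ℕ, 256 ≤ n → ∀ f : (Fin n → Bool) → ℝ, IsPTF d f →
      ∀ m : ℕ, 16 ≤ m → m ≤ n →
        ((Finset.univ.filter (fun x : Fin n → Bool => m ≤ sens f x)).card : ℝ) / 2 ^ n
          ≤ C * Real.log (Real.exp 1 * n) ^ C / Real.sqrt m := by
  obtain ⟨C, hC, hbound⟩ := sens_tail_bound_general d
  refine ⟨C, hC, fun n _ f hf m hm hmn => (hbound n f hf m (by omega)).trans ?_⟩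
  have hm1 : (1 : ℝ) ≤ m := mod_cast (by omega : 1 ≤ m)
  have hexp : 1 ≤ Real.exp 1 * m := one_le_mul_of_one_le_of_one_le (Real.one_le_exp zero_le_one) hm1
  have hlog := Real.log_nonneg hexp
  gcongr
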